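/- arXiv:1410.6697 — 7 statements merged into one kernel-verified Lean document; each statement's English description precedes it below -/
import Mathlib

section
/- Let k ≥ 2 and b ≥ 2 be integers and let K_{J(b)} be the set of numbers in [0,1] whose base-b expansion contains only the digits 0 and 1. Let Ψ : ℕ → (0,∞) satisfy Ψ(x) < 1/(2x) for all sufficiently large x and Ψ(l·x) ≤ l·Ψ(x) for all positive integers l, x. Then for every constant c with 0 < c < 1/b, the set (𝒦_k(Ψ) \ 𝒦_k(cΨ)) ∩ K_{J(b)} is uncountable. -/
open Filter Set

/-- `Kk k Ψ` is the set of real `ζ` not algebraic of degree at most `k` such that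
`max_{1≤j≤k} |q·ζ^j - p_j| ≤ Ψ q` holds for infinitely many tuples
`(q, p₁, …, p_k) ∈ ℕ × ℤ^k` with `q ≥ 1`. -/
def Kk (k : ℕ) (Ψ : ℕ → ℝ) : Set ℝ :=
  {ζ : ℝ | (∀ P : Polynomial ℤ, P ≠ 0 → P.natDegree ≤ k → (Polynomial.aeval ζ) P ≠ 0) ∧
    {qp : ℕ × (Fin k → ℤ) | 1 ≤ qp.1 ∧
      ∀ j : Fin k, |(qp.1 : ℝ) * ζ ^ ((j : ℕ) + 1) - (qp.2 j : ℝ)| ≤ Ψ qp.1}.Infinite}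

/-- `baseExpSet b J` is the set of numbers in `[0,1]` admitting a base-`b` expansion all
of whose digits lie in `J`. -/
def baseExpSet (b : ℕ) (J : Set ℕ) : Set ℝ :=
  {x : ℝ | x ∈ Icc (0 : ℝ) 1 ∧ ∃ d : ℕ → ℕ, (∀ n, d n ∈ J) ∧
    x = ∑' n : ℕ, (d n : ℝ) / (b : ℝ) ^ (n + 1)}


lemma pow_diff_half (u v : ℝ) (hu : |u| ≤ 1/2) (hv : |v| ≤ 1/2) (J : ℕ) :
    |u^(J+1) - v^(J+1)| ≤ |u - v| := by
  induction J with
  | zero => simp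
  | succ J ih =>
    have e : u^(J+1+1) - v^(J+1+1) = u*(u^(J+1) - v^(J+1)) + v^(J+1)*(u-v) := by ring
    have h1 : |v^(J+1)| ≤ 1/2 := by
      rw [abs_pow, pow_succ]
      have : |v|^J ≤ 1 := pow_le_one₀ (abs_nonneg _) (by linarith)
      nlinarith [abs_nonneg v]
    rw [e]
    refine (abs_add_le _ _).trans ?_
    rw [abs_mul, abs_mul]
    nlinarith [abs_nonneg u, abs_nonneg (u-v), abs_nonneg (u^(J+1) - v^(J+1)), abs_nonneg (v^(J+1))]

lemma approx_close (ζ E : ℝ) (h0 : 0 ≤ ζ) (h1 : ζ ≤ 1/4) (q : ℕ) (hq : 2 ≤ q) (k : ℕ) (hk : 1 ≤ k)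
    (p : Fin k → ℤ) (hp : ∀ j : Fin k, |(q:ℝ) * ζ^((j:ℕ)+1) - p j| ≤ E) (hE : E < 1/(2*(q:ℝ)))
    (u : ℝ) (hu : (q:ℝ) * u = p ⟨0, hk⟩) (j : Fin k) :
    |(q:ℝ) * u^((j:ℕ)+1) - p j| < 1/(q:ℝ) := by
  have hq' : (2:ℝ) ≤ q := by exact_mod_cast hq
  have hE2 : E * (2*q) < 1 := by rwa [lt_div_iff₀ (by positivity)] at hE
  have h := hp ⟨0, hk⟩
  rw [← hu] at h
  simp only [zero_add, pow_one] at h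
  rw [← mul_sub, abs_mul, abs_of_pos (by linarith : (0:ℝ) < q)] at h
  have hE4 : E < 1/4 := by nlinarith
  have hd : |ζ - u| ≤ 1/8 := by nlinarith [abs_nonneg (ζ - u)]
  have hu2 : |u| ≤ 1/2 := by
    rw [abs_le] at hd ⊢; constructor <;> linarith
  have hz2 : |ζ| ≤ 1/2 := by rw [abs_of_nonneg h0]; linarith
  have h3 := pow_diff_half u ζ hu2 hz2 j
  have e : (q:ℝ) * u^((j:ℕ)+1) - p j = q * (u^((j:ℕ)+1) - ζ^((j:ℕ)+1)) + (q * ζ^((j:ℕ)+1) - p j) := by ring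
  rw [e]
  refine (abs_add_le _ _).trans_lt ?_
  rw [abs_mul, abs_of_pos (by linarith : (0:ℝ) < q), lt_div_iff₀ (by linarith)]
  rw [abs_sub_comm u] at h3
  have := hp j
  have h4 : (q:ℝ) * |u ^ ((j:ℕ) + 1) - ζ ^ ((j:ℕ) + 1)| ≤ E :=
    (mul_le_mul_of_nonneg_left h3 (by linarith)).trans h
  nlinarith

lemma approx_dvd (q : ℕ) (hq : 1 ≤ q) (k : ℕ) (p : Fin k → ℤ) (p0 : ℤ) (q0 : ℕ)
    (hcop : IsCoprime p0 (q0:ℤ)) (hq0 : q0 ∣ q)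
    (h : ∀ j : Fin k, |(q:ℝ) * ((p0:ℝ)/q0)^((j:ℕ)+1) - p j| < 1/(q:ℝ)) :
    q0 ^ k ∣ q := by
  have hq0pos : 1 ≤ q0 := Nat.pos_of_dvd_of_pos hq0 hq
  have hq0R : (1:ℝ) ≤ q0 := by exact_mod_cast hq0pos
  have hqR : (1:ℝ) ≤ q := by exact_mod_cast hq
  have hle : (q0:ℝ) ≤ q := by exact_mod_cast Nat.le_of_dvd hq hq0
  have : ∀ j, j ≤ k → q0^j ∣ q := by
    intro j
    induction j with
    | zero => simp
    | succ j ih =>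
      intro hj
      obtain ⟨r, hr⟩ := ih (by omega)
      have h1 := h ⟨j, by omega⟩
      simp only at h1
      have e : (q0:ℝ) * ((q:ℝ) * ((p0:ℝ)/q0)^(j+1) - p ⟨j, by omega⟩)
          = ((r * p0^(j+1) - q0 * p ⟨j, by omega⟩ : ℤ) : ℝ) := by
        rw [hr]; push_cast
        rw [div_pow]; field_simp; ring
      have h2 : |((r * p0^(j+1) - q0 * p ⟨j, by omega⟩ : ℤ) : ℝ)| < 1 := by
        rw [← e, abs_mul, abs_of_pos (by linarith : (0:ℝ) < q0)]
        rw [lt_div_iff₀ (by linarith)] at h1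
        nlinarith [abs_nonneg ((q:ℝ) * ((p0:ℝ)/q0)^(j+1) - p ⟨j, by omega⟩)]
      have h3 : |(r * p0^(j+1) - q0 * p ⟨j, by omega⟩ : ℤ)| < 1 := by exact_mod_cast h2
      rw [Int.abs_lt_one_iff] at h3
      have h4 : (q0:ℤ) ∣ r * p0^(j+1) := ⟨p ⟨j, by omega⟩, by linarith⟩
      have h5 : (q0:ℤ) ∣ r := (hcop.symm.pow_right).dvd_of_dvd_mul_right h4
      have h6 : q0 ∣ r := by exact_mod_cast h5
      rw [hr, pow_succ]
      exact Nat.mul_dvd_mul_left _ h6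
  exact this k le_rfl

lemma ratio_delta (k b : ℕ) (hb : 2 ≤ b) (c s0 : ℝ) (hc0 : 0 < c) (hc1 : c < 1 / (b:ℝ)) (hs0 : 0 < s0) :
    ∃ δ > 0, ∀ s x : ℝ, s0 ≤ s → 0 < x → x < δ → ∀ j, 1 ≤ j → j ≤ k →
      c * ((s + (b*x + (b*x)^2))^j - s^j) ≤ (s+x)^j - s^j := by
  have hbR : (2:ℝ) ≤ b := by exact_mod_cast hb
  have hcont : ContinuousAt (fun x : ℝ => c * (b*(1+b*x)) * (1 + (b*x + (b*x)^2)/s0)^k) 0 := by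
    fun_prop
  have hlt : (fun x : ℝ => c * (b*(1+b*x)) * (1 + (b*x + (b*x)^2)/s0)^k) 0 < 1 := by
    simp
    rwa [lt_div_iff₀ (by linarith)] at hc1
  have hev := hcont.eventually (gt_mem_nhds hlt)
  obtain ⟨δ, hδ, H⟩ := Metric.eventually_nhds_iff.1 hev
  refine ⟨δ, hδ, ?_⟩
  intro s x hs hx hxδ j hj hjk
  have hx1 := H (y := x) (by rw [Real.dist_eq, sub_zero, abs_of_pos hx]; exact hxδ)
  have hspos : 0 < s := by linarith
  set y : ℝ := b*x + (b*x)^2 with hy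
  have hypos : 0 < y := by positivity
  obtain ⟨i, rfl⟩ : ∃ i, j = i+1 := ⟨j-1, by omega⟩
  have hlow : (i+1:ℝ) * s^i * x ≤ (s+x)^(i+1) - s^(i+1) := by
    have := one_add_mul_le_pow (a := x/s) (by have : 0 < x/s := by positivity
                                              linarith) (i+1)
    have e : (s+x)^(i+1) = s^(i+1) * (1 + x/s)^(i+1) := by
      rw [← mul_pow]; congr 1; field_simp
    rw [e]
    have h2 := mul_le_mul_of_nonneg_left this (by positivity : 0 ≤ s^(i+1))
    have e2 : s^(i+1) * (1 + ((i+1:ℕ):ℝ) * (x/s)) = s^(i+1) + (i+1:ℝ) * s^i * x := by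
      push_cast; rw [pow_succ]; field_simp
    linarith
  have hup : (s+y)^(i+1) - s^(i+1) ≤ (i+1:ℝ) * (s+y)^i * y := by
    have hh := one_add_mul_le_pow (a := -(y/(s+y))) (by
        have : y/(s+y) ≤ 1 := by rw [div_le_one (by positivity)]; linarith
        linarith) (i+1)
    have e : s^(i+1) = (s+y)^(i+1) * (1 + -(y/(s+y)))^(i+1) := by
      rw [← mul_pow]; congr 1; field_simp; ring
    have h2 := mul_le_mul_of_nonneg_left hh (by positivity : 0 ≤ (s+y)^(i+1))
    rw [← e] at h2
    have e2 : (s+y)^(i+1) * (1 + ((i+1:ℕ):ℝ) * (-(y/(s+y)))) = (s+y)^(i+1) - (i+1:ℝ) * (s+y)^i * y := by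
      push_cast; rw [pow_succ]; field_simp; ring
    linarith
  have hkey : c * ((s+y)^i * y) ≤ s^i * x := by
    have e : s + y = s * (1 + y/s) := by field_simp
    rw [e, mul_pow]
    have h1 : (1 + y/s)^i ≤ (1+y/s0)^k := by
      have a1 : (1 + y/s)^i ≤ (1+y/s)^k := pow_le_pow_right₀ (by have : 0 < y/s := by positivity
                                                                 linarith) (by omega)
      have a2 : (1 + y/s)^k ≤ (1+y/s0)^k := by gcongr
      exact a1.trans a2
    have e3 : y = b*(1+b*x) * x := by rw [hy]; ring
    calc c * (s^i * (1+y/s)^i * y) ≤ c * (s^i * (1+y/s0)^k * y) := by gcongr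
      _ = s^i * x * (c * (b*(1+b*x)) * (1+y/s0)^k) := by
          nth_rewrite 2 [e3]; ring
      _ ≤ s^i * x * 1 := by gcongr
      _ = _ := by ring
  calc c * ((s + y)^(i+1) - s^(i+1)) ≤ c * ((i+1:ℝ) * (s+y)^i * y) := by gcongr
    _ = (i+1) * (c * ((s+y)^i * y)) := by ring
    _ ≤ (i+1) * (s^i * x) := by gcongr
    _ ≤ _ := by linarith

lemma exists_step (k b : ℕ) (hk : 2 ≤ k) (hb : 2 ≤ b)
    (Ψ : ℕ → ℝ) (hpos : ∀ q, 0 < Ψ q) (N : ℕ)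
    (hN : ∀ x : ℕ, N ≤ x → Ψ x < 1 / (2 * (x : ℝ))) (a : ℕ) (s : ℝ) : ∃ A : ℕ, N ≤ a → 0 < a → 
    (∀ j, 1 ≤ j → j ≤ k → (b:ℝ)^(k*a) * ((s + (((b:ℝ)^A)⁻¹ + (((b:ℝ)^A)⁻¹)^2))^j - s^j) ≤ Ψ (b^(k*a)))
    ∧ (∃ j, 1 ≤ j ∧ j ≤ k ∧
       Ψ (b^(k*a)) < (b:ℝ)^(k*a) * ((s + (((b:ℝ)^(A-1))⁻¹ + (((b:ℝ)^(A-1))⁻¹)^2))^j - s^j))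
    ∧ 4 * a + 1 ≤ A := by
  classical
  have hbR : (2:ℝ) ≤ b := by exact_mod_cast hb
  have hex : ∃ A : ℕ, ∀ j, 1 ≤ j → j ≤ k →
      (b:ℝ)^(k*a) * ((s + (((b:ℝ)^A)⁻¹ + (((b:ℝ)^A)⁻¹)^2))^j - s^j) ≤ Ψ (b^(k*a)) := by
    have hx : Tendsto (fun A : ℕ => ((b:ℝ)^A)⁻¹) atTop (nhds 0) := by
      simp_rw [← inv_pow]
      exact tendsto_pow_atTop_nhds_zero_of_lt_one (by positivity) (inv_lt_one_of_one_lt₀ (by linarith))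
    have hev : ∀ j ∈ Finset.Icc 1 k, ∀ᶠ A : ℕ in atTop,
        (b:ℝ)^(k*a) * ((s + (((b:ℝ)^A)⁻¹ + (((b:ℝ)^A)⁻¹)^2))^j - s^j) ≤ Ψ (b^(k*a)) := by
      intro j _
      have hc : Continuous (fun x : ℝ => (b:ℝ)^(k*a) * ((s + (x + x^2))^j - s^j)) := by fun_prop
      have := (hc.tendsto 0).comp hx
      simp only [ne_eq, OfNat.ofNat_ne_zero, not_false_eq_true, zero_pow, add_zero, sub_self, mul_zero] at this
      exact (this.eventually (gt_mem_nhds (hpos _))).mono fun A h => h.le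
    obtain ⟨A, hA⟩ := ((Finset.eventually_all (Finset.Icc 1 k)).2 hev).exists
    exact ⟨A, fun j h1 h2 => hA j (Finset.mem_Icc.2 ⟨h1, h2⟩)⟩
  refine ⟨Nat.find hex, fun hNa ha => ?_⟩
  have hspec := Nat.find_spec hex
  set A := Nat.find hex with hA
  have hgrow : 4*a+1 ≤ A := by
    have h1 := hspec 1 le_rfl (by omega)
    have hNb : N ≤ b^(k*a) := by
      have : k*a < b^(k*a) := Nat.lt_pow_self (by omega)
      nlinarith
    have h2 := hN _ hNb
    by_contra hcon
    have h3 : A ≤ 2*(k*a) := by nlinarith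
    have h4 : (b:ℝ)^A ≤ (b:ℝ)^(k*a) * (b:ℝ)^(k*a) := by
      rw [← pow_add]; exact pow_le_pow_right₀ (by linarith) (by omega)
    push_cast at h2
    have hB : 0 < (b:ℝ)^(k*a) := by positivity
    have hAp : 0 < (b:ℝ)^A := by positivity
    set B := (b:ℝ)^(k*a)
    have h5 : B * ((b:ℝ)^A)⁻¹ < 1/(2*B) := by
      refine lt_of_le_of_lt ?_ (h1.trans_lt h2)
      apply mul_le_mul_of_nonneg_left _ hB.le
      have : 0 ≤ (((b:ℝ)^A)⁻¹)^2 := by positivity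
      simp only [pow_one]; linarith
    rw [← div_eq_mul_inv, div_lt_div_iff₀ hAp (by positivity)] at h5
    nlinarith
  refine ⟨hspec, ?_, hgrow⟩
  have := Nat.find_min hex (m := A - 1) (by omega)
  push Not at this
  obtain ⟨j, h1, h2, h3⟩ := this
  exact ⟨j, h1, h2, h3⟩

structure GoodSeq (k b : ℕ) (Ψ : ℕ → ℝ) (N : ℕ) (a P : ℕ → ℕ) : Prop where
  hb : 2 ≤ b
  a0 : N + 3 ≤ a 0
  P0 : P 0 = 1
  grow : ∀ n, 4 * a n ≤ a (n+1)
  Pstep : ∀ n, P (n+1) = P n * b^(a (n+1) - a n) + 1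
  low : ∀ n, ∃ j, 1 ≤ j ∧ j ≤ k ∧ Ψ (b^(k * a n)) < (b:ℝ)^(k * a n) *
    (((P n : ℝ) / (b:ℝ)^(a n) + (b * ((b:ℝ)^(a (n+1)))⁻¹ + (b * ((b:ℝ)^(a (n+1)))⁻¹)^2))^j
      - ((P n : ℝ) / (b:ℝ)^(a n))^j)
  up : ∀ n, Even n → ∀ j, 1 ≤ j → j ≤ k → (b:ℝ)^(k * a n) *
    (((P n : ℝ) / (b:ℝ)^(a n) + (((b:ℝ)^(a (n+1)))⁻¹ + (((b:ℝ)^(a (n+1)))⁻¹)^2))^j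
      - ((P n : ℝ) / (b:ℝ)^(a n))^j) ≤ Ψ (b^(k * a n))

noncomputable def zet (b : ℕ) (a : ℕ → ℕ) : ℝ := ∑' n, ((b:ℝ)^(a n))⁻¹

namespace GoodSeq
variable {k b N : ℕ} {Ψ : ℕ → ℝ} {a P : ℕ → ℕ}

lemma a_ge (h : GoodSeq k b Ψ N a P) (n : ℕ) : N + 3 + n ≤ a n := by
  induction n with
  | zero => have := h.a0; omega
  | succ n ih => have := h.grow n; omega

lemma a_mono (h : GoodSeq k b Ψ N a P) : StrictMono a := by
  apply strictMono_nat_of_lt_succ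
  intro n
  have := h.grow n; have := h.a_ge n; omega

lemma bR (h : GoodSeq k b Ψ N a P) : (2:ℝ) ≤ b := by exact_mod_cast h.hb

lemma s_succ (h : GoodSeq k b Ψ N a P) (n : ℕ) :
    (P (n+1) : ℝ) / (b:ℝ)^(a (n+1)) = (P n : ℝ) / (b:ℝ)^(a n) + ((b:ℝ)^(a (n+1)))⁻¹ := by
  have := h.bR
  have hlt := h.a_mono (Nat.lt_succ_self n)
  rw [h.Pstep]
  have e : (b:ℝ)^(a (n+1)) = (b:ℝ)^(a n) * (b:ℝ)^(a (n+1) - a n) := by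
    rw [← pow_add]; congr 1; simp only [Nat.succ_eq_add_one] at hlt; omega
  push_cast
  rw [add_div, e]
  field_simp

lemma s_sum (h : GoodSeq k b Ψ N a P) (n : ℕ) :
    (P n : ℝ) / (b:ℝ)^(a n) = ∑ i ∈ Finset.range (n+1), ((b:ℝ)^(a i))⁻¹ := by
  induction n with
  | zero => simp [h.P0]
  | succ n ih => rw [h.s_succ, ih, Finset.sum_range_succ _ (n+1)]

lemma summ (h : GoodSeq k b Ψ N a P) : Summable (fun n => ((b:ℝ)^(a n))⁻¹) := by
  have hb := h.bR
  refine Summable.of_nonneg_of_le (fun n => by positivity) (fun n => ?_)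
    (summable_geometric_of_lt_one (r := (1/2:ℝ)) (by norm_num) (by norm_num))
  rw [one_div, inv_pow]
  have h1 : (2:ℝ)^n ≤ (b:ℝ)^(a n) :=
    (pow_le_pow_left₀ (by norm_num) hb n).trans
      (pow_le_pow_right₀ (by linarith) (by have := h.a_ge n; omega))
  gcongr

lemma x_sq (h : GoodSeq k b Ψ N a P) (n : ℕ) :
    2 * ((b:ℝ)^(a (n+1)))⁻¹ ≤ (((b:ℝ)^(a n))⁻¹)^2 := by
  have hb := h.bR
  have h1 : 2 * ((b:ℝ)^(a n))^2 ≤ (b:ℝ)^(a (n+1)) := by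
    calc 2 * ((b:ℝ)^(a n))^2 ≤ b * ((b:ℝ)^(a n))^2 := by gcongr
      _ = (b:ℝ)^(2 * a n + 1) := by rw [← pow_mul]; ring
      _ ≤ _ := pow_le_pow_right₀ (by linarith) (by have := h.grow n; have := h.a_ge n; omega)
  have hp : 0 < (b:ℝ)^(a n) := by positivity
  have hp' : 0 < (b:ℝ)^(a (n+1)) := by positivity
  rw [inv_pow, ← div_eq_mul_inv, div_le_iff₀ hp', ← div_eq_inv_mul, le_div_iff₀ (by positivity)]
  exact h1

lemma x_le (h : GoodSeq k b Ψ N a P) (n : ℕ) : ((b:ℝ)^(a n))⁻¹ ≤ 1/8 := by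
  have hb := h.bR
  have h1 : (8:ℝ) ≤ (b:ℝ)^(a n) := by
    calc (8:ℝ) = 2^3 := by norm_num
      _ ≤ (b:ℝ)^3 := pow_le_pow_left₀ (by norm_num) hb 3
      _ ≤ _ := pow_le_pow_right₀ (by linarith) (by have := h.a_ge n; omega)
  rw [one_div]
  gcongr

lemma lower (h : GoodSeq k b Ψ N a P) (n : ℕ) :
    (P n : ℝ) / (b:ℝ)^(a n) + ((b:ℝ)^(a (n+1)))⁻¹ ≤ zet b a := by
  have hb := h.bR
  rw [← h.s_succ, h.s_sum]
  exact h.summ.sum_le_tsum _ (fun i _ => by positivity)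

lemma upper_aux (h : GoodSeq k b Ψ N a P) (n m : ℕ) :
    (P (n+m) : ℝ) / (b:ℝ)^(a (n+m)) + 2 * ((b:ℝ)^(a (n+m+1)))⁻¹ 
      ≤ (P n : ℝ) / (b:ℝ)^(a n) + 2 * ((b:ℝ)^(a (n+1)))⁻¹ := by
  have hb := h.bR
  induction m with
  | zero => simp
  | succ m ih =>
    refine le_trans ?_ ih
    rw [← add_assoc, h.s_succ]
    have h1 := h.x_sq (n+m+1)
    have h2 := h.x_le (n+m+1)
    have h3 : 0 < ((b:ℝ)^(a (n+m+1)))⁻¹ := by positivity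
    nlinarith

lemma upper (h : GoodSeq k b Ψ N a P) (n : ℕ) :
    zet b a ≤ (P n : ℝ) / (b:ℝ)^(a n) + 2 * ((b:ℝ)^(a (n+1)))⁻¹ := by
  have hb := h.bR
  have ht := (h.summ.hasSum.tendsto_sum_nat).comp (tendsto_add_atTop_nat (n+1))
  refine le_of_tendsto' ht (fun m => ?_)
  have := h.upper_aux n m
  have e := h.s_sum (n+m)
  have h3 : 0 < ((b:ℝ)^(a (n+m+1)))⁻¹ := by positivity
  simp only [Function.comp]
  rw [show m + (n+1) = n+m+1 by ring, ← e]
  linarith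

lemma upper2 (h : GoodSeq k b Ψ N a P) (n : ℕ) :
    zet b a ≤ (P n : ℝ) / (b:ℝ)^(a n) + (((b:ℝ)^(a (n+1)))⁻¹ + (((b:ℝ)^(a (n+1)))⁻¹)^2) := by
  have h1 := h.upper (n+1)
  have h2 := h.x_sq (n+1)
  rw [h.s_succ] at h1
  linarith

lemma zet_le (h : GoodSeq k b Ψ N a P) : zet b a ≤ 1/4 := by
  have hb := h.bR
  have h1 := h.upper 0
  have h2 := h.x_sq 0
  have h3 := h.x_le 0
  have h4 : 0 < ((b:ℝ)^(a 0))⁻¹ := by positivity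
  rw [h.P0, Nat.cast_one, one_div] at h1
  nlinarith

lemma zet_nonneg : 0 ≤ zet b a := tsum_nonneg fun n => by positivity

lemma cop (h : GoodSeq k b Ψ N a P) (n : ℕ) : Nat.Coprime (P n) (b^(a n)) := by
  apply Nat.Coprime.pow_right
  cases n with
  | zero => simp [h.P0]
  | succ n =>
    have hlt := h.a_mono (Nat.lt_succ_self n)
    simp only [Nat.succ_eq_add_one] at hlt
    rw [h.Pstep]
    obtain ⟨m, hm⟩ : ∃ m, a (n+1) - a n = m+1 := ⟨a (n+1) - a n - 1, by omega⟩
    rw [hm, pow_succ, ← mul_assoc]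
    simp

lemma s_ge (h : GoodSeq k b Ψ N a P) (n : ℕ) :
    ((b:ℝ)^(a 0))⁻¹ ≤ (P n : ℝ) / (b:ℝ)^(a n) := by
  rw [h.s_sum]
  have hb := h.bR
  exact Finset.single_le_sum (f := fun i => ((b:ℝ)^(a i))⁻¹) (fun i _ => by positivity) (by simp)

set_option maxHeartbeats 1000000 in
lemma core (h : GoodSeq k b Ψ N a P) (hk : 2 ≤ k) (hpos : ∀ q, 0 < Ψ q)
    (hN : ∀ x : ℕ, N ≤ x → Ψ x < 1 / (2 * (x : ℝ)))
    (hB2 : ∀ l x : ℕ, 1 ≤ l → 1 ≤ x → Ψ (l * x) ≤ (l : ℝ) * Ψ x)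
    (c : ℝ) (hc0 : 0 < c) (hc1 : c < 1 / (b : ℝ)) :
    ∃ B : ℕ, ∀ q : ℕ, B ≤ q → ∀ p : Fin k → ℤ,
      ¬ (∀ j : Fin k, |(q : ℝ) * zet b a ^ ((j : ℕ) + 1) - (p j : ℝ)| ≤ c * Ψ q) := by
  have hb := h.bR
  have hb2 := h.hb
  obtain ⟨δ, hδ, hratio⟩ := ratio_delta k b h.hb c (((b:ℝ)^(a 0))⁻¹) hc0 hc1 (by positivity)
  have hx0 := h.summ.tendsto_atTop_zero
  obtain ⟨n0, hn0⟩ := (eventually_atTop.1 (hx0.eventually (gt_mem_nhds hδ)))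
  refine ⟨b^(a n0) + N + 2, ?_⟩
  intro q hq p hp
  have hqR : (2:ℝ) ≤ q := by exact_mod_cast (by omega : 2 ≤ q)
  -- choice of n
  have hex : ∃ m, q^3 ≤ (b^(a m))^2 := by
    refine ⟨3*q, ?_⟩
    have h1 : q < b^q := Nat.lt_pow_self (by omega)
    calc q^3 ≤ (b^q)^3 := Nat.pow_le_pow_left h1.le 3
      _ = b^(q*3) := by rw [← pow_mul]
      _ ≤ b^(a (3*q) * 2) := Nat.pow_le_pow_right (by omega) (by have := h.a_ge (3*q); omega)
      _ = _ := by rw [← pow_mul]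
  classical
  obtain ⟨n, hnn, hn1, hn2⟩ : ∃ n, n0 ≤ n ∧ (b^(a n))^2 < q^3 ∧ q^3 ≤ (b^(a (n+1)))^2 := by
    have hlarge : ∀ i, i ≤ n0 → (b^(a i))^2 < q^3 := by
      intro i hi
      have h1 : b^(a i) ≤ b^(a n0) := Nat.pow_le_pow_right (by omega) (h.a_mono.monotone hi)
      calc (b^(a i))^2 < q^2 := Nat.pow_lt_pow_left (by omega) (by norm_num)
        _ ≤ q^3 := Nat.pow_le_pow_right (by omega) (by norm_num)
    have hm : n0 < Nat.find hex := by
      by_contra hc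
      have := hlarge _ (not_lt.1 hc)
      have := Nat.find_spec hex
      omega
    refine ⟨Nat.find hex - 1, by omega, ?_, ?_⟩
    · have := Nat.find_min hex (m := Nat.find hex - 1) (by omega)
      omega
    · have e : Nat.find hex - 1 + 1 = Nat.find hex := by omega
      rw [e]; exact Nat.find_spec hex
  have hE : c * Ψ q < 1/(2*(q:ℝ)) := by
    have h1 := hN q (by omega)
    have h2 : c < 1 := hc1.trans_le (by rw [div_le_one (by linarith)]; linarith)
    nlinarith [hpos q]
  have hk1 : 1 ≤ k := by omega
  set r : ℚ := (p ⟨0, hk1⟩ : ℚ) / (q:ℚ) with hr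
  have hqQ : (q:ℚ) ≠ 0 := by exact_mod_cast (by omega : q ≠ 0)
  have hur : (q:ℝ) * (r:ℝ) = p ⟨0, hk1⟩ := by
    rw [hr]; push_cast; field_simp
  have hrd : (r:ℝ) = (r.num:ℝ)/(r.den:ℝ) := by
    exact_mod_cast (congrArg (fun t : ℚ => (t:ℝ)) (Rat.num_div_den r)).symm
  have hclose := approx_close (zet b a) (c * Ψ q) zet_nonneg h.zet_le q (by omega) k hk1 p hp hE r hur
  have hden : r.den ∣ q := by
    have := Rat.den_dvd (p ⟨0, hk1⟩) (q:ℤ)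
    rw [hr]; exact_mod_cast this
  have hdvd : r.den^k ∣ q := by
    refine approx_dvd q (by omega) k p r.num r.den ?_ hden ?_
    · exact Rat.isCoprime_num_den r
    · intro j; rw [← hrd]; exact hclose j
  have hq0 : r.den^2 ≤ q := Nat.le_of_dvd (by omega) ((pow_dvd_pow _ hk).trans hdvd)
  set q0 := r.den with hq0def
  have hq0pos : 0 < q0 := r.den_pos
  set Q := b^(a n) with hQ
  set Q' := b^(a (n+1)) with hQ'
  have hQ8 : 8 ≤ Q := by
    calc 8 = 2^3 := by norm_num
      _ ≤ b^3 := Nat.pow_le_pow_left hb2 3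
      _ ≤ _ := Nat.pow_le_pow_right (by omega) (by have := h.a_ge n; omega)
  have hQQ : Q^4 ≤ Q' := by
    rw [hQ, hQ', ← pow_mul]
    exact Nat.pow_le_pow_right (by omega) (by have := h.grow n; omega)
  have i1 : q0 * Q < q^2 := by
    apply lt_of_pow_lt_pow_left₀ 2 (by positivity)
    calc (q0*Q)^2 = q0^2 * Q^2 := by ring
      _ < q * q^3 := by
        apply Nat.mul_lt_mul_of_le_of_lt hq0 hn1 (by omega)
      _ = _ := by ring
  have i2 : 4 * (q0 * Q) ≤ Q' := by
    have j1 : q0^3 ≤ Q' := by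
      apply le_of_pow_le_pow_left₀ (n := 2) (by norm_num) (by positivity)
      calc (q0^3)^2 = (q0^2)^3 := by ring
        _ ≤ q^3 := Nat.pow_le_pow_left hq0 3
        _ ≤ _ := hn2
    apply le_of_pow_le_pow_left₀ (n := 3) (by norm_num) (by positivity)
    calc (4*(q0*Q))^3 = q0^3 * (8^2 * Q^3) := by ring
      _ ≤ Q' * (Q^2 * Q^3) := by gcongr
      _ ≤ Q' * (Q^4 * Q^4) := by
        apply Nat.mul_le_mul_left
        rw [← pow_add, ← pow_add]
        exact Nat.pow_le_pow_right (by omega) (by norm_num)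
      _ ≤ Q' * (Q' * Q') := by gcongr
      _ = _ := by ring
  have hQR : (Q:ℝ) = (b:ℝ)^(a n) := by rw [hQ]; push_cast; rfl
  have hQR' : (Q':ℝ) = (b:ℝ)^(a (n+1)) := by rw [hQ']; push_cast; rfl
  have hQpos : (0:ℝ) < Q := by exact_mod_cast (by omega : 0 < Q)
  have hQpos' : (0:ℝ) < Q' := by rw [hQR']; positivity
  have hlow := h.lower n
  have hup := h.upper n
  obtain ⟨j, hj1, hjk, hjlow⟩ := h.low n
  have hrat := hratio _ _ (h.s_ge n) (by positivity) (hn0 (n+1) (by omega)) j hj1 hjk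
  rw [← hQR, ← hQR'] at *
  set s : ℝ := (P n : ℝ)/Q with hs
  have hspos : 0 ≤ s := by positivity
  have hus : (r:ℝ) = s := by
    by_contra hne
    have hq0R : (0:ℝ) < q0 := by exact_mod_cast hq0pos
    have d1 : (1:ℝ) ≤ |r - s| * (q0 * Q) := by
      have e : (r - s) * (q0 * Q) = ((r.num * Q - P n * q0 : ℤ) : ℝ) := by
        rw [hrd, hs]; push_cast; field_simp
      rw [← abs_of_pos (by positivity : (0:ℝ) < q0 * Q), ← abs_mul, e]
      have hz : (r.num * Q - P n * q0 : ℤ) ≠ 0 := by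
        intro hz
        rw [hz] at e
        simp only [Int.cast_zero, mul_eq_zero] at e
        rcases e with e | e | e
        · exact hne (by linarith)
        · exact hq0R.ne' e
        · exact hQpos.ne' e
      exact_mod_cast Int.one_le_abs hz
    have d2 : |zet b a - r| * (2 * q^2) < 1 := by
      have t := hp ⟨0, hk1⟩
      simp only [zero_add, pow_one] at t
      rw [← hur, ← mul_sub, abs_mul, abs_of_pos (by linarith : (0:ℝ) < q)] at t
      have t2 := t.trans_lt hE
      rw [lt_div_iff₀ (by positivity)] at t2
      nlinarith
    have d3 : |zet b a - s| * Q' ≤ 2 := by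
      have hi : (Q':ℝ)⁻¹ * Q' = 1 := by field_simp
      have : (0:ℝ) < (Q':ℝ)⁻¹ := by positivity
      rw [abs_of_nonneg (by linarith)]
      nlinarith
    have i1R : (q0:ℝ) * Q < q^2 := by exact_mod_cast i1
    have i2R : 4 * ((q0:ℝ) * Q) ≤ Q' := by exact_mod_cast i2
    have d4 : |r - s| ≤ |zet b a - r| + |zet b a - s| := by
      have := abs_sub_le (r:ℝ) (zet b a) s
      rwa [abs_sub_comm (r:ℝ) (zet b a)] at this
    have hm : (0:ℝ) < q0 * Q := by positivity
    nlinarith [abs_nonneg (zet b a - r), abs_nonneg (zet b a - s)]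
  have hrQ : r = ((P n : ℤ) : ℚ) / ((Q:ℤ):ℚ) := by
    have : (r:ℝ) = ((((P n : ℤ) : ℚ) / ((Q:ℤ):ℚ) : ℚ) : ℝ) := by rw [hus, hs]; push_cast; rfl
    exact_mod_cast this
  have hq0Q : q0 = Q := by
    have := Rat.den_div_eq_of_coprime (a := (P n : ℤ)) (b := (Q:ℤ)) (by exact_mod_cast (by omega : 0 < Q))
      (by simpa using h.cop n)
    rw [← hrQ] at this
    exact_mod_cast this
  rw [hq0Q] at hdvd
  obtain ⟨m, hm⟩ := hdvd
  have hmpos : 1 ≤ m := by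
    rcases Nat.eq_zero_or_pos m with h0 | h0
    · subst h0; omega
    · exact h0
  obtain ⟨i, rfl⟩ : ∃ i, j = i+1 := ⟨j-1, by omega⟩
  have hcl := hclose ⟨i, by omega⟩
  have hpi := hp ⟨i, by omega⟩
  simp only at hcl hpi
  rw [hus] at hcl
  have hint : (q:ℝ) * s^(i+1) = ((m * Q^(k-(i+1)) * (P n)^(i+1) : ℤ) : ℝ) := by
    rw [hm, hs, div_pow]
    have : (Q:ℝ)^k = (Q:ℝ)^(k-(i+1)) * Q^(i+1) := by rw [← pow_add]; congr 1; omega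
    push_cast
    rw [this]; field_simp
  have hpe : (q:ℝ) * s^(i+1) = p ⟨i, by omega⟩ := by
    rw [hint] at hcl ⊢
    have h1 : |((m * Q^(k-(i+1)) * (P n)^(i+1) : ℤ) : ℝ) - p ⟨i, by omega⟩| < 1 :=
      hcl.trans_le (by rw [div_le_one (by linarith)]; linarith)
    have h2 : |(m * Q^(k-(i+1)) * (P n)^(i+1) : ℤ) - p ⟨i, by omega⟩| < 1 := by exact_mod_cast h1
    rw [Int.abs_lt_one_iff] at h2
    exact_mod_cast sub_eq_zero.1 h2
  rw [← hpe, ← mul_sub] at hpi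
  have hpi2 := (le_abs_self _).trans hpi
  have hB := hB2 m (Q^k) hmpos (Nat.pos_of_ne_zero (by positivity))
  rw [show m * Q^k = q by rw [hm]; ring] at hB
  have hmR : (1:ℝ) ≤ m := by exact_mod_cast hmpos
  have hqm : (q:ℝ) = m * Q^k := by rw [hm]; push_cast; ring
  have f1 : (Q:ℝ)^k * (zet b a^(i+1) - s^(i+1)) ≤ c * Ψ (Q^k) := by
    have : (m:ℝ) * ((Q:ℝ)^k * (zet b a^(i+1) - s^(i+1))) ≤ m * (c * Ψ (Q^k)) := by
      calc (m:ℝ) * ((Q:ℝ)^k * (zet b a^(i+1) - s^(i+1)))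
          = q * (zet b a^(i+1) - s^(i+1)) := by rw [hqm, mul_assoc]
        _ ≤ c * Ψ q := hpi2
        _ ≤ c * (m * Ψ (Q^k)) := mul_le_mul_of_nonneg_left hB hc0.le
        _ = _ := mul_left_comm _ _ _
    exact le_of_mul_le_mul_left this (by linarith)
  have hQk : b^(k * a n) = Q^k := by rw [hQ, ← pow_mul]; congr 1; ring
  have hQkR : (b:ℝ)^(k * a n) = (Q:ℝ)^k := by exact_mod_cast hQk
  rw [hQk, hQkR] at hjlow
  have f2 : (s + (Q':ℝ)⁻¹)^(i+1) ≤ zet b a^(i+1) := by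
    apply pow_le_pow_left₀ _ hlow
    positivity
  have hQkpos : (0:ℝ) < (Q:ℝ)^k := by positivity
  have f3 := mul_lt_mul_of_pos_left hjlow hc0
  have f4 := mul_le_mul_of_nonneg_left hrat hQkpos.le
  have f5 : (Q:ℝ)^k * ((s + (Q':ℝ)⁻¹)^(i+1) - s^(i+1)) ≤ (Q:ℝ)^k * (zet b a^(i+1) - s^(i+1)) := by
    gcongr
  linarith

end GoodSeq

/-- The recursive construction: position of the last digit and numerator. -/
noncomputable def stt (b N : ℕ) (nxt : ℕ → ℝ → ℕ) (ω : ℕ → Bool) : ℕ → ℕ × ℕ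
  | 0 => (N + 3, 1)
  | n+1 =>
    let t := stt b N nxt ω n
    let a' := nxt t.1 ((t.2 : ℝ) / (b:ℝ)^t.1) - (if n % 2 = 1 ∧ ω (n/2) = true then 1 else 0)
    (a', t.2 * b^(a' - t.1) + 1)

lemma stt_succ_fst (b N : ℕ) (nxt : ℕ → ℝ → ℕ) (ω : ℕ → Bool) (n : ℕ) :
    (stt b N nxt ω (n+1)).1 = nxt (stt b N nxt ω n).1
      (((stt b N nxt ω n).2 : ℝ) / (b:ℝ)^(stt b N nxt ω n).1)
        - (if n % 2 = 1 ∧ ω (n/2) = true then 1 else 0) := rfl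

lemma stt_good (k b : ℕ) (hb : 2 ≤ b) (Ψ : ℕ → ℝ) (N : ℕ) (nxt : ℕ → ℝ → ℕ)
    (hnxt : ∀ (a : ℕ) (s : ℝ), N ≤ a → 0 < a →
      (∀ j, 1 ≤ j → j ≤ k → (b:ℝ)^(k*a) *
        ((s + (((b:ℝ)^(nxt a s))⁻¹ + (((b:ℝ)^(nxt a s))⁻¹)^2))^j - s^j) ≤ Ψ (b^(k*a)))
      ∧ (∃ j, 1 ≤ j ∧ j ≤ k ∧ Ψ (b^(k*a)) < (b:ℝ)^(k*a) *
        ((s + (((b:ℝ)^(nxt a s-1))⁻¹ + (((b:ℝ)^(nxt a s-1))⁻¹)^2))^j - s^j))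
      ∧ 4 * a + 1 ≤ nxt a s) (ω : ℕ → Bool) :
    GoodSeq k b Ψ N (fun n => (stt b N nxt ω n).1) (fun n => (stt b N nxt ω n).2) := by
  have hbR : (2:ℝ) ≤ b := by exact_mod_cast hb
  have hge : ∀ n, N + 3 ≤ (stt b N nxt ω n).1 := by
    intro n
    induction n with
    | zero => simp [stt]
    | succ n ih =>
      rw [stt_succ_fst]
      have := (hnxt (stt b N nxt ω n).1
        (((stt b N nxt ω n).2 : ℝ) / (b:ℝ)^(stt b N nxt ω n).1) (by omega) (by omega)).2.2
      split_ifs <;> omega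
  have H := fun n => hnxt (stt b N nxt ω n).1
        (((stt b N nxt ω n).2 : ℝ) / (b:ℝ)^(stt b N nxt ω n).1) (by have := hge n; omega)
        (by have := hge n; omega)
  refine ⟨hb, hge 0, rfl, ?_, fun n => rfl, ?_, ?_⟩
  · intro n
    simp only [stt_succ_fst]
    have := (H n).2.2
    split_ifs <;> omega
  · intro n
    obtain ⟨_, ⟨j, h1, h2, h3⟩, h4⟩ := H n
    refine ⟨j, h1, h2, h3.trans_le ?_⟩
    simp only [stt_succ_fst]
    set s := (((stt b N nxt ω n).2 : ℝ) / (b:ℝ)^(stt b N nxt ω n).1)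
    have hs : 0 ≤ s := by positivity
    set A := nxt (stt b N nxt ω n).1 s
    have hx : ((b:ℝ)^(A-1))⁻¹ ≤ b * ((b:ℝ)^(A - (if n % 2 = 1 ∧ ω (n/2) = true then 1 else 0)))⁻¹ := by
      split_ifs
      · have : 0 < ((b:ℝ)^(A-1))⁻¹ := by positivity
        nlinarith
      · obtain ⟨B, hB⟩ : ∃ B, A = B+1 := ⟨A-1, by omega⟩
        rw [hB, Nat.sub_zero, Nat.add_sub_cancel, pow_succ]
        apply le_of_eq; field_simp
    have : 0 < ((b:ℝ)^(A-1))⁻¹ := by positivity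
    gcongr
  · intro n hn j h1 h2
    have h3 := (H n).1 j h1 h2
    have e : (stt b N nxt ω (n+1)).1 = nxt (stt b N nxt ω n).1
      (((stt b N nxt ω n).2 : ℝ) / (b:ℝ)^(stt b N nxt ω n).1) := by
      rw [stt_succ_fst, if_neg, Nat.sub_zero]
      intro h; have := Nat.even_iff.1 hn; omega
    simp only [e]
    exact h3

lemma stt_lt (k b : ℕ) (Ψ : ℕ → ℝ) (N : ℕ) (nxt : ℕ → ℝ → ℕ)
    (hg : ∀ ω, GoodSeq k b Ψ N (fun n => (stt b N nxt ω n).1) (fun n => (stt b N nxt ω n).2))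
    (ω ω' : ℕ → Bool) (m : ℕ) (hag : ∀ i < m, ω i = ω' i) (h1 : ω m = true) (h2 : ω' m = false) :
    zet b (fun n => (stt b N nxt ω' n).1) < zet b (fun n => (stt b N nxt ω n).1) := by
  have hag' : ∀ n, n ≤ 2*m+1 → stt b N nxt ω n = stt b N nxt ω' n := by
    intro n
    induction n with
    | zero => intro _; rfl
    | succ n ih =>
      intro hn
      have e := ih (by omega)
      have c : (n % 2 = 1 ∧ ω (n/2) = true) ↔ (n % 2 = 1 ∧ ω' (n/2) = true) := by
        constructor <;> rintro ⟨p, q⟩ <;> refine ⟨p, ?_⟩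
        · rw [← hag _ (by omega)]; exact q
        · rw [hag _ (by omega)]; exact q
      simp only [stt, e, c]
  have hbR := (hg ω).bR
  have e := hag' (2*m+1) le_rfl
  have l := (hg ω).lower (2*m+1)
  have u := (hg ω').upper2 (2*m+1)
  have x8 := (hg ω').x_le (2*m+1+1)
  have ha1 := stt_succ_fst b N nxt ω (2*m+1)
  have ha2 := stt_succ_fst b N nxt ω' (2*m+1)
  have hd : (2*m+1)/2 = m := by omega
  have hmod : (2*m+1) % 2 = 1 := by omega
  have hge := (hg ω').a_ge (2*m+1+1)
  simp only [hd, hmod, h1, h2, e, and_self, if_true, Bool.false_eq_true, and_false, if_false, Nat.sub_zero] at ha1 ha2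
  rw [← ha2] at ha1
  simp only [e] at l u x8 hge
  rw [ha1] at l
  set A := (stt b N nxt ω' (2*m+1+1)).1
  obtain ⟨B, hB⟩ : ∃ B, A = B+1 := ⟨A-1, by omega⟩
  rw [hB] at l u x8
  rw [Nat.add_sub_cancel] at l
  have hx : ((b:ℝ)^B)⁻¹ = b * ((b:ℝ)^(B+1))⁻¹ := by rw [pow_succ]; field_simp
  rw [hx] at l
  have hp : 0 < ((b:ℝ)^(B+1))⁻¹ := by positivity
  nlinarith

lemma zet_mem_base (b : ℕ) (a : ℕ → ℕ) (ha : StrictMono a) (h1 : ∀ n, 1 ≤ a n)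
    (hle : zet b a ≤ 1) : zet b a ∈ baseExpSet b {0, 1} := by
  classical
  refine ⟨⟨GoodSeq.zet_nonneg, hle⟩, fun i => if ∃ n, a n = i + 1 then 1 else 0, ?_, ?_⟩
  · intro n; by_cases h : ∃ m, a m = n+1 <;> simp [h]
  · have hinj : Function.Injective (fun n => a n - 1) := by
      intro x y hxy
      have := h1 x; have := h1 y
      simp only at hxy
      exact ha.injective (by omega)
    rw [← hinj.tsum_eq]
    · unfold zet
      congr 1; ext n
      have e : a n - 1 + 1 = a n := by have := h1 n; omega
      have : ∃ m, a m = a n - 1 + 1 := ⟨n, e.symm⟩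
      simp [e]
    · intro i hi
      by_contra hc
      apply hi
      have : ¬ ∃ n, a n = i+1 := by
        rintro ⟨n, hn⟩
        exact hc ⟨n, by simp [hn]⟩
      simp [this]

lemma finite_of_bounded (k : ℕ) (ζ : ℝ) (Φ : ℕ → ℝ) (B : ℕ)
    (h : ∀ q : ℕ, B ≤ q → ∀ p : Fin k → ℤ,
      ¬ (∀ j : Fin k, |(q : ℝ) * ζ ^ ((j : ℕ) + 1) - (p j : ℝ)| ≤ Φ q)) :
    {qp : ℕ × (Fin k → ℤ) | 1 ≤ qp.1 ∧
      ∀ j : Fin k, |(qp.1 : ℝ) * ζ ^ ((j : ℕ) + 1) - (qp.2 j : ℝ)| ≤ Φ qp.1}.Finite := by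
  have hfin : ∀ q : ℕ, {p : Fin k → ℤ | ∀ j : Fin k, 
      |(q : ℝ) * ζ ^ ((j : ℕ) + 1) - (p j : ℝ)| ≤ Φ q}.Finite := by
    intro q
    have := Set.Finite.pi (ι := Fin k) (κ := fun _ => ℤ)
      (t := fun j => Set.Icc ⌊(q:ℝ) * ζ ^ ((j : ℕ) + 1) - Φ q⌋ ⌈(q:ℝ) * ζ ^ ((j : ℕ) + 1) + Φ q⌉)
      (fun j => Set.finite_Icc _ _)
    refine this.subset ?_
    intro p hp j _
    have := abs_le.1 (hp j)
    refine ⟨?_, ?_⟩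
    · have : ((⌊(q:ℝ) * ζ ^ ((j : ℕ) + 1) - Φ q⌋ : ℤ) : ℝ) ≤ p j := (Int.floor_le _).trans (by linarith)
      exact_mod_cast this
    · have : (p j : ℝ) ≤ ((⌈(q:ℝ) * ζ ^ ((j : ℕ) + 1) + Φ q⌉ : ℤ) : ℝ) := le_trans (by linarith) (Int.le_ceil _)
      exact_mod_cast this
  refine ((Set.finite_Iio B).biUnion (fun q _ => (Set.finite_singleton q).prod (hfin q))).subset ?_
  rintro ⟨q, p⟩ ⟨_, hp⟩
  simp only [Set.mem_iUnion]
  refine ⟨q, ?_, rfl, hp⟩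
  by_contra hc
  exact h q (not_lt.1 hc) p hp

lemma good_infinite {k b N : ℕ} {Ψ : ℕ → ℝ} {a P : ℕ → ℕ} (h : GoodSeq k b Ψ N a P) (hk : 2 ≤ k) :
    {qp : ℕ × (Fin k → ℤ) | 1 ≤ qp.1 ∧
      ∀ j : Fin k, |(qp.1 : ℝ) * zet b a ^ ((j : ℕ) + 1) - (qp.2 j : ℝ)| ≤ Ψ qp.1}.Infinite := by
  have hb := h.bR
  have hb2 := h.hb
  refine Set.infinite_of_injective_forall_mem (f := fun n : ℕ =>
    ((b^(k * a (2*n)), fun j => (b:ℤ)^(k * a (2*n) - a (2*n) * ((j:ℕ)+1)) * (P (2*n) : ℤ)^((j:ℕ)+1)) :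
      ℕ × (Fin k → ℤ))) ?_ ?_
  · intro x y hxy
    have h1 := (Prod.ext_iff.1 hxy).1
    simp only at h1
    have h2 := Nat.pow_right_injective hb2 h1
    have h3 := Nat.eq_of_mul_eq_mul_left (by omega) h2
    have := h.a_mono.injective h3
    omega
  · intro n
    refine ⟨Nat.one_le_pow _ _ (by omega), ?_⟩
    intro j
    have hu := h.up (2*n) (by simp) ((j:ℕ)+1) (by omega) (by omega)
    have hz := h.upper2 (2*n)
    have hl := h.lower (2*n)
    simp only
    have e : (((b:ℤ)^(k * a (2*n) - a (2*n) * ((j:ℕ)+1)) * (P (2*n) : ℤ)^((j:ℕ)+1) : ℤ) : ℝ)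
        = (b:ℝ)^(k * a (2*n)) * ((P (2*n) : ℝ) / (b:ℝ)^(a (2*n)))^((j:ℕ)+1) := by
      have : (b:ℝ)^(k * a (2*n)) = (b:ℝ)^(k * a (2*n) - a (2*n) * ((j:ℕ)+1)) * ((b:ℝ)^(a (2*n)))^((j:ℕ)+1) := by
        rw [← pow_mul, ← pow_add]; congr 1
        have : a (2*n) * ((j:ℕ)+1) ≤ k * a (2*n) := by
          rw [mul_comm k]; exact Nat.mul_le_mul_left _ (by omega)
        omega
      rw [this, div_pow]; push_cast; field_simp
    rw [e]
    push_cast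
    rw [← mul_sub, abs_of_nonneg]
    · refine le_trans ?_ hu
      have := GoodSeq.zet_nonneg (b := b) (a := a)
      gcongr
    · apply mul_nonneg (by positivity)
      rw [sub_nonneg]
      have : 0 < ((b:ℝ)^(a (2*n+1)))⁻¹ := by positivity
      exact pow_le_pow_left₀ (by positivity) (by linarith) _

/-- For `k ≥ 2`, `b ≥ 2`, the `{0,1}`-digit set `K_{J(b)}`, `Ψ` positive with
`Ψ(x) < 1/(2x)` for large `x` and `Ψ(l·x) ≤ l·Ψ(x)`, and every `0 < c < 1/b`, the set
`(𝒦_k(Ψ) \ 𝒦_k(cΨ)) ∩ K_{J(b)}` is uncountable. -/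
theorem powers_missing_digit_weak (k b : ℕ) (hk : 2 ≤ k) (hb : 2 ≤ b)
    (Ψ : ℕ → ℝ) (hpos : ∀ q, 0 < Ψ q)
    (hA3 : ∃ N : ℕ, ∀ x : ℕ, N ≤ x → Ψ x < 1 / (2 * (x : ℝ)))
    (hB2 : ∀ l x : ℕ, 1 ≤ l → 1 ≤ x → Ψ (l * x) ≤ (l : ℝ) * Ψ x)
    (c : ℝ) (hc0 : 0 < c) (hc1 : c < 1 / (b : ℝ)) :
    ¬ ((Kk k Ψ \ Kk k (fun x => c * Ψ x)) ∩ baseExpSet b {0, 1}).Countable := by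
  obtain ⟨N, hN⟩ := hA3
  choose nxt hnxt using exists_step k b hk hb Ψ hpos N hN
  have hg := stt_good k b hb Ψ N nxt hnxt
  intro hcount
  have hinj : Function.Injective (fun ω : ℕ → Bool => zet b (fun n => (stt b N nxt ω n).1)) := by
    intro ω ω' he
    by_contra hne
    have hex : ∃ m, ω m ≠ ω' m := Function.ne_iff.1 hne
    classical
    have hm := Nat.find_spec hex
    have hag : ∀ i < Nat.find hex, ω i = ω' i := fun i hi => not_not.1 (Nat.find_min hex hi)
    simp only at he
    cases h1 : ω (Nat.find hex) <;> cases h2 : ω' (Nat.find hex)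
    · exact hm (h1.trans h2.symm)
    · exact (stt_lt k b Ψ N nxt hg ω' ω _ (fun i hi => (hag i hi).symm) h2 h1).ne he
    · exact (stt_lt k b Ψ N nxt hg ω ω' _ hag h1 h2).ne he.symm
    · exact hm (h1.trans h2.symm)
  have halg : {x : ℝ | IsAlgebraic ℤ x}.Countable := Algebraic.countable ℤ ℝ
  have hall := (hcount.union halg).preimage hinj
  have huniv : (fun ω : ℕ → Bool => zet b (fun n => (stt b N nxt ω n).1)) ⁻¹'
      (((Kk k Ψ \ Kk k (fun x => c * Ψ x)) ∩ baseExpSet b {0, 1}) ∪ {x : ℝ | IsAlgebraic ℤ x})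
      = Set.univ := by
    rw [Set.eq_univ_iff_forall]
    intro ω
    have h := hg ω
    by_cases hal : IsAlgebraic ℤ (zet b (fun n => (stt b N nxt ω n).1))
    · exact Or.inr hal
    · refine Or.inl ⟨⟨⟨?_, good_infinite h hk⟩, ?_⟩, ?_⟩
      · intro Q hQ _ h0
        exact hal ⟨Q, hQ, h0⟩
      · intro hmem
        obtain ⟨B, hB⟩ := h.core hk hpos hN hB2 c hc0 hc1
        exact hmem.2 (finite_of_bounded k _ (fun x => c * Ψ x) B hB)
      · exact zet_mem_base b _ h.a_mono (fun n => by have := h.a_ge n; omega)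
          (h.zet_le.trans (by norm_num))
  rw [huniv, Set.countable_univ_iff] at hall
  obtain ⟨f, hf⟩ := exists_surjective_nat (ℕ → Bool)
  obtain ⟨n, hn⟩ := hf (fun i => !(f i i))
  have h1 := congrFun hn n
  simp at h1
end

section
/- Let k ≥ 2 and b ≥ 3 be integers and let K_{J(b)} be the set of numbers in [0,1] whose base-b expansion contains only the digits 0 and 1. Let Ψ : ℕ → (0,∞) satisfy Ψ(x) < 1/(2x) for all sufficiently large x and Ψ(l·x) ≤ l·Ψ(x) for all positive integers l, x. Then the set (𝒦_k(Ψ) \ ⋃_{0<c<1/(b−1)} 𝒦_k(cΨ)) ∩ K_{J(b)} is uncountable. -/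
open Filter Set

/-- `P / b^E` has a finite base-`b` expansion with digits `0,1`. -/
def RD (b P E : ℕ) : Prop :=
  ∃ d : ℕ → ℕ, (∀ n, d n ∈ ({0, 1} : Set ℕ)) ∧
    (P : ℝ) * ((b : ℝ)⁻¹) ^ E = ∑ i ∈ Finset.range E, (d i : ℝ) * ((b : ℝ)⁻¹) ^ (i + 1)

theorem RD.app {b P E : ℕ} (hb : 3 ≤ b) (h : RD b P E) (e : ℕ) (he : e ∈ ({0, 1} : Set ℕ)) :
    RD b (b * P + e) (E + 1) := by
  obtain ⟨d, hd, hs⟩ := h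
  have hb0 : (b : ℝ) ≠ 0 := by positivity
  refine ⟨fun i => if i = E then e else d i, ?_, ?_⟩
  · intro n
    dsimp only
    split_ifs
    · exact he
    · exact hd n
  · rw [Finset.sum_range_succ]
    have : ∑ x ∈ Finset.range E, (((if x = E then e else d x : ℕ)) : ℝ) * ((b : ℝ)⁻¹) ^ (x + 1)
        = ∑ i ∈ Finset.range E, (d i : ℝ) * ((b : ℝ)⁻¹) ^ (i + 1) := by
      apply Finset.sum_congr rfl
      intro x hx
      rw [if_neg (Finset.mem_range.1 hx).ne]
    rw [this, ← hs]
    simp only [if_true]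
    push_cast
    rw [pow_succ]
    field_simp

theorem RD.zeros {b P E : ℕ} (hb : 3 ≤ b) (h : RD b P E) (j : ℕ) :
    RD b (b ^ j * P) (E + j) := by
  induction j with
  | zero => simpa using h
  | succ j ih =>
    have := ih.app hb 0 (by simp)
    rw [show b ^ (j + 1) * P = b * (b ^ j * P) + 0 by ring]
    exact this

def onesN (b P : ℕ) : ℕ → ℕ
  | 0 => P
  | L + 1 => b * onesN b P L + 1

theorem RD.ones {b P E : ℕ} (hb : 3 ≤ b) (h : RD b P E) (j : ℕ) :
    RD b (onesN b P j) (E + j) := by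
  induction j with
  | zero => exact h
  | succ j ih => exact ih.app hb 1 (by simp)

theorem onesN_val (b P : ℕ) (hb : 3 ≤ b) (L : ℕ) :
    ((b : ℝ) - 1) * ((onesN b P L : ℝ) * ((b : ℝ)⁻¹) ^ L - P) = 1 - ((b : ℝ)⁻¹) ^ L := by
  have hb0 : (b : ℝ) ≠ 0 := by positivity
  induction L with
  | zero => simp [onesN]
  | succ L ih =>
    have e : ((onesN b P (L + 1) : ℕ) : ℝ) * ((b : ℝ)⁻¹) ^ (L + 1)
      = (onesN b P L : ℝ) * ((b : ℝ)⁻¹) ^ L + ((b : ℝ)⁻¹) ^ (L + 1) := by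
      simp only [onesN]; push_cast; rw [pow_succ]; field_simp
    rw [e]
    have : ((b : ℝ) - 1) * ((b : ℝ)⁻¹) ^ (L + 1) = ((b : ℝ)⁻¹) ^ L - ((b : ℝ)⁻¹) ^ (L + 1) := by
      rw [pow_succ]; field_simp
    linarith

theorem cop_succ (b X : ℕ) : (b * X + 1).Coprime b := by
  simp [Nat.Coprime]

theorem baseExp_closed (b : ℕ) (hb : 3 ≤ b) : IsClosed (baseExpSet b {0, 1}) := by
  have hb3 : (3 : ℝ) ≤ b := by exact_mod_cast hb
  let D : Bool → ℕ := fun x => if x then 1 else 0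
  let f : (ℕ → Bool) → ℝ := fun d => ∑' n : ℕ, ((D (d n) : ℕ) : ℝ) / (b : ℝ) ^ (n + 1)
  have hD : ∀ x, ((D x : ℕ) : ℝ) ≤ 1 := by intro x; cases x <;> simp [D]
  have hf : Continuous f := by
    refine continuous_tsum (u := fun n => ((b : ℝ)⁻¹) ^ (n + 1)) ?_ ?_ ?_
    · intro n
      have : Continuous (fun x : Bool => ((D x : ℕ) : ℝ) / (b : ℝ) ^ (n + 1)) :=
        continuous_of_discreteTopology
      exact this.comp (continuous_apply n)
    · exact (summable_nat_add_iff 1).2 (summable_geometric_of_lt_one (by positivity)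
        (inv_lt_one_of_one_lt₀ (by linarith)))
    · intro n x
      rw [Real.norm_of_nonneg (by positivity), inv_pow, ← one_div]
      have := hD (x n)
      gcongr
  have hr : IsClosed (Set.range f) := (isCompact_range hf).isClosed
  have : baseExpSet b {0, 1} = Icc (0 : ℝ) 1 ∩ Set.range f := by
    ext x
    constructor
    · rintro ⟨hx, d, hd, rfl⟩
      refine ⟨hx, fun n => decide (d n = 1), ?_⟩
      simp only [f]
      congr 1
      ext n
      have : D (decide (d n = 1)) = d n := by
        rcases hd n with h | h
        · rw [h]; simp [D]
        · rw [Set.mem_singleton_iff] at h; rw [h]; simp [D]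
      rw [this]
    · rintro ⟨hx, d, rfl⟩
      refine ⟨hx, fun n => D (d n), ?_, rfl⟩
      intro n
      cases d n <;> simp [D]
  rw [this]
  exact isClosed_Icc.inter hr

theorem RD.mem {b P E : ℕ} (h : RD b P E) (h1 : (P : ℝ) * ((b : ℝ)⁻¹) ^ E ≤ 1) :
    (P : ℝ) * ((b : ℝ)⁻¹) ^ E ∈ baseExpSet b {0, 1} := by
  obtain ⟨d, hd, hs⟩ := h
  refine ⟨⟨by positivity, h1⟩, fun n => if n < E then d n else 0, ?_, ?_⟩
  · intro n
    dsimp only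
    split_ifs
    · exact hd n
    · simp
  · rw [tsum_eq_sum (s := Finset.range E)]
    · rw [hs]
      apply Finset.sum_congr rfl
      intro x hx
      dsimp only
      rw [if_pos (Finset.mem_range.1 hx), inv_pow, div_eq_mul_inv]
    · intro n hn
      have hnlt : ¬ n < E := by simpa using hn
      simp [hnlt]

/-- the block step -/
theorem block (b : ℕ) (hb : 3 ≤ b) (P E : ℕ) (hR : RD b P E) (hE : 3 ≤ E) (f : ℝ) (hf0 : 0 < f)
    (hf : f < ((b : ℝ)⁻¹) ^ (4 * E) / 2) :
    ∃ P' E' : ℕ, RD b P' E' ∧ P'.Coprime b ∧ 4 * E ≤ E' ∧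
      (P : ℝ) * ((b : ℝ)⁻¹) ^ E < P' * ((b : ℝ)⁻¹) ^ E' ∧
      f / ((b : ℝ) - 1) * (1 - 2 * ((b : ℝ)⁻¹) ^ E) ≤
        P' * ((b : ℝ)⁻¹) ^ E' - (P : ℝ) * ((b : ℝ)⁻¹) ^ E ∧
      P' * ((b : ℝ)⁻¹) ^ E' + 2 * ((b : ℝ)⁻¹) ^ (3 * E') ≤ (P : ℝ) * ((b : ℝ)⁻¹) ^ E + f ∧
      f ≤ (b : ℝ) ^ (E + 2) * ((b : ℝ)⁻¹) ^ E' := by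
  have hb3 : (3 : ℝ) ≤ b := by exact_mod_cast hb
  have hb0 : (b : ℝ) ≠ 0 := by positivity
  set β : ℝ := (b : ℝ)⁻¹ with hβ
  have hβ0 : 0 < β := by positivity
  have hbβ : (b : ℝ) * β = 1 := mul_inv_cancel₀ hb0
  have hβ1 : β < 1 := inv_lt_one_of_one_lt₀ (by linarith)
  have hmono : ∀ {m n : ℕ}, m ≤ n → β ^ n ≤ β ^ m := fun h =>
    pow_le_pow_of_le_one hβ0.le hβ1.le h
  set x := β ^ E with hx
  have hx0 : 0 < x := by positivity
  have hx1 : x ≤ β := by simpa using hmono (show 1 ≤ E by omega)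
  have hβ3 : β ≤ 1 / 3 := by nlinarith
  have h41 : β ^ (4 * E) ≤ 1 := pow_le_one₀ hβ0.le hβ1.le
  obtain ⟨M, hM1, hM2⟩ := exists_nat_pow_near_of_lt_one (x := f / (1 + x)) (y := β)
    (by positivity) (by rw [div_le_one (by positivity)]; linarith) hβ0 hβ1
  rw [lt_div_iff₀ (by positivity)] at hM1
  rw [div_le_iff₀ (by positivity)] at hM2
  have hM : 4 * E ≤ M := by
    have h1 : β ^ (M + 1) < β ^ (4 * E) := by
      have : 0 < β ^ (M + 1) := by positivity
      nlinarith
    have := (pow_lt_pow_iff_right_of_lt_one₀ hβ0 hβ1).1 h1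
    omega
  have hBM : 0 < β ^ M := by positivity
  have hMs : β ^ (M + 1) = β ^ M * β := pow_succ _ _
  have hf2 : f ≤ 2 * β ^ M := by nlinarith
  have hbE : ∀ n : ℕ, (b : ℝ) ^ n * β ^ n = 1 := fun n => by rw [← mul_pow, hbβ, one_pow]
  by_cases hc : β ^ M ≤ f * (b - 1)
  · have hR' := (hR.zeros hb (M - E)).ones hb E
    rw [show E + (M - E) + E = M + E by omega] at hR'
    have hv := onesN_val b (b ^ (M - E) * P) hb E
    rw [← hβ] at hv
    set Q := onesN b (b ^ (M - E) * P) E with hQ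
    have hP : ((b ^ (M - E) * P : ℕ) : ℝ) * β ^ M = P * x := by
      push_cast
      calc (b : ℝ) ^ (M - E) * P * β ^ M = (b : ℝ) ^ (M - E) * P * β ^ (M - E + E) := by
            rw [show M - E + E = M by omega]
        _ = ((b : ℝ) ^ (M - E) * β ^ (M - E)) * (P * x) := by rw [pow_add]; ring
        _ = _ := by rw [hbE, one_mul]
    have hρ : ((b : ℝ) - 1) * (Q * β ^ (M + E) - P * x) = β ^ M * (1 - x) := by
      rw [← hP, ← hv, pow_add]; ring
    refine ⟨Q, M + E, hR', ?_, by omega, ?_, ?_, ?_, ?_⟩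
    · rw [hQ, show E = (E - 1) + 1 by omega]
      exact cop_succ _ _
    · have : 0 < β ^ M * (1 - x) := by apply mul_pos hBM; linarith
      rw [← hρ] at this
      have := pos_of_mul_pos_right this (by linarith)
      linarith
    · rw [div_mul_eq_mul_div, div_le_iff₀ (by linarith)]
      rw [mul_comm ((Q : ℝ) * β ^ (M + E) - P * x), hρ]
      calc f * (1 - 2 * x) ≤ (β ^ M * (1 + x)) * (1 - 2 * x) := by
            apply mul_le_mul_of_nonneg_right hM2; linarith
        _ = β ^ M * (1 - x) - β ^ M * (2 * x * x) := by ring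
        _ ≤ _ := by linarith [show 0 < β ^ M * (2 * x * x) by positivity]
    · have h1 : β ^ (3 * (M + E)) ≤ β ^ (M + E) * (β * β) := by
        rw [← pow_two, ← pow_add]; exact hmono (by omega)
      have h2 : 2 * (b - 1) * β ^ (3 * (M + E)) ≤ β ^ (M + E) := by
        have h0 : 0 < β ^ (M + E) := by positivity
        calc 2 * (b - 1) * β ^ (3 * (M + E)) ≤ 2 * (b - 1) * (β ^ (M + E) * (β * β)) := by
              gcongr; linarith
          _ = β ^ (M + E) * (2 * (b * β - β) * β) := by ring
          _ ≤ β ^ (M + E) * 1 := by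
              rw [hbβ]; gcongr; nlinarith
          _ = _ := by ring
      have h3 : β ^ (M + E) = β ^ M * x := pow_add _ _ _
      have : ((b : ℝ) - 1) * (Q * β ^ (M + E) + 2 * β ^ (3 * (M + E))) ≤ (b - 1) * (P * x + f) := by
        nlinarith
      exact le_of_mul_le_mul_left this (by linarith)
    · calc f ≤ 2 * β ^ M := hf2
        _ ≤ b ^ 2 * β ^ M := by gcongr; nlinarith
        _ = b ^ 2 * β ^ M * (b ^ E * β ^ E) := by rw [hbE, mul_one]
        _ = _ := by rw [pow_add, pow_add]; ring
  · push Not at hc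
    have hR' := (hR.zeros hb (M - E)).app hb 1 (by simp)
    rw [show E + (M - E) + 1 = M + 1 by omega] at hR'
    set Q := b * (b ^ (M - E) * P) + 1 with hQ
    have hP : (Q : ℝ) * β ^ (M + 1) = P * x + β ^ (M + 1) := by
      rw [hQ]
      push_cast
      calc ((b : ℝ) * (b ^ (M - E) * P) + 1) * β ^ (M + 1)
            = ((b : ℝ) * (b ^ (M - E) * P) + 1) * β ^ (M - E + E + 1) := by
            rw [show M - E + E = M by omega]
        _ = (b * β) * ((b : ℝ) ^ (M - E) * β ^ (M - E)) * (P * x) + β ^ (M - E + E + 1) := by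
            rw [pow_succ, pow_add]; ring
        _ = _ := by rw [hbE, hbβ, show M - E + E = M by omega]; ring
    refine ⟨Q, M + 1, hR', cop_succ _ _, by omega, ?_, ?_, ?_, ?_⟩
    · rw [hP]; linarith [show 0 < β ^ (M + 1) by positivity]
    · rw [hP]
      have h1 : f ≤ β ^ (M + 1) * (b - 1) := by
        have h2 : β ^ M = b * β ^ (M + 1) := by rw [hMs]; linear_combination (-β ^ M) * hbβ
        have h0 : 0 < β ^ (M + 1) := by positivity
        have h4 : f * (b - 1) ≤ (β ^ (M + 1) * (b - 1)) * (b - 1) := by nlinarith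
        exact le_of_mul_le_mul_right h4 (by linarith)
      have h5 : f / ((b : ℝ) - 1) ≤ β ^ (M + 1) := by
        rw [div_le_iff₀ (by linarith)]; exact h1
      have h6 : 0 < f / ((b : ℝ) - 1) := div_pos hf0 (by linarith)
      nlinarith
    · rw [hP]
      have h1 : β ^ (3 * (M + 1)) ≤ β ^ (M + 1) * (x * β) := by
        rw [hx, ← pow_succ, ← pow_add]; exact hmono (by omega)
      have h0 : 0 < β ^ (M + 1) := by positivity
      have h2 : 2 * β ^ (3 * (M + 1)) ≤ β ^ (M + 1) * x := by
        have : β ^ (M + 1) * (x * β) * 2 ≤ β ^ (M + 1) * x := by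
          have : 0 < β ^ (M + 1) * x := by positivity
          nlinarith
        linarith
      linarith
    · calc f ≤ 2 * β ^ M := hf2
        _ ≤ (b : ℝ) ^ (E + 1) * β ^ M := by
          gcongr
          calc (2 : ℝ) ≤ b := by linarith
            _ = b ^ 1 := by ring
            _ ≤ _ := pow_le_pow_right₀ (by linarith) (by omega)
        _ = (b : ℝ) ^ (E + 1) * β ^ M * (b * β) := by rw [hbβ, mul_one]
        _ = _ := by rw [hMs]; ring

structure StepProp (b : ℕ) (F : ℕ → ℝ) (z : ℝ) (P E P' E' P'' E'' : ℕ) : Prop where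
  cop : P'.Coprime b
  lo : 3 * E ≤ E'
  hi : E' ≤ 3 * E + 1
  lo2 : 4 * E' ≤ E''
  val : (P' : ℝ) * ((b : ℝ)⁻¹) ^ E' = P * ((b : ℝ)⁻¹) ^ E + ((b : ℝ)⁻¹) ^ E'
  lt : (P' : ℝ) * ((b : ℝ)⁻¹) ^ E' < P'' * ((b : ℝ)⁻¹) ^ E''
  ratio : F E' / ((b : ℝ) - 1) * (1 - 2 * ((b : ℝ)⁻¹) ^ E') ≤
        P'' * ((b : ℝ)⁻¹) ^ E'' - (P' : ℝ) * ((b : ℝ)⁻¹) ^ E'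
  up : P'' * ((b : ℝ)⁻¹) ^ E'' + 2 * ((b : ℝ)⁻¹) ^ (3 * E'') ≤ (P' : ℝ) * ((b : ℝ)⁻¹) ^ E' + F E'
  nest : P'' * ((b : ℝ)⁻¹) ^ E'' + 2 * ((b : ℝ)⁻¹) ^ (3 * E'') ≤
    (P : ℝ) * ((b : ℝ)⁻¹) ^ E + 2 * ((b : ℝ)⁻¹) ^ (3 * E)
  size : F E' ≤ (b : ℝ) ^ (E' + 2) * ((b : ℝ)⁻¹) ^ E''
  avoid : z < (P' : ℝ) * ((b : ℝ)⁻¹) ^ E' ∨ (P' : ℝ) * ((b : ℝ)⁻¹) ^ E' + F E' < z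

theorem step (b : ℕ) (hb : 3 ≤ b) (F : ℕ → ℝ) (E0 : ℕ) (hE0 : 3 ≤ E0)
    (hF : ∀ E, E0 ≤ E → 0 < F E ∧ F E < ((b : ℝ)⁻¹) ^ (4 * E) / 2) (P E : ℕ) (hR : RD b P E)
    (hE : E0 ≤ E) (z : ℝ) :
    ∃ P' E' P'' E'' : ℕ, (RD b P'' E'' ∧ P''.Coprime b ∧ E0 ≤ E'') ∧
      StepProp b F z P E P' E' P'' E'' := by
  have hb3 : (3 : ℝ) ≤ b := by exact_mod_cast hb
  have hb0 : (b : ℝ) ≠ 0 := by positivity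
  have hβ0 : 0 < (b : ℝ)⁻¹ := by positivity
  have hbβ : (b : ℝ) * (b : ℝ)⁻¹ = 1 := mul_inv_cancel₀ hb0
  have hβ1 : (b : ℝ)⁻¹ < 1 := inv_lt_one_of_one_lt₀ (by linarith)
  have hβ3 : (b : ℝ)⁻¹ ≤ 1 / 3 := by nlinarith
  have hmono : ∀ {m n : ℕ}, m ≤ n → (b : ℝ)⁻¹ ^ n ≤ (b : ℝ)⁻¹ ^ m := fun h =>
    pow_le_pow_of_le_one hβ0.le hβ1.le h
  obtain ⟨E', hlo, hhi, hz⟩ : ∃ E', 3 * E ≤ E' ∧ E' ≤ 3 * E + 1 ∧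
      (z < P * ((b : ℝ)⁻¹) ^ E + ((b : ℝ)⁻¹) ^ E' ∨
        P * ((b : ℝ)⁻¹) ^ E + ((b : ℝ)⁻¹) ^ E' + F E' < z) := by
    by_cases h : z < P * ((b : ℝ)⁻¹) ^ E + ((b : ℝ)⁻¹) ^ (3 * E)
    · exact ⟨3 * E, le_rfl, by omega, Or.inl h⟩
    · push Not at h
      refine ⟨3 * E + 1, by omega, le_rfl, Or.inr ?_⟩
      have h1 := (hF (3 * E + 1) (by omega)).2
      have h2 : ((b : ℝ)⁻¹) ^ (4 * (3 * E + 1)) ≤ ((b : ℝ)⁻¹) ^ (3 * E + 1) := hmono (by omega)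
      have h3 : ((b : ℝ)⁻¹) ^ (3 * E + 1) ≤ ((b : ℝ)⁻¹) ^ (3 * E) * (1 / 3) := by
        rw [pow_succ]; gcongr
      have h4 : 0 < ((b : ℝ)⁻¹) ^ (3 * E) := by positivity
      linarith
  have hR' := (hR.zeros hb (E' - E - 1)).app hb 1 (by simp)
  rw [show E + (E' - E - 1) + 1 = E' by omega] at hR'
  have hP : ((b * (b ^ (E' - E - 1) * P) + 1 : ℕ) : ℝ) * ((b : ℝ)⁻¹) ^ E'
      = P * ((b : ℝ)⁻¹) ^ E + ((b : ℝ)⁻¹) ^ E' := by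
    obtain ⟨j, rfl⟩ : ∃ j, E' = E + j + 1 := ⟨E' - E - 1, by omega⟩
    rw [show E + j + 1 - E - 1 = j by omega]
    push_cast
    have : (b : ℝ) ^ j * (b : ℝ)⁻¹ ^ j = 1 := by rw [← mul_pow, hbβ, one_pow]
    calc _ = (b * (b : ℝ)⁻¹) * ((b : ℝ) ^ j * (b : ℝ)⁻¹ ^ j) * (P * (b : ℝ)⁻¹ ^ E)
          + (b : ℝ)⁻¹ ^ (E + j + 1) := by rw [pow_succ, pow_add]; ring
      _ = _ := by rw [this, hbβ]; ring
  obtain ⟨f0, f1⟩ := hF E' (by omega)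
  obtain ⟨P'', E'', hR'', hc'', h4, hlt, hrat, hup, hsize⟩ :=
    block b hb _ E' hR' (by omega) (F E') f0 f1
  refine ⟨_, E', P'', E'', ⟨hR'', hc'', by omega⟩, cop_succ _ _, hlo, hhi, h4, hP, hlt, hrat, hup,
    ?_, hsize, ?_⟩
  · refine hup.trans ?_
    rw [hP]
    have h2 : ((b : ℝ)⁻¹) ^ (4 * E') ≤ ((b : ℝ)⁻¹) ^ (3 * E) := hmono (by omega)
    have h3 : ((b : ℝ)⁻¹) ^ (E') ≤ ((b : ℝ)⁻¹) ^ (3 * E) := hmono (by omega)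
    have h4 : 0 < ((b : ℝ)⁻¹) ^ (3 * E) := by positivity
    linarith
  · rw [hP]; exact hz

theorem seqs (b : ℕ) (hb : 3 ≤ b) (F : ℕ → ℝ) (E0 : ℕ) (hE0 : 3 ≤ E0)
    (hF : ∀ E, E0 ≤ E → 0 < F E ∧ F E < ((b : ℝ)⁻¹) ^ (4 * E) / 2) (z : ℕ → ℝ) :
    ∃ P E P' E' : ℕ → ℕ, P 0 = 1 ∧ E 0 = E0 ∧
      (∀ n, RD b (P n) (E n) ∧ (P n).Coprime b ∧ E0 ≤ E n) ∧
      ∀ n, StepProp b F (z n) (P n) (E n) (P' n) (E' n) (P (n + 1)) (E (n + 1)) := by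
  have H : ∀ (st : {x : ℕ × ℕ // RD b x.1 x.2 ∧ x.1.Coprime b ∧ E0 ≤ x.2}) (w : ℝ),
      ∃ y : ℕ × ℕ, ∃ st' : {x : ℕ × ℕ // RD b x.1 x.2 ∧ x.1.Coprime b ∧ E0 ≤ x.2},
        StepProp b F w st.1.1 st.1.2 y.1 y.2 st'.1.1 st'.1.2 := by
    intro st w
    obtain ⟨P', E', P'', E'', h1, h2⟩ :=
      step b hb F E0 hE0 hF st.1.1 st.1.2 st.2.1 st.2.2.2 w
    exact ⟨(P', E'), ⟨(P'', E''), h1⟩, h2⟩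
  choose y st' hst using H
  have h0 : RD b 1 E0 := by
    have h00 : RD b 0 0 := ⟨fun _ => 0, by simp, by simp⟩
    have := (h00.zeros hb (E0 - 1)).app hb 1 (by simp)
    rw [show 0 + (E0 - 1) + 1 = E0 by omega] at this
    simpa using this
  let start0 : {x : ℕ × ℕ // RD b x.1 x.2 ∧ x.1.Coprime b ∧ E0 ≤ x.2} :=
    ⟨(1, E0), h0, by simp, le_rfl⟩
  let q : ℕ → {x : ℕ × ℕ // RD b x.1 x.2 ∧ x.1.Coprime b ∧ E0 ≤ x.2} :=
    fun n => Nat.rec start0 (fun n st => st' st (z n)) n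
  exact ⟨fun n => (q n).1.1, fun n => (q n).1.2, fun n => (y (q n) (z n)).1,
    fun n => (y (q n) (z n)).2, rfl, rfl, fun n => (q n).2, fun n => hst (q n) (z n)⟩

theorem gap (b : ℕ) (hb : 3 ≤ b) (P E E2 : ℕ) (r : ℚ) (ζ H : ℝ)
    (hne : (r : ℝ) ≠ P * ((b : ℝ)⁻¹) ^ E) (h1 : b ^ E ≤ r.den ^ 3) (h2 : r.den ^ 3 < b ^ E2)
    (hH : |ζ - P * ((b : ℝ)⁻¹) ^ E| ≤ H)
    (hc : (2 * H * (b : ℝ) ^ E) ^ 3 ≤ ((b : ℝ)⁻¹) ^ E2) :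
    1 / (2 * (r.den : ℝ) ^ 4) ≤ |ζ - r| := by
  have hb3 : (3 : ℝ) ≤ b := by exact_mod_cast hb
  have hb0 : (b : ℝ) ≠ 0 := by positivity
  set q : ℝ := (r.den : ℝ) with hq
  have hq0 : 0 < q := by rw [hq]; exact_mod_cast r.den_pos
  have hH0 : 0 ≤ H := (abs_nonneg _).trans hH
  set B : ℝ := (b : ℝ) ^ E with hB
  have hB0 : 0 < B := by positivity
  have h1' : B ≤ q ^ 3 := by rw [hB, hq]; exact_mod_cast h1
  have h2' : q ^ 3 < (b : ℝ) ^ E2 := by rw [hq]; exact_mod_cast h2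
  rw [inv_pow] at hne hH hc
  rw [← hB] at hne hH
  have hr : (r : ℝ) = r.num / q := by rw [hq]; exact_mod_cast (Rat.num_div_den r).symm
  have hd : 1 / (q * B) ≤ |(r : ℝ) - P * B⁻¹| := by
    have e : (r : ℝ) - P * B⁻¹ = ((r.num * (b : ℤ) ^ E - P * r.den : ℤ) : ℝ) / (q * B) := by
      rw [hr]; push_cast; rw [← hB, ← hq]; field_simp
    rw [e, abs_div, abs_of_pos (show 0 < q * B by positivity)]
    gcongr
    have hz : (r.num * (b : ℤ) ^ E - P * r.den : ℤ) ≠ 0 := by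
      intro h
      rw [h] at e
      apply hne
      simp at e
      linarith
    exact_mod_cast Int.one_le_abs hz
  have h3 : (2 * H * B * q) ^ 3 < 1 := by
    calc (2 * H * B * q) ^ 3 = (2 * H * B) ^ 3 * q ^ 3 := by ring
      _ ≤ ((b : ℝ) ^ E2)⁻¹ * q ^ 3 := by gcongr
      _ < ((b : ℝ) ^ E2)⁻¹ * (b : ℝ) ^ E2 := by gcongr
      _ = 1 := inv_mul_cancel₀ (by positivity)
  have h4 : 2 * H * B * q < 1 := by
    by_contra hcon
    push Not at hcon
    exact absurd h3 (not_lt.2 (one_le_pow₀ hcon))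
  have h5 : H ≤ 1 / (2 * (q * B)) := by
    rw [le_div_iff₀ (by positivity)]; linarith
  have h6 : 1 / (2 * q ^ 4) ≤ 1 / (2 * (q * B)) := by
    apply one_div_le_one_div_of_le (by positivity)
    nlinarith
  have h7 : |(r : ℝ) - P * B⁻¹| ≤ |ζ - r| + |ζ - P * B⁻¹| := by
    have := abs_sub_le (r : ℝ) ζ (P * B⁻¹)
    rwa [abs_sub_comm (r : ℝ) ζ] at this
  have h8 : 1 / (q * B) = 2 * (1 / (2 * (q * B))) := by field_simp
  linarith

theorem den_eq (b P E : ℕ) (hb : 3 ≤ b) (hc : P.Coprime b) (r : ℚ)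
    (h : (r : ℝ) = P * ((b : ℝ)⁻¹) ^ E) : r.den = b ^ E := by
  have hr : r = ((P : ℤ) : ℚ) / (((b ^ E : ℕ) : ℤ) : ℚ) := by
    have : (r : ℝ) = (((P : ℤ) / ((b ^ E : ℕ) : ℤ) : ℚ) : ℝ) := by
      rw [h]; push_cast; rw [inv_pow]; rfl
    exact_mod_cast this
  have := Rat.den_div_eq_of_coprime (a := (P : ℤ)) (b := ((b ^ E : ℕ) : ℤ)) (by positivity)
    (by simpa using Nat.Coprime.pow_right E hc)
  rw [← hr] at this
  exact_mod_cast this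

theorem core (b : ℕ) (hb : 3 ≤ b) (φ : ℕ → ℝ) (N : ℕ) 
    (hφ : ∀ q, N ≤ q → 0 < φ q ∧ φ q < 1 / (2 * (q : ℝ) ^ 4)) (z : ℕ → ℝ) :
    ∃ ζ : ℝ, ζ ∈ baseExpSet b {0, 1} ∧ ζ ≤ 1 / 3 ∧ (∀ n, ζ ≠ z n) ∧
      (∀ m : ℕ, ∃ q : ℕ, m ≤ q ∧ ∃ p : ℕ, (p : ℝ) / q < ζ ∧ ζ - (p : ℝ) / q ≤ φ q) ∧
      ∃ M : ℕ, ∀ r : ℚ, M ≤ r.den →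
        φ r.den / ((b : ℝ) - 1) * (1 - 2 / (r.den : ℝ)) ≤ |ζ - r| := by
  have hb3 : (3 : ℝ) ≤ b := by exact_mod_cast hb
  have hb0 : (b : ℝ) ≠ 0 := by positivity
  have hβ0 : 0 < (b : ℝ)⁻¹ := by positivity
  have hbβ : (b : ℝ) * (b : ℝ)⁻¹ = 1 := mul_inv_cancel₀ hb0
  have hβ1 : (b : ℝ)⁻¹ < 1 := inv_lt_one_of_one_lt₀ (by linarith)
  have hβ3 : (b : ℝ)⁻¹ ≤ 1 / 3 := by nlinarith
  have hmono : ∀ {m n : ℕ}, m ≤ n → (b : ℝ)⁻¹ ^ n ≤ (b : ℝ)⁻¹ ^ m := fun h =>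
    pow_le_pow_of_le_one hβ0.le hβ1.le h
  have hbn : ∀ n : ℕ, (b : ℝ) ^ n * (b : ℝ)⁻¹ ^ n = 1 := fun n => by
    rw [← mul_pow, hbβ, one_pow]
  set E0 := N + 3 with hE0
  have hlarge : ∀ E, E0 ≤ E → N ≤ b ^ E := fun E hE => by
    have := Nat.lt_pow_self (n := E) (show 1 < b by omega)
    omega
  have hF : ∀ E, E0 ≤ E → 0 < φ (b ^ E) ∧ φ (b ^ E) < ((b : ℝ)⁻¹) ^ (4 * E) / 2 := by
    intro E hE
    obtain ⟨h1, h2⟩ := hφ (b ^ E) (hlarge E hE)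
    refine ⟨h1, h2.trans_eq ?_⟩
    push_cast
    rw [inv_pow, ← pow_mul, mul_comm E 4]
    field_simp
  obtain ⟨P, E, P', E', hP0, hEz, hgood, hst⟩ :=
    seqs b hb (fun E => φ (b ^ E)) E0 (by omega) hF z
  set s : ℕ → ℝ := fun n => P n * ((b : ℝ)⁻¹) ^ (E n) with hs
  set s' : ℕ → ℝ := fun n => P' n * ((b : ℝ)⁻¹) ^ (E' n) with hs'
  set u : ℕ → ℝ := fun n => s n + 2 * ((b : ℝ)⁻¹) ^ (3 * E n) with hu
  have hss' : ∀ n, s' n = s n + ((b : ℝ)⁻¹) ^ (E' n) := fun n => (hst n).val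
  have hs's : ∀ n, s' n < s (n + 1) := fun n => (hst n).lt
  have hsm : Monotone s := monotone_nat_of_le_succ fun n => by
    have := hs's n
    have h2 : 0 < ((b : ℝ)⁻¹) ^ (E' n) := by positivity
    linarith [hss' n]
  have hum : Antitone u := antitone_nat_of_succ_le fun n => (hst n).nest
  have hsu : ∀ n, s n ≤ u n := fun n => by
    have h2 : 0 < ((b : ℝ)⁻¹) ^ (3 * E n) := by positivity
    simp only [hu]; linarith
  have hsu' : ∀ n m, s n ≤ u m := fun n m =>
    (hsm (le_max_left n m)).trans ((hsu _).trans (hum (le_max_right n m)))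
  have hbdd : BddAbove (Set.range s) := ⟨u 0, by rintro _ ⟨n, rfl⟩; exact hsu' n 0⟩
  have hu0 : u 0 ≤ 1 / 3 := by
    simp only [hu, hs, hP0, hEz]
    have h1 : ((b : ℝ)⁻¹) ^ (3 * E0) ≤ ((b : ℝ)⁻¹) ^ 2 := hmono (by omega)
    have h2 : ((b : ℝ)⁻¹) ^ (E0) ≤ ((b : ℝ)⁻¹) ^ 2 := hmono (by omega)
    push_cast
    nlinarith
  obtain ⟨ζ, hζ⟩ : ∃ ζ, ζ = ⨆ n, s n := ⟨_, rfl⟩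
  have hsζ : ∀ n, s n ≤ ζ := fun n => hζ ▸ le_ciSup hbdd n
  have hζu : ∀ n, ζ ≤ u n := fun n => hζ ▸ ciSup_le fun m => hsu' m n
  have hs'ζ : ∀ n, s' n < ζ := fun n => (hs's n).trans_le (hsζ _)
  have hζF : ∀ n, ζ ≤ s' n + φ (b ^ E' n) := fun n => (hζu (n + 1)).trans (hst n).up
  have hEn : ∀ n, E0 ≤ E n := fun n => (hgood n).2.2
  have hE'n : ∀ n, E0 ≤ E' n := fun n => by have := (hst n).lo; have := hEn n; omega
  have hEsm : StrictMono E := strictMono_nat_of_lt_succ fun n => by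
    have := (hst n).lo; have := (hst n).lo2; have := hEn n; omega
  refine ⟨ζ, ?_, (hζu 0).trans hu0, ?_, ?_, b ^ E0, ?_⟩
  · have ht : Tendsto s atTop (nhds ζ) := hζ ▸ tendsto_atTop_ciSup hsm hbdd
    refine (baseExp_closed b hb).mem_of_tendsto ht (Eventually.of_forall fun n => ?_)
    exact (hgood n).1.mem (by have := hsu' n 0; simp only [hs] at this; linarith)
  · intro n h
    rcases (hst n).avoid with h1 | h1
    · have := hs'ζ n; simp only [hs'] at this; linarith
    · have := hζF n; simp only [hs'] at this; linarith
  · intro m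
    refine ⟨b ^ E' m, ?_, P' m, ?_⟩
    · have h1 := Nat.lt_pow_self (n := E' m) (show 1 < b by omega)
      have h2 := hEsm.le_apply (x := m)
      have h3 := (hst m).lo
      omega
    · have e : (P' m : ℝ) / ((b ^ E' m : ℕ) : ℝ) = s' m := by
        simp only [hs']; push_cast; rw [inv_pow]; rfl
      rw [e]
      exact ⟨hs'ζ m, by linarith [hζF m]⟩
  · intro r hr
    have hrN : N ≤ r.den := (hlarge E0 le_rfl).trans hr
    obtain ⟨f0, f1⟩ := hφ r.den hrN
    have hq0 : (0 : ℝ) < r.den := by exact_mod_cast r.den_pos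
    have weak : φ r.den ≤ |ζ - r| → 
        φ r.den / ((b : ℝ) - 1) * (1 - 2 / (r.den : ℝ)) ≤ |ζ - r| := by
      intro h
      refine le_trans ?_ h
      have h1 : φ r.den / ((b : ℝ) - 1) ≤ φ r.den := div_le_self f0.le (by linarith)
      have h2 : 0 < φ r.den / ((b : ℝ) - 1) := div_pos f0 (by linarith)
      have h3 : 0 < 2 / (r.den : ℝ) := by positivity
      nlinarith
    by_cases c1 : ∃ n, (r : ℝ) = s n
    · obtain ⟨n, hn⟩ := c1
      apply weak
      have hd := den_eq b (P n) (E n) hb (hgood n).2.1 r hn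
      rw [hd, hn]
      have h1 := (hF (E n) (hEn n)).2
      have h2 : ((b : ℝ)⁻¹) ^ (4 * E n) ≤ ((b : ℝ)⁻¹) ^ (E' n) :=
        hmono (by have := (hst n).hi; have := hEn n; omega)
      have h3 := hs'ζ n
      rw [hss'] at h3
      have h4 : 0 < ((b : ℝ)⁻¹) ^ (4 * E n) := by positivity
      rw [abs_of_nonneg (by linarith [hsζ n])]
      linarith
    by_cases c2 : ∃ n, (r : ℝ) = s' n
    · obtain ⟨n, hn⟩ := c2
      have hd := den_eq b (P' n) (E' n) hb (hst n).cop r hn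
      have h1 := (hst n).ratio
      rw [hd, hn, abs_of_nonneg (by linarith [hs'ζ n])]
      have h2 : 2 / ((b ^ E' n : ℕ) : ℝ) = 2 * ((b : ℝ)⁻¹) ^ (E' n) := by
        push_cast; rw [inv_pow]; rfl
      rw [h2]
      refine h1.trans ?_
      have := hsζ (n + 1)
      simp only [hs] at this
      simp only [hs']
      linarith
    push Not at c1 c2
    apply weak
    refine f1.le.trans ?_
    -- locate q^3
    have hex : ∃ n, r.den ^ 3 < b ^ E n := by
      refine ⟨r.den ^ 3, ?_⟩
      have h1 := Nat.lt_pow_self (n := E (r.den ^ 3)) (show 1 < b by omega)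
      have h2 := hEsm.le_apply (x := r.den ^ 3)
      omega
    obtain ⟨n, hn1, hn2⟩ : ∃ n, b ^ E n ≤ r.den ^ 3 ∧ r.den ^ 3 < b ^ E (n + 1) := by
      classical
      have hsp := Nat.find_spec hex
      have hmin := fun m => Nat.find_min hex (m := m)
      rcases hk : Nat.find hex with _ | n
      · exfalso
        rw [hk, hEz] at hsp
        have : r.den ≤ r.den ^ 3 := Nat.le_self_pow (by norm_num) _
        omega
      · rw [hk] at hsp hmin
        exact ⟨n, not_lt.1 (hmin n (by omega)), hsp⟩
    have hEp := hEn n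
    have hlo := (hst n).lo
    have hhi := (hst n).hi
    have hlo2 := (hst n).lo2
    by_cases hmid : r.den ^ 3 < b ^ E' n
    · refine gap b hb (P n) (E n) (E' n) r ζ (2 * ((b : ℝ)⁻¹) ^ (3 * E n)) (c1 n) hn1 hmid ?_ ?_
      · have h1 := hζu n
        have h2 := hsζ n
        simp only [hu] at h1
        rw [abs_of_nonneg (by simp only [hs] at h2; linarith)]
        simp only [hs] at h1
        linarith
      · have e : 2 * (2 * ((b : ℝ)⁻¹) ^ (3 * E n)) * (b : ℝ) ^ E n = 4 * ((b : ℝ)⁻¹) ^ (2 * E n) := by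
          rw [show 3 * E n = 2 * E n + E n by ring, pow_add]
          linear_combination 4 * ((b : ℝ)⁻¹) ^ (2 * E n) * hbn (E n)
        rw [e, mul_pow, ← pow_mul]
        calc (4 : ℝ) ^ 3 * ((b : ℝ)⁻¹) ^ (2 * E n * 3)
            ≤ 4 ^ 3 * ((b : ℝ)⁻¹) ^ (E' n + 4) := by
              gcongr 4 ^ 3 * ?_
              exact hmono (by omega)
          _ = ((b : ℝ)⁻¹) ^ (E' n) * (64 * ((b : ℝ)⁻¹) ^ 4) := by rw [pow_add]; ring
          _ ≤ ((b : ℝ)⁻¹) ^ (E' n) * 1 := by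
              gcongr
              calc 64 * ((b : ℝ)⁻¹) ^ 4 ≤ 64 * (1 / 3) ^ 4 := by gcongr
                _ ≤ 1 := by norm_num
          _ = _ := mul_one _
    · push Not at hmid
      refine gap b hb (P' n) (E' n) (E (n + 1)) r ζ
        ((b : ℝ) ^ (E' n + 2) * ((b : ℝ)⁻¹) ^ (E (n + 1))) (c2 n) hmid hn2 ?_ ?_
      · have h1 := hζF n
        have h2 := hs'ζ n
        have h3 := (hst n).size
        simp only [hs'] at h1 h2
        rw [abs_of_nonneg (by linarith)]
        linarith
      · have hX : 0 < ((b : ℝ)⁻¹) ^ (E (n + 1)) := by positivity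
        calc (2 * ((b : ℝ) ^ (E' n + 2) * ((b : ℝ)⁻¹) ^ (E (n + 1))) * (b : ℝ) ^ E' n) ^ 3
            ≤ (b * ((b : ℝ) ^ (E' n + 2) * ((b : ℝ)⁻¹) ^ (E (n + 1))) * (b : ℝ) ^ E' n) ^ 3 := by
              gcongr; linarith
          _ = (b : ℝ) ^ (6 * E' n + 9) * (((b : ℝ)⁻¹) ^ (E (n + 1))) ^ 3 := by ring
          _ ≤ (b : ℝ) ^ (2 * E (n + 1)) * (((b : ℝ)⁻¹) ^ (E (n + 1))) ^ 3 := by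
              gcongr
              · linarith
              · omega
          _ = ((b : ℝ) ^ E (n + 1) * ((b : ℝ)⁻¹) ^ (E (n + 1))) ^ 2 * ((b : ℝ)⁻¹) ^ (E (n + 1)) := by
              ring
          _ = _ := by rw [hbn]; ring

theorem pow_diff (x y : ℝ) (hx : |x| ≤ 1 / 2) (hy : |y| ≤ 1 / 2) (j : ℕ) :
    |x ^ (j + 1) - y ^ (j + 1)| ≤ |x - y| := by
  have key : ∀ j : ℕ, |x ^ (j + 1) - y ^ (j + 1)| ≤ (j + 1) * (1 / 2) ^ j * |x - y| := by
    intro j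
    induction j with
    | zero => simp
    | succ j ih =>
      have e : x ^ (j + 1 + 1) - y ^ (j + 1 + 1)
          = x * (x ^ (j + 1) - y ^ (j + 1)) + (x - y) * y ^ (j + 1) := by ring
      rw [e]
      refine (abs_add_le _ _).trans ?_
      rw [abs_mul, abs_mul, abs_pow]
      have h1 : |x| * |x ^ (j + 1) - y ^ (j + 1)| ≤ 1 / 2 * ((j + 1) * (1 / 2) ^ j * |x - y|) := by
        gcongr
      have h2 : |x - y| * |y| ^ (j + 1) ≤ |x - y| * (1 / 2) ^ (j + 1) := by gcongr
      refine (add_le_add h1 h2).trans (le_of_eq ?_)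
      push_cast
      ring
  refine (key j).trans ?_
  have h : ((j : ℝ) + 1) * (1 / 2) ^ j ≤ 1 := by
    rw [one_div, inv_pow, ← div_eq_mul_inv, div_le_one (by positivity)]
    have := Nat.lt_two_pow_self (n := j)
    exact_mod_cast this
  exact mul_le_of_le_one_left (abs_nonneg _) h

theorem large_q (k : ℕ) (Ψ : ℕ → ℝ) (hpos : ∀ q, 0 < Ψ q) (ζ : ℝ)
    (h : {qp : ℕ × (Fin k → ℤ) | 1 ≤ qp.1 ∧
      ∀ j : Fin k, |(qp.1 : ℝ) * ζ ^ ((j : ℕ) + 1) - (qp.2 j : ℝ)| ≤ Ψ qp.1}.Infinite) (m : ℕ) :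
    ∃ q : ℕ, m ≤ q ∧ ∃ p : Fin k → ℤ,
      ∀ j : Fin k, |(q : ℝ) * ζ ^ ((j : ℕ) + 1) - (p j : ℝ)| ≤ Ψ q := by
  by_contra hcon
  push Not at hcon
  apply h
  have hfin : (⋃ q ∈ Set.Iio m, ({q} : Set ℕ) ×ˢ (Set.univ.pi fun j : Fin k =>
      Set.Icc ⌊(q : ℝ) * ζ ^ ((j : ℕ) + 1) - Ψ q⌋ ⌈(q : ℝ) * ζ ^ ((j : ℕ) + 1) + Ψ q⌉)).Finite := by
    apply Set.Finite.biUnion (Set.finite_Iio m)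
    intro q _
    exact (Set.finite_singleton q).prod (Set.Finite.pi fun j => Set.finite_Icc _ _)
  refine hfin.subset ?_
  rintro ⟨q, p⟩ ⟨_, hp⟩
  have hq : q < m := by
    by_contra hq
    obtain ⟨j, hj⟩ := hcon q (not_lt.1 hq) p
    exact absurd (hp j) (not_le.2 hj)
  simp only [Set.mem_iUnion]
  refine ⟨q, hq, rfl, ?_⟩
  intro j _
  have := abs_le.1 (hp j)
  dsimp only at this
  constructor
  · have h1 : (⌊(q : ℝ) * ζ ^ ((j : ℕ) + 1) - Ψ q⌋ : ℝ) ≤ p j :=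
      (Int.floor_le _).trans (by linarith)
    exact_mod_cast h1
  · have h1 : (p j : ℝ) ≤ ⌈(q : ℝ) * ζ ^ ((j : ℕ) + 1) + Ψ q⌉ :=
      le_trans (by linarith) (Int.le_ceil _)
    exact_mod_cast h1

/-- divisibility of `q` by the `k`-th power of the reduced denominator -/
theorem den_pow_dvd (k : ℕ) (hk : 1 ≤ k) (ζ ε : ℝ) (q : ℕ) (hq : 2 ≤ q) (hζ : |ζ| ≤ 1 / 3)
    (p : Fin k → ℤ) (hε : ε < 1 / (2 * (q : ℝ)))
    (hp : ∀ j : Fin k, |(q : ℝ) * ζ ^ ((j : ℕ) + 1) - (p j : ℝ)| ≤ ε) (r : ℚ)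
    (hr : r = (p ⟨0, hk⟩ : ℚ) / (q : ℚ)) : r.den ^ k ∣ q := by
  have hq2 : (2 : ℝ) ≤ q := by exact_mod_cast hq
  have hq0 : (0 : ℝ) < q := by linarith
  have hrR : (r : ℝ) = (p ⟨0, hk⟩ : ℝ) / q := by rw [hr]; push_cast; rfl
  have hd : (q : ℝ) * |ζ - r| ≤ ε := by
    have h0 := hp ⟨0, hk⟩
    simp only [zero_add, pow_one] at h0
    refine le_trans (le_of_eq ?_) h0
    rw [← abs_of_pos hq0, ← abs_mul, abs_of_pos hq0, hrR]
    congr 1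
    field_simp
  have hε4 : ε ≤ 1 / 4 := hε.le.trans (by
    apply one_div_le_one_div_of_le <;> linarith)
  have hr2 : |(r : ℝ)| ≤ 1 / 2 := by
    have h1 : |(r : ℝ)| ≤ |ζ| + |ζ - r| := by
      have := abs_sub_abs_le_abs_sub (r : ℝ) ζ
      rw [abs_sub_comm] at this; linarith
    have : |ζ - r| ≤ 1 / 8 := by nlinarith
    linarith
  have main : ∀ j : ℕ, 1 ≤ j → j ≤ k → r.den ^ j ∣ q := by
    intro j hj
    induction j, hj using Nat.le_induction with
    | base =>
      intro _
      rw [pow_one]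
      have := Rat.den_dvd (p ⟨0, hk⟩) (q : ℤ)
      rw [Rat.divInt_eq_div] at this
      push_cast at this
      rw [← hr] at this
      exact_mod_cast this
    | succ j hj ih =>
      intro hjk
      obtain ⟨l, hl⟩ := ih (by omega)
      have h1 := hp ⟨j, by omega⟩
      dsimp only at h1
      have h2 := pow_diff ζ r (by linarith) hr2 j
      have hden0 : (0 : ℝ) < r.den := by exact_mod_cast r.den_pos
      have h3 : |(q : ℝ) * (r : ℝ) ^ (j + 1) - p ⟨j, by omega⟩| < 1 / q := by
        have h4 : |(q : ℝ) * ζ ^ (j + 1) - q * (r : ℝ) ^ (j + 1)| ≤ ε := by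
          rw [← mul_sub, abs_mul, abs_of_pos hq0]
          exact le_trans (by gcongr) hd
        have h5 := abs_sub_le ((q : ℝ) * (r : ℝ) ^ (j + 1)) (q * ζ ^ (j + 1)) (p ⟨j, by omega⟩)
        rw [abs_sub_comm (_ * _ : ℝ) (q * ζ ^ (j + 1))] at h5
        have h6 : 1 / (q : ℝ) = 2 * (1 / (2 * q)) := by field_simp
        linarith
      have hqR : (q : ℝ) = (r.den : ℝ) ^ j * l := by exact_mod_cast hl
      have hrn : (r : ℝ) = r.num / r.den := by exact_mod_cast (Rat.num_div_den r).symm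
      have e : (q : ℝ) * (r : ℝ) ^ (j + 1) = l * (r.num : ℝ) ^ (j + 1) / r.den := by
        rw [hqR, hrn, div_pow]; field_simp; ring
      have h7 : |((l * r.num ^ (j + 1) - r.den * p ⟨j, by omega⟩ : ℤ) : ℝ)| < 1 := by
        have e2 : ((l * r.num ^ (j + 1) - r.den * p ⟨j, by omega⟩ : ℤ) : ℝ)
            = r.den * ((q : ℝ) * (r : ℝ) ^ (j + 1) - p ⟨j, by omega⟩) := by
          rw [e]; push_cast; field_simp
        rw [e2, abs_mul, abs_of_pos hden0]
        have hdq : (r.den : ℝ) ≤ q := by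
          have h8 : r.den ∣ q := (dvd_pow_self r.den (by omega)).trans ⟨l, hl⟩
          exact_mod_cast Nat.le_of_dvd (by omega) h8
        calc (r.den : ℝ) * |(q : ℝ) * (r : ℝ) ^ (j + 1) - p ⟨j, by omega⟩|
            < r.den * (1 / q) := by gcongr
          _ ≤ q * (1 / q) := by gcongr
          _ = 1 := by field_simp
      have h8 : (l * r.num ^ (j + 1) - r.den * p ⟨j, by omega⟩ : ℤ) = 0 := by
        rw [← Int.abs_lt_one_iff]; exact_mod_cast h7
      have h9 : (r.den : ℤ) ∣ l * r.num ^ (j + 1) := ⟨p ⟨j, by omega⟩, by linarith⟩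
      have h10 : IsCoprime (r.den : ℤ) (r.num ^ (j + 1)) := by
        apply IsCoprime.pow_right
        rw [Int.isCoprime_iff_gcd_eq_one]
        have := r.reduced
        rw [Int.gcd_comm]
        simpa [Int.gcd, Nat.Coprime] using this
      have h11 : r.den ∣ l := by exact_mod_cast h10.dvd_of_dvd_mul_right h9
      obtain ⟨t, ht⟩ := h11
      exact ⟨t, by rw [hl, ht]; ring⟩
  exact main k hk le_rfl


/-- For `k ≥ 2`, `b ≥ 3`, the `{0,1}`-digit set `K_{J(b)}`, and `Ψ` positive with
`Ψ(x) < 1/(2x)` for large `x` and `Ψ(l·x) ≤ l·Ψ(x)`, the set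
`(𝒦_k(Ψ) \ ⋃_{0<c<1/(b-1)} 𝒦_k(cΨ)) ∩ K_{J(b)}` is uncountable. -/
theorem powers_missing_digit_strong (k b : ℕ) (hk : 2 ≤ k) (hb : 3 ≤ b)
    (Ψ : ℕ → ℝ) (hpos : ∀ q, 0 < Ψ q)
    (hA3 : ∃ N : ℕ, ∀ x : ℕ, N ≤ x → Ψ x < 1 / (2 * (x : ℝ)))
    (hB2 : ∀ l x : ℕ, 1 ≤ l → 1 ≤ x → Ψ (l * x) ≤ (l : ℝ) * Ψ x) :
    ¬ ((Kk k Ψ \ ⋃ c ∈ Ioo (0 : ℝ) (1 / ((b : ℝ) - 1)), Kk k (fun x => c * Ψ x)) ∩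
        baseExpSet b {0, 1}).Countable := by
  intro hcount
  obtain ⟨z, hz⟩ := Set.countable_iff_exists_subset_range.1 hcount
  obtain ⟨N, hN⟩ := hA3
  have hb3 : (3 : ℝ) ≤ b := by exact_mod_cast hb
  have hφ' : ∀ q : ℕ, N + 1 ≤ q → 0 < Ψ (q ^ k) / (q : ℝ) ^ k ∧
      Ψ (q ^ k) / (q : ℝ) ^ k < 1 / (2 * ((q : ℝ) ^ k) ^ 2) := by
    intro q hq
    have hq0 : (0 : ℝ) < q := by exact_mod_cast (by omega : 0 < q)
    have h1 : N ≤ q ^ k := by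
      have : q ≤ q ^ k := Nat.le_self_pow (by omega) q
      omega
    have h2 := hN _ h1
    refine ⟨div_pos (hpos _) (by positivity), ?_⟩
    rw [div_lt_iff₀ (by positivity)]
    refine h2.trans_eq ?_
    push_cast
    field_simp
  have hφ : ∀ q : ℕ, N + 1 ≤ q → 0 < Ψ (q ^ k) / (q : ℝ) ^ k ∧
      Ψ (q ^ k) / (q : ℝ) ^ k < 1 / (2 * (q : ℝ) ^ 4) := by
    intro q hq
    obtain ⟨h1, h2⟩ := hφ' q hq
    refine ⟨h1, h2.trans_le ?_⟩
    have hq1 : (1 : ℝ) ≤ q := by exact_mod_cast (by omega : 1 ≤ q)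
    gcongr
    rw [← pow_mul]
    exact pow_le_pow_right₀ hq1 (by omega)
  obtain ⟨ζ, hmem, hζ3, hav, hio, M, hM⟩ :=
    core b hb (fun q => Ψ (q ^ k) / (q : ℝ) ^ k) (N + 1) hφ z
  have hζ0 : 0 ≤ ζ := hmem.1.1
  have hζabs : |ζ| ≤ 1 / 3 := by rwa [abs_of_nonneg hζ0]
  have hirr : Irrational ζ := by
    rintro ⟨r, rfl⟩
    obtain ⟨q, hq, p, h1, h2⟩ := hio (N + 1 + r.den)
    have h3 := (hφ q (by omega)).2
    have hq1 : (1 : ℝ) ≤ q := by exact_mod_cast (by omega : 1 ≤ q)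
    have hq0 : (0 : ℝ) < q := by linarith
    have hd0 : (0 : ℝ) < r.den := by exact_mod_cast r.den_pos
    have hdq : (r.den : ℝ) ≤ q := by exact_mod_cast (by omega : r.den ≤ q)
    have hrn : (r : ℝ) = r.num / r.den := by exact_mod_cast (Rat.num_div_den r).symm
    have e : (r : ℝ) - p / q = ((r.num * q - p * r.den : ℤ) : ℝ) / (r.den * q) := by
      push_cast; rw [hrn]; field_simp
    have h4 : 0 < ((r.num * q - p * r.den : ℤ) : ℝ) / (r.den * q) := by rw [← e]; linarith
    have h5 : (0 : ℝ) < ((r.num * q - p * r.den : ℤ) : ℝ) := by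
      rcases (div_pos_iff.1 h4) with h | h
      · exact h.1
      · exact absurd h.2 (not_lt.2 (by positivity))
    have h6 : (1 : ℝ) ≤ ((r.num * q - p * r.den : ℤ) : ℝ) := by
      have : (0 : ℤ) < r.num * q - p * r.den := by exact_mod_cast h5
      exact_mod_cast this
    have h7 : 1 / ((q : ℝ) * q) ≤ (r : ℝ) - p / q := by
      rw [e]; gcongr
    have h8 : 1 / (2 * (q : ℝ) ^ 4) ≤ 1 / ((q : ℝ) * q) := by
      apply one_div_le_one_div_of_le (by positivity)
      have : (1 : ℝ) ≤ q * q := by nlinarith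
      nlinarith
    linarith
  have halg : ∀ P : Polynomial ℤ, P ≠ 0 → P.natDegree ≤ k → (Polynomial.aeval ζ) P ≠ 0 := by
    intro P hP hdeg h0
    have h0' : Polynomial.eval ζ (Polynomial.map (algebraMap ℤ ℝ) P) = 0 := by
      rwa [Polynomial.eval_map_algebraMap]
    obtain ⟨A, hA, hL⟩ := Liouville.exists_pos_real_of_irrational_root hirr hP h0'
    obtain ⟨q, hq, p, h1, h2⟩ := hio (N + 1 + ⌈A⌉₊)
    have h3 := (hφ' q (by omega)).2
    have hq1 : (1 : ℝ) ≤ q := by exact_mod_cast (by omega : 1 ≤ q)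
    have hAq : A ≤ q := (Nat.le_ceil A).trans (by exact_mod_cast (by omega : ⌈A⌉₊ ≤ q))
    have h4 := hL p (q - 1)
    rw [show ((q - 1 : ℕ) : ℝ) + 1 = q by rw [Nat.cast_sub (by omega)]; simp] at h4
    push_cast at h4
    rw [abs_of_nonneg (by linarith)] at h4
    have h5 : (q : ℝ) ^ P.natDegree ≤ (q : ℝ) ^ k := pow_le_pow_right₀ hq1 hdeg
    have hqk : (q : ℝ) ≤ (q : ℝ) ^ k := le_self_pow₀ hq1 (by omega)
    have hX : 0 < (q : ℝ) ^ k := by linarith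
    have h6 : (q : ℝ) ^ P.natDegree * ((ζ - p / q) * A)
        ≤ (q : ℝ) ^ k * (1 / (2 * ((q : ℝ) ^ k) ^ 2) * (q : ℝ) ^ k) := by
      have : ζ - p / q ≤ 1 / (2 * ((q : ℝ) ^ k) ^ 2) := h2.trans h3.le
      have h0 : 0 ≤ ζ - p / q := by linarith
      gcongr
      linarith
    have h7 : (q : ℝ) ^ k * (1 / (2 * ((q : ℝ) ^ k) ^ 2) * (q : ℝ) ^ k) = 1 / 2 := by
      field_simp
    linarith
  have hin : ζ ∈ Kk k Ψ := by
    refine ⟨halg, ?_⟩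
    intro hfin
    have hfin2 := hfin.image Prod.fst
    obtain ⟨C, hC⟩ := hfin2.bddAbove
    obtain ⟨q, hq, p, h1, h2⟩ := hio (N + 1 + C + 2)
    have hq1 : (1 : ℝ) ≤ q := by exact_mod_cast (by omega : 1 ≤ q)
    have hq0 : (0 : ℝ) < q := by linarith
    have hX : 0 < (q : ℝ) ^ k := by positivity
    have hle : q ≤ q ^ k := Nat.le_self_pow (by omega) q
    have : q ^ k ≤ C := by
      apply hC
      refine ⟨(q ^ k, fun j => (p : ℤ) ^ ((j : ℕ) + 1) * (q : ℤ) ^ (k - ((j : ℕ) + 1))),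
        ⟨by dsimp only; omega, ?_⟩, rfl⟩
      intro j
      dsimp only
      have hj := j.2
      have hpq : |(p : ℝ) / q| ≤ 1 / 2 := by
        rw [abs_of_nonneg (by positivity)]; linarith
      have h3 := pow_diff ζ ((p : ℝ) / q) (by linarith) hpq j
      rw [abs_of_nonneg (show 0 ≤ ζ - (p : ℝ) / q by linarith)] at h3
      have e : ((q ^ k : ℕ) : ℝ) * ζ ^ ((j : ℕ) + 1) -
          (((p : ℤ) ^ ((j : ℕ) + 1) * (q : ℤ) ^ (k - ((j : ℕ) + 1)) : ℤ) : ℝ)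
          = (q : ℝ) ^ k * (ζ ^ ((j : ℕ) + 1) - ((p : ℝ) / q) ^ ((j : ℕ) + 1)) := by
        push_cast
        have : (q : ℝ) ^ k = (q : ℝ) ^ (k - ((j : ℕ) + 1)) * (q : ℝ) ^ ((j : ℕ) + 1) := by
          rw [← pow_add]; congr 1; omega
        rw [this, div_pow]
        field_simp
      rw [e, abs_mul, abs_of_pos hX]
      rw [le_div_iff₀ hX] at h2
      nlinarith
    omega
  have hout : ζ ∉ ⋃ c ∈ Ioo (0 : ℝ) (1 / ((b : ℝ) - 1)), Kk k (fun x => c * Ψ x) := by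
    simp only [Set.mem_iUnion, not_exists]
    rintro c ⟨hc0, hc1⟩ ⟨_, hinf⟩
    have hc12 : c < 1 := hc1.trans_le (by rw [div_le_one (by linarith)]; linarith)
    -- threshold for the denominators
    obtain ⟨D, hD⟩ : ∃ D : ℕ, ∀ d : ℕ, D ≤ d → c < 1 / ((b : ℝ) - 1) * (1 - 2 / (d : ℝ)) := by
      have ht : Tendsto (fun d : ℕ => 1 / ((b : ℝ) - 1) * (1 - 2 / (d : ℝ))) atTop
          (nhds (1 / ((b : ℝ) - 1) * (1 - 0))) :=
        (tendsto_const_nhds.sub (tendsto_const_div_atTop_nhds_zero_nat 2)).const_mul _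
      rw [sub_zero, mul_one] at ht
      exact eventually_atTop.1 (ht.eventually_const_lt hc1)
    obtain ⟨η, hη0, hη⟩ : ∃ η : ℝ, 0 < η ∧ ∀ r : ℚ, r.den ≤ M + N + D + 1 → η ≤ dist ζ r := by
      have h1 := hirr.eventually_forall_le_dist_cast_rat_of_den_le (M + N + D + 1)
      have h2 := (h1.filter_mono nhdsWithin_le_nhds : ∀ᶠ ε in nhdsWithin (0 : ℝ) (Set.Ioi 0), _)
      obtain ⟨η, h3, h4⟩ := (h2.and self_mem_nhdsWithin).exists
      exact ⟨η, h4, h3⟩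
    obtain ⟨q, hq, p, hp⟩ := large_q k (fun x => c * Ψ x) (fun q => mul_pos hc0 (hpos q)) ζ hinf
      (N + 2 + ⌈1 / η⌉₊)
    have hq2 : (2 : ℝ) ≤ q := by exact_mod_cast (by omega : 2 ≤ q)
    have hq0 : (0 : ℝ) < q := by linarith
    have hΨq := hN q (by omega)
    have hε : c * Ψ q < 1 / (2 * (q : ℝ)) := by
      have := hpos q
      nlinarith
    obtain ⟨r, hr⟩ : ∃ r : ℚ, r = (p ⟨0, by omega⟩ : ℚ) / (q : ℚ) := ⟨_, rfl⟩
    have hdvd := den_pow_dvd k (by omega) ζ (c * Ψ q) q (by omega) hζabs p hε hp r hr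
    have hrR : (r : ℝ) = (p ⟨0, by omega⟩ : ℝ) / q := by rw [hr]; push_cast; rfl
    have hd : (q : ℝ) * |ζ - r| ≤ c * Ψ q := by
      have h0 := hp ⟨0, by omega⟩
      simp only [zero_add, pow_one] at h0
      refine le_trans (le_of_eq ?_) h0
      rw [← abs_of_pos hq0, ← abs_mul, abs_of_pos hq0, hrR]
      congr 1
      field_simp
    have hbig : M + N + D + 1 < r.den := by
      by_contra hcon
      have h1 := hη r (not_lt.1 hcon)
      rw [Real.dist_eq] at h1
      have h2 : 1 / η ≤ q := (Nat.le_ceil _).trans (by exact_mod_cast (by omega : ⌈1 / η⌉₊ ≤ q))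
      rw [div_le_iff₀ hη0] at h2
      have h3 : 1 / (2 * (q : ℝ)) ≤ 1 / 4 := by
        apply one_div_le_one_div_of_le <;> linarith
      nlinarith
    have hlow := hM r (by omega)
    have hDr := hD r.den (by omega)
    obtain ⟨l, hl⟩ := hdvd
    have hl1 : 1 ≤ l := by
      rcases Nat.eq_zero_or_pos l with h | h
      · rw [h] at hl; omega
      · exact h
    have hlR : (0 : ℝ) < l := by exact_mod_cast hl1
    have hden0 : (0 : ℝ) < (r.den : ℝ) ^ k := by
      have : (0 : ℝ) < r.den := by exact_mod_cast r.den_pos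
      positivity
    have hΨl := hB2 l (r.den ^ k) hl1 (Nat.one_le_pow _ _ r.den_pos)
    rw [mul_comm l, ← hl] at hΨl
    have hqR : (q : ℝ) = (r.den : ℝ) ^ k * l := by exact_mod_cast hl
    have h1 : (r.den : ℝ) ^ k * |ζ - r| ≤ c * Ψ (r.den ^ k) := by
      have h2 : (l : ℝ) * ((r.den : ℝ) ^ k * |ζ - r|) ≤ l * (c * Ψ (r.den ^ k)) := by
        calc (l : ℝ) * ((r.den : ℝ) ^ k * |ζ - r|) = q * |ζ - r| := by rw [hqR]; ring
          _ ≤ c * Ψ q := hd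
          _ ≤ c * (l * Ψ (r.den ^ k)) := by gcongr
          _ = _ := by ring
      exact le_of_mul_le_mul_left h2 hlR
    have h3 : |ζ - r| ≤ Ψ (r.den ^ k) / (r.den : ℝ) ^ k * c := by
      rw [div_mul_eq_mul_div, le_div_iff₀ hden0]; linarith
    have h4 : 0 < Ψ (r.den ^ k) / (r.den : ℝ) ^ k := div_pos (hpos _) hden0
    have h5 := mul_lt_mul_of_pos_left hDr h4
    have h6 : Ψ (r.den ^ k) / (r.den : ℝ) ^ k * (1 / ((b : ℝ) - 1) * (1 - 2 / (r.den : ℝ)))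
        = Ψ (r.den ^ k) / (r.den : ℝ) ^ k / ((b : ℝ) - 1) * (1 - 2 / (r.den : ℝ)) := by ring
    linarith
  obtain ⟨n, hn⟩ := hz ⟨⟨hin, hout⟩, hmem⟩
  exact hav n hn.symm
end

section
/- Let b ≥ 3 be an integer, let K_{J(b)} be the set of numbers in [0,1] whose base-b expansion contains only the digits 0 and 1, and let γ = (1+√5)/2 be the golden ratio. Let Ψ : ℕ → (0,∞) satisfy Ψ(l·x) ≤ l·Ψ(x) for all positive integers l, x and Ψ(x) < x^{−γ−ε} for all sufficiently large x, for some ε > 0. Then the set (𝒦₁(Ψ) \ ⋃_{0<c<1/(b−1)} 𝒦₁(cΨ)) ∩ K_{J(b)} is uncountable. -/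
open Filter Set

/-- `K1 Ψ` is the set of irrational `ζ` such that `|q·ζ - p| ≤ Ψ q` holds for infinitely
many pairs `(q, p) ∈ ℕ × ℤ` with `q ≥ 1`. -/
def K1 (Ψ : ℕ → ℝ) : Set ℝ :=
  {ζ : ℝ | Irrational ζ ∧
    {qp : ℕ × ℤ | 1 ≤ qp.1 ∧ |(qp.1 : ℝ) * ζ - (qp.2 : ℝ)| ≤ Ψ qp.1}.Infinite}

namespace MD

/-- integer prefix of the digit string -/
def pre (b : ℕ) (D : ℕ → ℕ) : ℕ → ℕ
  | 0 => 0
  | n + 1 => b * pre b D n + D n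

/-- value of the digit string -/
noncomputable def val (b : ℕ) (D : ℕ → ℕ) : ℝ := ∑' n : ℕ, (D n : ℝ) / (b : ℝ) ^ (n + 1)

lemma geo (b : ℕ) (hb : 3 ≤ b) :
    HasSum (fun n : ℕ => 1 / (b : ℝ) ^ (n + 1)) (1 / ((b : ℝ) - 1)) := by
  have hb' : (3 : ℝ) ≤ b := by exact_mod_cast hb
  have h := (hasSum_geometric_of_lt_one (r := (b : ℝ)⁻¹) (by positivity)
    (inv_lt_one_of_one_lt₀ (by linarith))).mul_left ((b : ℝ)⁻¹)
  have h2 : (1 : ℝ) - (b : ℝ)⁻¹ ≠ 0 := by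
    have : (b : ℝ)⁻¹ < 1 := inv_lt_one_of_one_lt₀ (by linarith)
    linarith
  have h3 : (b : ℝ) - 1 ≠ 0 := by linarith
  have e1 : (fun n : ℕ => 1 / (b : ℝ) ^ (n + 1)) = fun i => (b : ℝ)⁻¹ * (b : ℝ)⁻¹ ^ i := by
    funext n
    rw [pow_succ, one_div, mul_inv, inv_pow, mul_comm]
  have e2 : 1 / ((b : ℝ) - 1) = (b : ℝ)⁻¹ * (1 - (b : ℝ)⁻¹)⁻¹ := by
    rw [← mul_inv, mul_sub, mul_inv_cancel₀ (by linarith), mul_one, one_div]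
  rw [e1, e2]
  exact h

lemma term_le (b : ℕ) (D : ℕ → ℕ) (hD : ∀ n, D n ≤ 1) (n : ℕ) :
    (D n : ℝ) / (b : ℝ) ^ (n + 1) ≤ 1 / (b : ℝ) ^ (n + 1) := by
  have : (D n : ℝ) ≤ 1 := by exact_mod_cast hD n
  gcongr

lemma summ (b : ℕ) (hb : 3 ≤ b) (D : ℕ → ℕ) (hD : ∀ n, D n ≤ 1) :
    Summable (fun n : ℕ => (D n : ℝ) / (b : ℝ) ^ (n + 1)) :=
  Summable.of_nonneg_of_le (fun n => by positivity) (term_le b D hD) (geo b hb).summable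

lemma val_nonneg (b : ℕ) (D : ℕ → ℕ) : 0 ≤ val b D :=
  tsum_nonneg fun n => by positivity

lemma val_le (b : ℕ) (hb : 3 ≤ b) (D : ℕ → ℕ) (hD : ∀ n, D n ≤ 1) :
    val b D ≤ 1 / ((b : ℝ) - 1) := by
  rw [← (geo b hb).tsum_eq]
  exact (summ b hb D hD).tsum_le_tsum (term_le b D hD) (geo b hb).summable

lemma val_succ (b : ℕ) (hb : 3 ≤ b) (D : ℕ → ℕ) (hD : ∀ n, D n ≤ 1) :
    (b : ℝ) * val b D = D 0 + val b (fun j => D (1 + j)) := by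
  have hb' : (b : ℝ) ≠ 0 := by
    have : b ≠ 0 := by omega
    exact_mod_cast this
  unfold val
  rw [(summ b hb D hD).tsum_eq_zero_add, mul_add, ← tsum_mul_left]
  congr 1
  · simp; field_simp
  · apply tsum_congr
    intro n
    dsimp only
    rw [add_comm 1 n]
    field_simp
    ring

lemma val_shift (b : ℕ) (hb : 3 ≤ b) (D : ℕ → ℕ) (hD : ∀ n, D n ≤ 1) (n : ℕ) :
    (b : ℝ) ^ n * val b D = pre b D n + val b (fun j => D (n + j)) := by
  induction n with
  | zero => simp [pre]
  | succ n ih =>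
    have := val_succ b hb (fun j => D (n + j)) (fun j => hD _)
    rw [pow_succ, mul_comm _ (b : ℝ), mul_assoc, ih, mul_add, this]
    simp only [pre, add_assoc]
    push_cast
    ring_nf

lemma pre_inj (b : ℕ) (hb : 3 ≤ b) (D E : ℕ → ℕ) (hD : ∀ n, D n ≤ 1) (hE : ∀ n, E n ≤ 1)
    (h : val b D = val b E) : D = E := by
  have hb' : (3 : ℝ) ≤ b := by exact_mod_cast hb
  have hlt : 1 / ((b : ℝ) - 1) < 1 := by
    rw [div_lt_one (by linarith)]; linarith
  have key : ∀ n, pre b D n = pre b E n := by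
    intro n
    have h1 := val_shift b hb D hD n
    have h2 := val_shift b hb E hE n
    rw [h, h2] at h1
    have a1 := val_nonneg b (fun j => D (n + j))
    have a2 := val_nonneg b (fun j => E (n + j))
    have a3 := val_le b hb (fun j => D (n + j)) (fun j => hD _)
    have a4 := val_le b hb (fun j => E (n + j)) (fun j => hE _)
    have c1 : (pre b D n : ℝ) < pre b E n + 1 := by linarith
    have c2 : (pre b E n : ℝ) < pre b D n + 1 := by linarith
    have c1' : pre b D n < pre b E n + 1 := by exact_mod_cast c1
    have c2' : pre b E n < pre b D n + 1 := by exact_mod_cast c2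
    omega
  funext n
  have h1 := key (n + 1)
  simp only [pre, key n] at h1
  omega

lemma pre_zero (b : ℕ) (e : ℕ → ℕ) (M : ℕ) (h : ∀ j < M, e j = 0) : pre b e M = 0 := by
  induction M with
  | zero => rfl
  | succ M ih => simp [pre, ih (fun j hj => h j (by omega)), h M (by omega)]

lemma pre_ones (b : ℕ) (e : ℕ → ℕ) (M L : ℕ) (h : ∀ j < M, e j = 0)
    (h1 : ∀ j < L, e (M + j) = 1) : ((b : ℝ) - 1) * pre b e (M + L) + 1 = (b : ℝ) ^ L := by
  induction L with
  | zero => simp [pre_zero b e M h]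
  | succ L ih =>
    have := ih (fun j hj => h1 j (by omega))
    rw [← add_assoc, pre, h1 L (by omega), pow_succ, ← this]
    push_cast; ring

lemma pre_one_zeros (b : ℕ) (e : ℕ → ℕ) (M L : ℕ) (h : ∀ j < M, e j = 0)
    (h1 : e M = 1) (h2 : ∀ j < L, e (M + 1 + j) = 0) : pre b e (M + 1 + L) = b ^ L := by
  induction L with
  | zero => simp [pre, pre_zero b e M h, h1]
  | succ L ih =>
    rw [← add_assoc, pre, ih (fun j hj => h2 j (by omega)), h2 L (by omega), pow_succ]
    ring

lemma pre_coprime (b : ℕ) (D : ℕ → ℕ) (n m : ℕ) (h : D n = 1) :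
    Nat.Coprime (pre b D (n + 1)) (b ^ m) := by
  apply Nat.Coprime.pow_right
  rw [pre, h]
  simp

/-- block estimate -/
lemma block (b : ℕ) (hb : 3 ≤ b) (s : ℝ) (M L : ℕ) (hM : 1 ≤ M)
    (hlo : 1 / ((b : ℝ) ^ M * ((b : ℝ) - 1)) ≤ s)
    (hhi : s < b / ((b : ℝ) ^ M * ((b : ℝ) - 1))) :
    ∃ f : ℕ → ℕ, (∀ j, f j ≤ 1) ∧ ∀ e : ℕ → ℕ, (∀ j, e j ≤ 1) → (∀ j < M + L, e j = f j) →
      val b e ≤ s ∧ (1 - 1 / (b : ℝ) ^ L) / (1 + 1 / (b : ℝ) ^ L) * (s / ((b : ℝ) - 1)) ≤ val b e := by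
  have hb' : (3 : ℝ) ≤ b := by exact_mod_cast hb
  have hb1 : (0 : ℝ) < b - 1 := by linarith
  have hBM : (0 : ℝ) < (b : ℝ) ^ M := by positivity
  have hBL : (0 : ℝ) < (b : ℝ) ^ L := by positivity
  have hBL1 : (1 : ℝ) ≤ (b : ℝ) ^ L := one_le_pow₀ (by linarith)
  by_cases hs : s ≤ (1 + 1 / (b : ℝ) ^ L) / (b : ℝ) ^ M
  · refine ⟨fun j => if j < M then 0 else 1, fun j => by dsimp; split_ifs <;> omega, ?_⟩
    intro e he hef
    have hp := pre_ones b e M L (fun j hj => by rw [hef j (by omega)]; simp [hj])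
      (fun j hj => by rw [hef _ (by omega)]; simp)
    have hv := val_shift b hb e he (M + L)
    have z0 := val_nonneg b (fun j => e (M + L + j))
    have z1 := val_le b hb (fun j => e (M + L + j)) (fun j => he _)
    rw [pow_add] at hv
    have hp' : (pre b e (M + L) : ℝ) = ((b : ℝ) ^ L - 1) / ((b : ℝ) - 1) := by
      field_simp; linarith
    rw [hp'] at hv
    set z := val b (fun j => e (M + L + j))
    have hve : val b e = (((b : ℝ) ^ L - 1) / ((b : ℝ) - 1) + z) / ((b : ℝ) ^ M * (b : ℝ) ^ L) := by
      rw [← hv]; field_simp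
    constructor
    · refine le_trans ?_ hlo
      rw [hve]
      calc _ ≤ (((b : ℝ) ^ L - 1) / ((b : ℝ) - 1) + 1 / ((b : ℝ) - 1)) / ((b : ℝ) ^ M * (b : ℝ) ^ L) := by
            gcongr
        _ = _ := by field_simp; ring
    · rw [hve]
      have h1 : 0 ≤ (1 - 1 / (b : ℝ) ^ L) := by
        rw [sub_nonneg, div_le_one hBL]; exact hBL1
      calc (1 - 1 / (b : ℝ) ^ L) / (1 + 1 / (b : ℝ) ^ L) * (s / ((b : ℝ) - 1))
          ≤ (1 - 1 / (b : ℝ) ^ L) / (1 + 1 / (b : ℝ) ^ L) *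
            (((1 + 1 / (b : ℝ) ^ L) / (b : ℝ) ^ M) / ((b : ℝ) - 1)) := by gcongr
        _ = (((b : ℝ) ^ L - 1) / ((b : ℝ) - 1) + 0) / ((b : ℝ) ^ M * (b : ℝ) ^ L) := by
            field_simp; ring
        _ ≤ _ := by gcongr
  · push Not at hs
    obtain ⟨M', rfl⟩ : ∃ M', M = M' + 1 := ⟨M - 1, by omega⟩
    refine ⟨fun j => if j = M' then 1 else 0, fun j => by dsimp; split_ifs <;> omega, ?_⟩
    intro e he hef
    have hp := pre_one_zeros b e M' L (fun j hj => by rw [hef j (by omega)]; simp; omega)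
      (by rw [hef _ (by omega)]; simp) (fun j hj => by rw [hef _ (by omega)]; simp; omega)
    have hv := val_shift b hb e he (M' + 1 + L)
    have z0 := val_nonneg b (fun j => e (M' + 1 + L + j))
    have z1 := val_le b hb (fun j => e (M' + 1 + L + j)) (fun j => he _)
    rw [pow_add, hp] at hv
    push_cast at hv
    set z := val b (fun j => e (M' + 1 + L + j))
    set B := (b : ℝ) ^ (M' + 1)
    have hve : val b e = ((b : ℝ) ^ L + z) / (B * (b : ℝ) ^ L) := by
      rw [← hv]; field_simp
    have z2 : z ≤ 1 := z1.trans (by rw [div_le_one hb1]; linarith)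
    constructor
    · refine le_trans ?_ hs.le
      rw [hve]
      calc _ ≤ ((b : ℝ) ^ L + 1) / (B * (b : ℝ) ^ L) := by gcongr
        _ = _ := by field_simp
    · have hs0 : 0 < s := lt_trans (by positivity) hs
      calc (1 - 1 / (b : ℝ) ^ L) / (1 + 1 / (b : ℝ) ^ L) * (s / ((b : ℝ) - 1))
          ≤ 1 * (s / ((b : ℝ) - 1)) := by
            have : 0 < 1 / (b : ℝ) ^ L := by positivity
            gcongr
            rw [div_le_one (by positivity)]; linarith
        _ ≤ 1 * ((b / (B * ((b : ℝ) - 1))) / ((b : ℝ) - 1)) := by gcongr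
        _ ≤ 1 / B := by
            rw [one_mul, div_div, div_le_div_iff₀ (by positivity) hBM]
            have : (b : ℝ) ≤ (b - 1) * (b - 1) := by nlinarith
            nlinarith
        _ = ((b : ℝ) ^ L + 0) / (B * (b : ℝ) ^ L) := by field_simp; simp
        _ ≤ _ := by rw [hve]; gcongr

end MD

namespace MD

lemma unbounded_of_infinite (F : ℕ → ℝ) (ζ : ℝ)
    (h : {qp : ℕ × ℤ | 1 ≤ qp.1 ∧ |(qp.1 : ℝ) * ζ - (qp.2 : ℝ)| ≤ F qp.1}.Infinite) (B : ℕ) :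
    ∃ q : ℕ, ∃ p : ℤ, B ≤ q ∧ |(q : ℝ) * ζ - p| ≤ F q := by
  by_contra hcon
  push Not at hcon
  apply h
  refine Set.Finite.subset (Set.Finite.biUnion (Set.finite_Iio B) (t := fun q =>
    ({q} : Set ℕ) ×ˢ (Set.Icc ⌊(q : ℝ) * ζ - F q⌋ ⌈(q : ℝ) * ζ + F q⌉ : Set ℤ))
    (fun q _ => (Set.finite_singleton q).prod (Set.finite_Icc _ _))) ?_
  rintro ⟨q, p⟩ ⟨_, h2⟩
  dsimp only at h2
  have hq : q < B := by
    by_contra hq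
    exact absurd h2 (not_le.mpr (hcon q p (by omega)))
  rw [abs_le] at h2
  simp only [Set.mem_iUnion]
  refine ⟨q, hq, rfl, ?_, ?_⟩
  · have h3 : ((⌊(q : ℝ) * ζ - F q⌋ : ℤ) : ℝ) ≤ p := (Int.floor_le _).trans (by linarith)
    exact_mod_cast h3
  · have h3 : (p : ℝ) ≤ (⌈(q : ℝ) * ζ + F q⌉ : ℤ) := le_trans (by linarith) (Int.le_ceil _)
    exact_mod_cast h3

lemma ne_step (Q P q : ℕ) (p : ℤ) (ζ α β : ℝ) (hne : (q : ℤ) * P ≠ p * Q)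
    (h1 : |(q : ℝ) * ζ - p| ≤ α) (h2 : |(Q : ℝ) * ζ - P| ≤ β) : 1 ≤ Q * α + q * β := by
  have h3 : (1 : ℤ) ≤ |(q : ℤ) * P - p * Q| := Int.one_le_abs (sub_ne_zero.mpr hne)
  have h4 : (1 : ℝ) ≤ |(q : ℝ) * P - p * Q| := by exact_mod_cast h3
  have h5 : (q : ℝ) * P - p * Q = Q * (q * ζ - p) - q * (Q * ζ - P) := by ring
  rw [h5] at h4
  calc (1 : ℝ) ≤ _ := h4
    _ ≤ |(Q : ℝ) * (q * ζ - p)| + |(q : ℝ) * (Q * ζ - P)| := abs_sub _ _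
    _ = Q * |(q : ℝ) * ζ - p| + q * |(Q : ℝ) * ζ - P| := by
        rw [abs_mul, abs_mul, Nat.abs_cast, Nat.abs_cast]
    _ ≤ _ := by gcongr

lemma eq_step (Ψ : ℕ → ℝ) (hB2 : ∀ l x : ℕ, 1 ≤ l → 1 ≤ x → Ψ (l * x) ≤ (l : ℝ) * Ψ x)
    (Q P q : ℕ) (p : ℤ) (ζ c : ℝ) (hQ : 1 ≤ Q) (hq : 1 ≤ q) (hc : 0 < c) (hcop : Nat.Coprime P Q)
    (h : (q : ℤ) * P = p * Q) (hlow : c * Ψ Q < Q * ζ - P) : c * Ψ q < |(q : ℝ) * ζ - p| := by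
  have hd : (Q : ℤ) ∣ q * P := ⟨p, by rw [h]; ring⟩
  have hd' : Q ∣ q * P := by exact_mod_cast hd
  obtain ⟨l, rfl⟩ := hcop.symm.dvd_of_dvd_mul_right hd'
  have hl : 1 ≤ l := by
    rcases Nat.eq_zero_or_pos l with h0 | h0
    · simp [h0] at hq
    · exact h0
  have hp : p = l * P := by
    have hQ0 : (Q : ℤ) ≠ 0 := by exact_mod_cast (by omega : Q ≠ 0)
    apply mul_right_cancel₀ hQ0
    rw [← h]; push_cast; ring
  have hl0 : (0 : ℝ) < l := by exact_mod_cast hl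
  have := hB2 l Q hl hQ
  rw [mul_comm Q l, hp]
  push_cast
  calc c * Ψ (l * Q) ≤ c * (l * Ψ Q) := by gcongr
    _ = l * (c * Ψ Q) := by ring
    _ < l * (Q * ζ - P) := by gcongr
    _ = (l : ℝ) * Q * ζ - l * P := by ring
    _ ≤ _ := le_abs_self _

lemma core (Ψ : ℕ → ℝ) (hpos : ∀ q, 0 < Ψ q)
    (hB2 : ∀ l x : ℕ, 1 ≤ l → 1 ≤ x → Ψ (l * x) ≤ (l : ℝ) * Ψ x)
    (g η C c : ℝ) (hg : 1 < g) (hη : 0 < η) (hgη : g * (g - 1) = 1 + η) (hC : 0 < C)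
    (hc : 0 < c) (hc2 : c ≤ 1 / 2)
    (N : ℕ) (hdecay : ∀ x : ℕ, N ≤ x → Ψ x < (x : ℝ) ^ (-g))
    (Q P : ℕ → ℕ) (hQ : StrictMono Q) (hQ1 : ∀ k, 1 ≤ Q k) (ζ : ℝ)
    (hcop : ∀ k, 1 ≤ k → Nat.Coprime (P k) (Q k))
    (hup : ∀ k, |(Q k : ℝ) * ζ - P k| ≤ Ψ (Q k))
    (hlow : ∀ᶠ k in atTop, c * Ψ (Q k) < Q k * ζ - P k)
    (hgrow : ∀ k, (Q (k + 1) : ℝ) * Ψ (Q k) ≤ C * (Q k : ℝ) ^ (1 + η / 2)) :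
    ¬ {qp : ℕ × ℤ | 1 ≤ qp.1 ∧ |(qp.1 : ℝ) * ζ - (qp.2 : ℝ)| ≤ c * Ψ qp.1}.Infinite := by
  intro hinf
  have hQt : Tendsto (fun k => (Q k : ℝ)) atTop atTop :=
    tendsto_natCast_atTop_atTop.comp hQ.tendsto_atTop
  have e1 : ∀ᶠ k in atTop, (2 : ℝ) ^ g * C < (Q k : ℝ) ^ (η / 2) :=
    ((tendsto_rpow_atTop (by positivity)).comp hQt).eventually_gt_atTop _
  have e2 : ∀ᶠ k in atTop, (2 : ℝ) < (Q k : ℝ) ^ (g - 1) :=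
    ((tendsto_rpow_atTop (by linarith)).comp hQt).eventually_gt_atTop _
  have e3 : ∀ᶠ k in atTop, N ≤ Q k := hQ.tendsto_atTop.eventually_ge_atTop N
  obtain ⟨K, hK⟩ := eventually_atTop.mp (((e1.and e2).and (e3.and hlow)).and (eventually_ge_atTop 1))
  obtain ⟨q, p, hqK, hqp⟩ := unbounded_of_infinite (fun q => c * Ψ q) ζ hinf (Q K)
  -- choose k
  have hex : ∃ k, q < Q k := (hQ.tendsto_atTop.eventually_gt_atTop q).exists
  obtain ⟨k, hkK, hk1, hk2⟩ : ∃ k, K ≤ k ∧ Q k ≤ q ∧ q < Q (k + 1) := by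
    classical
    have h1 := Nat.find_spec hex
    have h2 : K < Nat.find hex := by
      by_contra hcon
      have := hQ.monotone (not_lt.mp hcon)
      omega
    refine ⟨Nat.find hex - 1, by omega, ?_, ?_⟩
    · exact not_lt.mp (Nat.find_min hex (by omega))
    · rwa [Nat.sub_add_cancel (by omega)]
  obtain ⟨⟨⟨a1, a2⟩, a3, a4⟩, a5⟩ := hK k hkK
  obtain ⟨⟨⟨b1, b2⟩, b3, b4⟩, b5⟩ := hK (k + 1) (by omega)
  have hq1 : 1 ≤ q := (hQ1 k).trans hk1
  have n1 : (q : ℤ) * P k ≠ p * Q k := fun h => absurd hqp (not_le.mpr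
    (eq_step Ψ hB2 (Q k) (P k) q p ζ c (hQ1 k) hq1 hc (hcop k a5) h a4))
  have n2 : (q : ℤ) * P (k + 1) ≠ p * Q (k + 1) := fun h => absurd hqp (not_le.mpr
    (eq_step Ψ hB2 _ _ q p ζ c (hQ1 _) hq1 hc (hcop _ b5) h b4))
  have s1 := ne_step _ _ _ _ _ _ _ n1 hqp (hup k)
  have s2 := ne_step _ _ _ _ _ _ _ n2 hqp (hup (k + 1))
  have hqpos : (0 : ℝ) < q := by exact_mod_cast hq1
  have hQpos : (0 : ℝ) < Q k := by exact_mod_cast hQ1 k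
  have hQpos' : (0 : ℝ) < Q (k + 1) := by exact_mod_cast hQ1 (k + 1)
  have dq := hdecay q (a3.trans hk1)
  have dQ := hdecay _ a3
  have dQ' := hdecay _ b3
  have hkq : (Q k : ℝ) ≤ q := by exact_mod_cast hk1
  have hqk : (q : ℝ) ≤ Q (k + 1) := by exact_mod_cast hk2.le
  have hΨq := hpos q
  have hΨ := hpos (Q k)
  have hΨ' := hpos (Q (k + 1))
  have hone : ∀ x : ℝ, 0 < x → x * x ^ (-g) * x ^ (g - 1) = 1 := by
    intro x hx
    nth_rewrite 1 [← Real.rpow_one x]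
    rw [← Real.rpow_add hx, ← Real.rpow_add hx]
    ring_nf
    simp
  -- first
  have t1 : 1 / 2 ≤ q * Ψ (Q k) := by
    have h1 : (q : ℝ) * (q : ℝ) ^ (-g) ≤ 1 := by
      have h := hone q hqpos
      have h' : (1 : ℝ) ≤ (q : ℝ) ^ (g - 1) :=
        Real.one_le_rpow (by exact_mod_cast hq1) (by linarith)
      have h0 : 0 < (q : ℝ) * (q : ℝ) ^ (-g) := by positivity
      nlinarith
    have h2 : (Q k : ℝ) * Ψ q ≤ 1 := le_trans (by gcongr) h1
    nlinarith
  have t2 : 1 ≤ Q (k + 1) * Ψ q := by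
    have h1 : (Q (k + 1) : ℝ) * (Q (k + 1) : ℝ) ^ (-g) ≤ 1 / 2 := by
      have h := hone _ hQpos'
      have h0 : 0 < (Q (k + 1) : ℝ) * (Q (k + 1) : ℝ) ^ (-g) := by positivity
      nlinarith
    have h2 : (q : ℝ) * Ψ (Q (k + 1)) ≤ 1 / 2 := le_trans (by gcongr) h1
    have h3 : (0 : ℝ) < Q (k + 1) * Ψ q := by positivity
    nlinarith
  -- q^g ≤ Q (k+1)
  have t3 : (q : ℝ) ^ g ≤ Q (k + 1) := by
    have h1 : 1 ≤ Q (k + 1) * (q : ℝ) ^ (-g) := t2.trans (by gcongr)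
    rw [Real.rpow_neg hqpos.le, ← div_eq_mul_inv, le_div_iff₀ (by positivity)] at h1
    linarith
  set X := 1 / Ψ (Q k) with hX
  have hXpos : 0 < X := by positivity
  have hXQ : (Q k : ℝ) ^ g ≤ X := by
    rw [hX, le_div_iff₀ hΨ]
    rw [Real.rpow_neg hQpos.le] at dQ
    have h0 : 0 < (Q k : ℝ) ^ g := by positivity
    calc _ ≤ (Q k : ℝ) ^ g * ((Q k : ℝ) ^ g)⁻¹ := by gcongr
      _ = 1 := by field_simp
  have hXq : X / 2 ≤ q := by
    rw [hX, div_div, div_le_iff₀ (by positivity)]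
    linarith
  have t4 : (X / 2) ^ g ≤ C * (Q k : ℝ) ^ (1 + η / 2) * X := by
    calc (X / 2) ^ g ≤ (q : ℝ) ^ g := by gcongr
      _ ≤ Q (k + 1) := t3
      _ = Q (k + 1) * Ψ (Q k) * X := by rw [hX]; field_simp
      _ ≤ _ := mul_le_mul_of_nonneg_right (hgrow k) hXpos.le
  rw [Real.div_rpow hXpos.le (by norm_num)] at t4
  have hXg : X ^ g = X ^ (g - 1) * X := by
    nth_rewrite 3 [← Real.rpow_one X]
    rw [← Real.rpow_add hXpos]; ring_nf
  have t5 : X ^ (g - 1) ≤ 2 ^ g * C * (Q k : ℝ) ^ (1 + η / 2) := by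
    rw [hXg, div_le_iff₀ (by positivity)] at t4
    apply le_of_mul_le_mul_right _ hXpos
    linarith
  have t6 : (Q k : ℝ) ^ (η / 2) * (Q k : ℝ) ^ (1 + η / 2) ≤ X ^ (g - 1) := by
    calc _ = ((Q k : ℝ) ^ g) ^ (g - 1) := by
          rw [← Real.rpow_mul hQpos.le, ← Real.rpow_add hQpos, hgη]; ring_nf
      _ ≤ _ := by gcongr
  have t7 := t6.trans t5
  have := le_of_mul_le_mul_right t7 (by positivity)
  linarith

end MD

namespace MD

lemma exists_digits (n : ℕ → ℕ) (hn : StrictMono n) (F : ℕ → ℕ → ℕ) (hF : ∀ k j, F k j ≤ 1) :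
    ∃ D : ℕ → ℕ, (∀ i, D i ≤ 1) ∧ ∀ k j, n k + j < n (k + 1) → D (n k + j) = F k j := by
  classical
  refine ⟨fun i => F (Nat.findGreatest (fun k => n k ≤ i) i)
    (i - n (Nat.findGreatest (fun k => n k ≤ i) i)), fun i => hF _ _, ?_⟩
  intro k j hj
  have hk : Nat.findGreatest (fun k' => n k' ≤ n k + j) (n k + j) = k := by
    rw [Nat.findGreatest_eq_iff]
    refine ⟨(hn.id_le k).trans (by simp), fun _ => by omega, ?_⟩
    intro m hm _ hle
    have := hn.monotone (Nat.succ_le_of_lt hm)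
    simp only [Nat.succ_eq_add_one] at this
    omega
  simp only [hk, Nat.add_sub_cancel_left]

lemma exists_M (b : ℕ) (hb : 3 ≤ b) (s : ℝ) (hs : 0 < s) (hs1 : s < 1 / ((b : ℝ) - 1)) :
    ∃ M : ℕ, 1 ≤ M ∧ 1 / ((b : ℝ) ^ M * ((b : ℝ) - 1)) ≤ s ∧
      s < b / ((b : ℝ) ^ M * ((b : ℝ) - 1)) := by
  classical
  have hb' : (3 : ℝ) ≤ b := by exact_mod_cast hb
  have hb1 : (0 : ℝ) < b - 1 := by linarith
  have hex : ∃ M : ℕ, 1 / ((b : ℝ) ^ M * ((b : ℝ) - 1)) ≤ s := by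
    obtain ⟨M, hM⟩ := pow_unbounded_of_one_lt (1 / s) (by linarith : (1 : ℝ) < b)
    refine ⟨M, ?_⟩
    rw [div_le_iff₀ (by positivity)]
    rw [div_lt_iff₀ hs] at hM
    have : 0 < (b : ℝ) ^ M := by positivity
    nlinarith [mul_pos hs this]
  have h0 : Nat.find hex ≠ 0 := by
    intro h
    have := Nat.find_spec hex
    rw [h] at this
    simp only [pow_zero, one_mul] at this
    linarith
  refine ⟨Nat.find hex, by omega, Nat.find_spec hex, ?_⟩
  have h1 := Nat.find_min hex (m := Nat.find hex - 1) (by omega)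
  obtain ⟨m, hm⟩ := Nat.exists_eq_succ_of_ne_zero h0
  rw [hm] at h1 ⊢
  simp only [Nat.succ_eq_add_one, Nat.add_sub_cancel, not_le] at h1 ⊢
  refine h1.trans_eq ?_
  rw [pow_succ]
  field_simp

/-- positions -/
def pos (n0 : ℕ) (M L : ℕ → ℕ) : ℕ → ℕ
  | 0 => n0
  | k + 1 => pos n0 M L k + (M (pos n0 M L k) + L (pos n0 M L k) + 2)

end MD

open MD in
/-- For `b ≥ 3`, the `{0,1}`-digit set `K_{J(b)}`, and `Ψ` positive with
`Ψ(l·x) ≤ l·Ψ(x)` and `Ψ(x) < x^{-γ-ε}` for large `x` (where `γ` is the golden ratio),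
the set `(𝒦₁(Ψ) \ ⋃_{0<c<1/(b-1)} 𝒦₁(cΨ)) ∩ K_{J(b)}` is uncountable. -/
theorem missing_digit_k_eq_one (b : ℕ) (hb : 3 ≤ b)
    (Ψ : ℕ → ℝ) (hpos : ∀ q, 0 < Ψ q)
    (hB2 : ∀ l x : ℕ, 1 ≤ l → 1 ≤ x → Ψ (l * x) ≤ (l : ℝ) * Ψ x)
    (hdecay : ∃ ε : ℝ, 0 < ε ∧ ∃ N : ℕ, ∀ x : ℕ, N ≤ x →
      Ψ x < (x : ℝ) ^ (-((1 + Real.sqrt 5) / 2) - ε)) :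
    ¬ ((K1 Ψ \ ⋃ c ∈ Ioo (0 : ℝ) (1 / ((b : ℝ) - 1)), K1 (fun x => c * Ψ x)) ∩
        baseExpSet b {0, 1}).Countable := by
  obtain ⟨ε, hε, N, hN⟩ := hdecay
  have hb' : (3 : ℝ) ≤ b := by exact_mod_cast hb
  have hb1 : (0 : ℝ) < b - 1 := by linarith
  obtain ⟨g, hgdef⟩ : ∃ g, g = (1 + Real.sqrt 5) / 2 + ε := ⟨_, rfl⟩
  have hN' : ∀ x : ℕ, N ≤ x → Ψ x < (x : ℝ) ^ (-g) := by
    intro x hx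
    have := hN x hx
    rwa [show -((1 + Real.sqrt 5) / 2) - ε = -g by rw [hgdef]; ring] at this
  have h5 : Real.sqrt 5 * Real.sqrt 5 = 5 := Real.mul_self_sqrt (by norm_num)
  have h51 : 1 < Real.sqrt 5 := by rw [Real.lt_sqrt (by norm_num)]; norm_num
  have hg : 1 < g := by rw [hgdef]; linarith
  obtain ⟨η, hηdef⟩ : ∃ η, η = g * (g - 1) - 1 := ⟨_, rfl⟩
  have hη : 0 < η := by rw [hηdef, hgdef]; nlinarith
  -- parameters
  obtain ⟨n0, hn0⟩ : ∃ n0, n0 = max N 1 := ⟨_, rfl⟩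
  have hbn : ∀ n, n0 ≤ n → N ≤ b ^ n ∧ 1 ≤ n := by
    intro n hn
    have h1 : n < b ^ n := Nat.lt_pow_self (by omega)
    have h2 : N ≤ n0 := by rw [hn0]; exact le_max_left _ _
    have h3 : 1 ≤ n0 := by rw [hn0]; exact le_max_right _ _
    omega
  have hsmall : ∀ n, n0 ≤ n → Ψ (b ^ n) < 1 / (b : ℝ) ^ n := by
    intro n hn
    have h1 := hN' _ (hbn n hn).1
    refine h1.trans_le ?_
    have h2 : (1 : ℝ) ≤ ((b ^ n : ℕ) : ℝ) := by
      exact_mod_cast Nat.one_le_pow _ _ (by omega)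
    calc ((b ^ n : ℕ) : ℝ) ^ (-g) ≤ ((b ^ n : ℕ) : ℝ) ^ (-1 : ℝ) :=
          Real.rpow_le_rpow_of_exponent_le h2 (by linarith)
      _ = _ := by rw [Real.rpow_neg_one]; push_cast; rw [one_div]
  have hM : ∀ n, ∃ M, n0 ≤ n → 1 ≤ M ∧ 1 / ((b : ℝ) ^ M * ((b : ℝ) - 1)) ≤ Ψ (b ^ n) ∧
      Ψ (b ^ n) < b / ((b : ℝ) ^ M * ((b : ℝ) - 1)) := by
    intro n
    by_cases hn : n0 ≤ n
    · obtain ⟨M, h⟩ := exists_M b hb (Ψ (b ^ n)) (hpos _) (by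
        refine (hsmall n hn).trans_le ?_
        have : (b : ℝ) ^ 1 ≤ (b : ℝ) ^ n := pow_le_pow_right₀ (by linarith) (hbn n hn).2
        rw [pow_one] at this
        gcongr
        linarith)
      exact ⟨M, fun _ => h⟩
    · exact ⟨0, fun h => absurd h hn⟩
  choose M hM using hM
  obtain ⟨L, hL⟩ : ∃ L : ℕ → ℕ, L = fun n : ℕ => ⌊η / 2 * (n : ℝ)⌋₊ := ⟨_, rfl⟩
  have hf : ∀ n, ∃ f : ℕ → ℕ, n0 ≤ n → (∀ j, f j ≤ 1) ∧
      ∀ e : ℕ → ℕ, (∀ j, e j ≤ 1) → (∀ j < M n + L n, e j = f j) →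
      val b e ≤ Ψ (b ^ n) ∧ (1 - 1 / (b : ℝ) ^ (L n)) / (1 + 1 / (b : ℝ) ^ (L n)) *
        (Ψ (b ^ n) / ((b : ℝ) - 1)) ≤ val b e := by
    intro n
    by_cases hn : n0 ≤ n
    · obtain ⟨h1, h2, h3⟩ := hM n hn
      obtain ⟨f, hf⟩ := block b hb (Ψ (b ^ n)) (M n) (L n) h1 h2 h3
      exact ⟨f, fun _ => hf⟩
    · exact ⟨0, fun h => absurd h hn⟩
  choose f hf using hf
  obtain ⟨n, hndef⟩ : ∃ n, n = pos n0 M L := ⟨_, rfl⟩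
  have hns : ∀ k, n (k + 1) = n k + (M (n k) + L (n k) + 2) := by
    intro k; rw [hndef]; rfl
  have hnmono : StrictMono n := strictMono_nat_of_lt_succ fun k => by rw [hns]; omega
  have hnge : ∀ k, n0 ≤ n k := fun k => by
    have : n 0 ≤ n k := hnmono.monotone (Nat.zero_le k)
    have h0 : n 0 = n0 := by rw [hndef]; rfl
    omega
  -- digits
  have hD : ∀ a : ℕ → Bool, ∃ D : ℕ → ℕ, (∀ i, D i ≤ 1) ∧ ∀ k j, n k + j < n (k + 1) →
      D (n k + j) = if j < M (n k) + L (n k) then f (n k) j else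
        if j = M (n k) + L (n k) then (a k).toNat else 1 := by
    intro a
    refine exists_digits n hnmono (fun k j => if j < M (n k) + L (n k) then f (n k) j else
        if j = M (n k) + L (n k) then (a k).toNat else 1) ?_
    intro k j
    split_ifs
    · exact (hf (n k) (hnge k)).1 j
    · exact Bool.toNat_le _
    · exact le_rfl
  choose D hD1 hD using hD
  have hinj : Function.Injective (fun a => val b (D a)) := by
    intro a a' h
    have hDD : D a = D a' := pre_inj b hb _ _ (hD1 a) (hD1 a') h
    funext k
    have h1 := hD a k (M (n k) + L (n k)) (by rw [hns]; omega)
    have h2 := hD a' k (M (n k) + L (n k)) (by rw [hns]; omega)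
    rw [hDD, h2] at h1
    simp only [lt_irrefl, if_false, if_true] at h1
    revert h1
    cases a k <;> cases a' k <;> simp
  have hrange : ¬ (Set.range (fun a => val b (D a))).Countable := by
    intro hc
    have h1 : Countable (ℕ → Bool) := by
      have := hc.to_subtype
      exact (Set.rangeFactorization_injective.mpr hinj).countable
    obtain ⟨F, hF⟩ := exists_surjective_nat (ℕ → Bool)
    obtain ⟨m, hm⟩ := hF (fun i => !(F i i))
    have := congrFun hm m
    simp at this
  intro hcount
  apply hrange
  refine hcount.mono ?_
  rintro _ ⟨a, rfl⟩
  obtain ⟨ζ, hζ⟩ : ∃ ζ, ζ = val b (D a) := ⟨_, rfl⟩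
  show val b (D a) ∈ _
  rw [← hζ]
  have hr : ∀ k, ((b ^ n k : ℕ) : ℝ) * ζ - (pre b (D a) (n k) : ℕ) =
      val b (fun j => D a (n k + j)) := by
    intro k
    rw [hζ]
    push_cast
    rw [val_shift b hb (D a) (hD1 a) (n k)]
    ring
  have hbl : ∀ k, val b (fun j => D a (n k + j)) ≤ Ψ (b ^ n k) ∧
      (1 - 1 / (b : ℝ) ^ (L (n k))) / (1 + 1 / (b : ℝ) ^ (L (n k))) *
        (Ψ (b ^ n k) / ((b : ℝ) - 1)) ≤ val b (fun j => D a (n k + j)) := by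
    intro k
    refine (hf (n k) (hnge k)).2 _ (fun j => hD1 a _) ?_
    intro j hj
    rw [hD a k j (by rw [hns]; omega), if_pos hj]
  have hLt : Tendsto (fun k => L (n k)) atTop atTop := by
    rw [hL]
    refine tendsto_nat_floor_atTop.comp ?_
    exact (tendsto_natCast_atTop_atTop.comp hnmono.tendsto_atTop).const_mul_atTop (by positivity)
  have hδ : Tendsto (fun k => 1 / (b : ℝ) ^ (L (n k))) atTop (nhds 0) := by
    have h := (tendsto_pow_atTop_nhds_zero_of_lt_one (r := 1 / (b : ℝ)) (by positivity)
      (by rw [div_lt_one (by linarith)]; linarith)).comp hLt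
    refine h.congr fun k => ?_
    simp
  have hρ : Tendsto (fun k => (1 - 1 / (b : ℝ) ^ (L (n k))) / (1 + 1 / (b : ℝ) ^ (L (n k))))
      atTop (nhds 1) := by
    have h := (tendsto_const_nhds (x := (1 : ℝ)).sub hδ).div (tendsto_const_nhds (x := (1 : ℝ)).add hδ)
      (by norm_num)
    simp only [sub_zero, add_zero, div_one] at h
    exact h
  have hlowc : ∀ c : ℝ, c < 1 / ((b : ℝ) - 1) →
      ∀ᶠ k in atTop, c * Ψ (b ^ n k) < ((b ^ n k : ℕ) : ℝ) * ζ - (pre b (D a) (n k) : ℕ) := by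
    intro c hc
    have hc1 : c * ((b : ℝ) - 1) < 1 := by rwa [lt_div_iff₀ hb1] at hc
    filter_upwards [hρ.eventually_const_lt hc1] with k hk
    rw [hr k]
    refine lt_of_lt_of_le ?_ (hbl k).2
    have hp := hpos (b ^ n k)
    calc c * Ψ (b ^ n k) = c * ((b : ℝ) - 1) * (Ψ (b ^ n k) / ((b : ℝ) - 1)) := by field_simp
      _ < _ := by gcongr
  have hQmono : StrictMono (fun k => b ^ n k) := fun i j hij =>
    Nat.pow_lt_pow_right (by omega) (hnmono hij)
  have hup : ∀ k, |((b ^ n k : ℕ) : ℝ) * ζ - (pre b (D a) (n k) : ℕ)| ≤ Ψ (b ^ n k) := by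
    intro k
    rw [hr k, abs_of_nonneg (val_nonneg _ _)]
    exact (hbl k).1
  have hzt : Tendsto (fun k => Ψ (b ^ n k)) atTop (nhds 0) := by
    have h := (tendsto_pow_atTop_nhds_zero_of_lt_one (r := 1 / (b : ℝ)) (by positivity)
      (by rw [div_lt_one (by linarith)]; linarith)).comp hnmono.tendsto_atTop
    refine squeeze_zero (fun k => (hpos _).le) (fun k => ?_) h
    have := (hsmall (n k) (hnge k)).le
    simpa using this
  have hirr : Irrational ζ := by
    rintro ⟨r, hrr⟩
    have hv : (0 : ℝ) < r.den := by exact_mod_cast r.den_pos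
    have hv0 : (0 : ℝ) < 1 / (r.den : ℝ) := by positivity
    obtain ⟨k, hk1, hk2⟩ := ((hzt.eventually_lt_const hv0).and
      (hlowc 0 (by positivity))).exists
    rw [zero_mul] at hk2
    have hk3 := (le_abs_self _).trans (hup k)
    have hk4 := hk3.trans_lt hk1
    rw [lt_div_iff₀ hv] at hk4
    have hnum : ζ * r.den = r.num := by
      rw [← hrr]; exact_mod_cast Rat.mul_den_eq_num r
    have e : (((b ^ n k : ℕ) : ℝ) * ζ - (pre b (D a) (n k) : ℕ)) * r.den =
        (((b ^ n k : ℕ) : ℤ) * r.num - (pre b (D a) (n k) : ℕ) * (r.den : ℤ) : ℤ) := by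
      push_cast
      rw [← hnum]; ring
    have hk5 := mul_pos hk2 hv
    rw [e] at hk4 hk5
    have i1 : (((b ^ n k : ℕ) : ℤ) * r.num - (pre b (D a) (n k) : ℕ) * (r.den : ℤ) : ℤ) < 1 := by
      exact_mod_cast hk4
    have i2 : 0 < (((b ^ n k : ℕ) : ℤ) * r.num - (pre b (D a) (n k) : ℕ) * (r.den : ℤ) : ℤ) := by
      exact_mod_cast hk5
    omega
  refine ⟨⟨⟨hirr, ?_⟩, ?_⟩, ?_⟩
  · refine Set.infinite_of_injective_forall_mem
      (f := fun k => ((b ^ n k : ℕ), ((pre b (D a) (n k) : ℕ) : ℤ))) ?_ ?_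
    · intro i j hij
      exact hQmono.injective (congrArg Prod.fst hij)
    · intro k
      refine ⟨Nat.one_le_pow _ _ (by omega), ?_⟩
      have := hup k
      simpa using this
  · simp only [Set.mem_iUnion, not_exists]
    rintro c ⟨hc0, hc1⟩ ⟨_, hinf⟩
    refine core Ψ hpos hB2 g η ((b : ℝ) ^ 3) c hg hη (by rw [hηdef]; ring) (by positivity) hc0 ?_ N hN'
      (fun k => b ^ n k) (fun k => pre b (D a) (n k)) hQmono (fun k => Nat.one_le_pow _ _ (by omega))
      ζ ?_ hup (hlowc c hc1) ?_ hinf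
    · refine hc1.le.trans ?_
      gcongr
      linarith
    · intro k hk
      obtain ⟨k, rfl⟩ : ∃ k', k = k' + 1 := ⟨k - 1, by omega⟩
      have h1 := hD a k (M (n k) + L (n k) + 1) (by rw [hns]; omega)
      rw [if_neg (by omega), if_neg (by omega)] at h1
      have h2 := pre_coprime b (D a) _ (n (k + 1)) h1
      rwa [show n k + (M (n k) + L (n k) + 1) + 1 = n (k + 1) by rw [hns]; ring] at h2
    · intro k
      have h3 := (hM (n k) (hnge k)).2.2
      have hQ0 : (0 : ℝ) < (b : ℝ) ^ n k := by positivity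
      have hLb : (b : ℝ) ^ (L (n k)) ≤ ((b : ℝ) ^ n k) ^ (η / 2) := by
        rw [← Real.rpow_natCast, ← Real.rpow_natCast, ← Real.rpow_mul (by linarith)]
        apply Real.rpow_le_rpow_of_exponent_le (by linarith)
        rw [hL]
        dsimp only
        rw [mul_comm (n k : ℝ)]
        exact Nat.floor_le (by positivity)
      rw [hns]
      push_cast
      rw [Real.rpow_add hQ0, Real.rpow_one]
      calc (b : ℝ) ^ (n k + (M (n k) + L (n k) + 2)) * Ψ (b ^ n k)
          ≤ (b : ℝ) ^ (n k + (M (n k) + L (n k) + 2)) *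
            (b / ((b : ℝ) ^ (M (n k)) * ((b : ℝ) - 1))) := by gcongr
        _ ≤ (b : ℝ) ^ (n k + (M (n k) + L (n k) + 2)) *
            (b / ((b : ℝ) ^ (M (n k)) * 1)) := by gcongr; linarith
        _ = (b : ℝ) ^ 3 * ((b : ℝ) ^ n k * (b : ℝ) ^ (L (n k))) := by
            rw [pow_add, pow_add, pow_add]; field_simp
        _ ≤ _ := by gcongr
  · refine ⟨⟨?_, ?_⟩, D a, ?_, ?_⟩
    · rw [hζ]; exact val_nonneg _ _
    · rw [hζ]
      refine (val_le b hb _ (hD1 a)).trans ?_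
      rw [div_le_one hb1]; linarith
    · intro i
      have := hD1 a i
      simp only [Set.mem_insert_iff, Set.mem_singleton_iff]
      omega
    · rw [hζ]; rfl
end

section
/- Let k ≥ 2 be an integer and let ζ ∈ (0, 1/2) be a real number. Then there exists q₀ (depending on k and ζ) such that: whenever p, q are integers with q ≥ q₀ and |ζ − p/q| = d·q^{−k} for some real d with 0 < d < 1/2, one has max_{1≤j≤k} ‖q^k·ζ^j‖ = q^k·|ζ − p/q| = q^{k−1}·|qζ − p| = d. -/
open Filter Set

/-- `distNearestInt x` is the distance from `x` to the nearest integer. -/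
noncomputable def distNearestInt (x : ℝ) : ℝ := |x - (round x : ℤ)|

/-- `maxNorm k ζ z = max_{1≤j≤k} ‖z·ζ^j‖`. -/
noncomputable def maxNorm (k : ℕ) (ζ z : ℝ) : ℝ :=
  ⨆ j : Fin k, distNearestInt (z * ζ ^ ((j : ℕ) + 1))

lemma aux_round_le (x : ℝ) (n : ℤ) : distNearestInt x ≤ |x - n| := round_le x n

lemma aux_eq (x : ℝ) (n : ℤ) (h : |x - n| < 1 / 2) : distNearestInt x = |x - n| := by
  have : round x = n := by
    have h1 := round_le x n
    have h2 : |((round x - n : ℤ) : ℝ)| < 1 := by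
      push_cast
      have := abs_sub_le (round x : ℝ) x n
      rw [abs_sub_comm (round x : ℝ) x] at this
      linarith
    have h3 : |round x - n| < 1 := by exact_mod_cast h2
    have := Int.abs_lt_one_iff.mp h3
    omega
  rw [distNearestInt, this]

lemma aux_pow (a b : ℝ) (ha : |a| ≤ 1 / 2) (hb : |b| ≤ 1 / 2) (j : ℕ) :
    |a ^ (j + 1) - b ^ (j + 1)| ≤ |a - b| := by
  refine (abs_pow_sub_pow_le a b (j + 1)).trans ?_
  have hm : max |a| |b| ^ (j + 1 - 1) ≤ (1 / 2) ^ j := by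
    rw [Nat.add_sub_cancel]
    exact pow_le_pow_left₀ (le_max_of_le_left (abs_nonneg a)) (max_le ha hb) j
  have h2 : ((j + 1 : ℕ) : ℝ) ≤ 2 ^ j := by exact_mod_cast Nat.lt_two_pow_self (n := j)
  have h3 : ((j + 1 : ℕ) : ℝ) * max |a| |b| ^ (j + 1 - 1) ≤ 1 := by
    calc _ ≤ (2 : ℝ) ^ j * (1 / 2) ^ j := by gcongr
      _ = 1 := by rw [← mul_pow]; norm_num
  rw [mul_assoc]
  exact mul_le_of_le_one_right (abs_nonneg _) h3

/-- For `k ≥ 2` and `ζ ∈ (0, 1/2)`, there is `q₀` such that whenever `q ≥ q₀`,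
`|ζ - p/q| = d·q^{-k}` with `0 < d < 1/2` implies
`max_{1≤j≤k} ‖q^k·ζ^j‖ = q^k·|ζ - p/q| = q^{k-1}·|qζ - p| = d`. -/
theorem max_norm_of_good_approx (k : ℕ) (hk : 2 ≤ k) (ζ : ℝ) (hζ : ζ ∈ Ioo (0 : ℝ) (1 / 2)) :
    ∃ q₀ : ℕ, ∀ (q : ℕ) (p : ℤ) (d : ℝ), q₀ ≤ q → 0 < d → d < 1 / 2 →
      |ζ - (p : ℝ) / (q : ℝ)| = d * ((q : ℝ) ^ k)⁻¹ →
      maxNorm k ζ ((q : ℝ) ^ k) = (q : ℝ) ^ k * |ζ - (p : ℝ) / (q : ℝ)| ∧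
      (q : ℝ) ^ k * |ζ - (p : ℝ) / (q : ℝ)| = (q : ℝ) ^ (k - 1) * |(q : ℝ) * ζ - (p : ℝ)| ∧
      (q : ℝ) ^ (k - 1) * |(q : ℝ) * ζ - (p : ℝ)| = d := by
  obtain ⟨h0, h1⟩ := hζ
  obtain ⟨N, hN⟩ := exists_nat_gt (1 / (1 / 2 - ζ))
  refine ⟨N + 1, fun q p d hq hd hd2 h => ?_⟩
  have hq1 : (N : ℝ) + 1 ≤ q := by exact_mod_cast hq
  have hN0 : (0 : ℝ) ≤ N := Nat.cast_nonneg N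
  have hq0 : (0 : ℝ) < q := by linarith
  have hqk : (0 : ℝ) < (q : ℝ) ^ k := by positivity
  have e1 : (q : ℝ) ^ k * |ζ - (p : ℝ) / (q : ℝ)| = d := by
    rw [h]; field_simp
  have e2 : (q : ℝ) ^ k * |ζ - (p : ℝ) / (q : ℝ)|
      = (q : ℝ) ^ (k - 1) * |(q : ℝ) * ζ - (p : ℝ)| := by
    obtain ⟨m, rfl⟩ : ∃ m, k = m + 1 := ⟨k - 1, by omega⟩
    have : (q : ℝ) * ζ - p = q * (ζ - p / q) := by field_simp
    rw [this, abs_mul, abs_of_pos hq0, Nat.add_sub_cancel]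
    ring
  refine ⟨?_, e2, e2 ▸ e1⟩
  rw [e1]
  have hx : |(p : ℝ) / q| ≤ 1 / 2 := by
    have a1 : |(p : ℝ) / q| ≤ |ζ| + |ζ - p / q| := by
      have := abs_sub ζ (ζ - p / q)
      simpa using this
    have a2 : |ζ - (p : ℝ) / q| ≤ 1 / 2 - ζ := by
      have b1 : (q : ℝ) ≤ (q : ℝ) ^ k := le_self_pow₀ (by linarith) (by omega)
      have b2 : 1 < N * (1 / 2 - ζ) := by
        rwa [div_lt_iff₀ (by linarith)] at hN
      have b3 : (N : ℝ) * (1 / 2 - ζ) ≤ (q : ℝ) ^ k * (1 / 2 - ζ) :=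
        mul_le_mul_of_nonneg_right (by linarith) (by linarith)
      refine le_of_mul_le_mul_left ?_ hqk
      linarith
    rw [abs_of_pos h0] at a1
    linarith
  have key : ∀ j : ℕ, j + 1 ≤ k →
      (q : ℝ) ^ k * ζ ^ (j + 1) - (((q : ℤ) ^ (k - (j + 1)) * p ^ (j + 1) : ℤ) : ℝ)
        = (q : ℝ) ^ k * (ζ ^ (j + 1) - (p / q) ^ (j + 1)) := by
    intro j hj
    obtain ⟨m, rfl⟩ := Nat.exists_eq_add_of_le' hj
    push_cast
    rw [Nat.add_sub_cancel, mul_sub, div_pow, pow_add (q : ℝ) m (j + 1)]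
    field_simp
  have hz : |ζ| ≤ 1 / 2 := by rw [abs_of_pos h0]; exact h1.le
  have bd : ∀ j : Fin k, distNearestInt ((q : ℝ) ^ k * ζ ^ ((j : ℕ) + 1)) ≤ d := by
    intro j
    refine (aux_round_le _ ((q : ℤ) ^ (k - ((j : ℕ) + 1)) * p ^ ((j : ℕ) + 1))).trans ?_
    rw [key j j.2, abs_mul, abs_of_pos hqk, ← e1]
    exact mul_le_mul_of_nonneg_left (aux_pow _ _ hz hx j) hqk.le
  have hne : Nonempty (Fin k) := ⟨⟨0, by omega⟩⟩
  refine le_antisymm (ciSup_le bd) ?_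
  have hb : BddAbove (Set.range fun j : Fin k =>
      distNearestInt ((q : ℝ) ^ k * ζ ^ ((j : ℕ) + 1))) :=
    ⟨d, by rintro _ ⟨j, rfl⟩; exact bd j⟩
  refine le_trans (le_of_eq ?_) (le_ciSup hb ⟨0, by omega⟩)
  have k0 := key 0 (by omega)
  have k1 : |(q : ℝ) ^ k * ζ ^ (0 + 1) - (((q : ℤ) ^ (k - (0 + 1)) * p ^ (0 + 1) : ℤ) : ℝ)|
      = d := by
    rw [k0, abs_mul, abs_of_pos hqk, zero_add, pow_one, pow_one, e1]
  have k2 := aux_eq _ _ (k1.trans_lt hd2)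
  exact (k2.trans k1).symm
end

section
/- Let k ≥ 2 be an integer and consider the function L_k : (0,∞) → ℝ defined by L_k(ζ) := max_{1≤j≤k} j·ζ^{j−1}. Then L_k is continuous, its image is [1,∞), it is constantly equal to 1 on (0, 1/2], and it is strictly increasing on (1/2, ∞). -/
open Filter Set

/-- `Lk k t = max_{1≤j≤k} j·t^{j-1}`. -/
noncomputable def Lk (k : ℕ) (t : ℝ) : ℝ :=
  ⨆ j : Fin k, (((j : ℕ) : ℝ) + 1) * t ^ (j : ℕ)

theorem Lk_le_aux (k : ℕ) (t : ℝ) (j : ℕ) (hj : j < k) : ((j : ℝ) + 1) * t ^ j ≤ Lk k t :=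
  le_ciSup (f := fun j : Fin k => (((j : ℕ) : ℝ) + 1) * t ^ (j : ℕ))
    (Set.finite_range _).bddAbove ⟨j, hj⟩

/-- For `k ≥ 2`, the function `L_k` is continuous on `(0,∞)`, its image on `(0,∞)` is
`[1,∞)`, it is constantly `1` on `(0, 1/2]`, and it is strictly increasing on `(1/2, ∞)`. -/
theorem Lk_properties (k : ℕ) (hk : 2 ≤ k) :
    ContinuousOn (Lk k) (Ioi (0 : ℝ)) ∧
    Lk k '' Ioi (0 : ℝ) = Ici (1 : ℝ) ∧
    (∀ t ∈ Ioc (0 : ℝ) (1 / 2), Lk k t = 1) ∧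
    StrictMonoOn (Lk k) (Ioi (1 / 2 : ℝ)) := by
  have hne : Nonempty (Fin k) := ⟨⟨0, by omega⟩⟩
  have h2 : ∀ t, 2 * t ≤ Lk k t := fun t => by
    have := Lk_le_aux k t 1 (by omega)
    norm_num at this
    exact this
  have h1 : ∀ t, 1 ≤ Lk k t := fun t => by
    have := Lk_le_aux k t 0 (by omega)
    norm_num at this
    exact this
  have hcont : Continuous (Lk k) := by
    have : Lk k = fun t => Finset.univ.sup' Finset.univ_nonempty
        (fun j : Fin k => (((j : ℕ) : ℝ) + 1) * t ^ (j : ℕ)) := by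
      funext t
      rw [Finset.sup'_univ_eq_ciSup]
      rfl
    rw [this]
    exact Continuous.finset_sup'_apply _ (fun i _ => by fun_prop)
  have hconst : ∀ t ∈ Ioc (0 : ℝ) (1 / 2), Lk k t = 1 := by
    rintro t ⟨ht0, ht⟩
    refine le_antisymm (ciSup_le ?_) (h1 t)
    rintro ⟨j, hjk⟩
    show ((j : ℝ) + 1) * t ^ j ≤ 1
    induction j with
    | zero => simp
    | succ n ih =>
      have hp : 0 < t ^ n := by positivity
      have hn : (0 : ℝ) ≤ n := by positivity
      have : ((n + 1 : ℕ) + 1 : ℝ) * t ≤ n + 1 := by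
        push_cast
        nlinarith
      calc ((n + 1 : ℕ) + 1 : ℝ) * t ^ (n + 1) = (((n + 1 : ℕ) + 1 : ℝ) * t) * t ^ n := by ring
        _ ≤ (n + 1) * t ^ n := by gcongr
        _ ≤ 1 := ih (by omega)
  refine ⟨hcont.continuousOn, ?_, hconst, ?_⟩
  · ext y
    constructor
    · rintro ⟨t, -, rfl⟩
      exact h1 t
    · intro hy
      have hy : (1 : ℝ) ≤ y := hy
      have hh := hconst (1 / 2) ⟨by norm_num, le_refl _⟩
      obtain ⟨x, hx, hxy⟩ := intermediate_value_Icc (a := 1 / 2) (b := y) (by linarith)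
        hcont.continuousOn (show y ∈ Icc (Lk k (1 / 2)) (Lk k y) from
          ⟨by rw [hh]; exact hy, by linarith [h2 y]⟩)
      exact ⟨x, lt_of_lt_of_le (by norm_num) hx.1, hxy⟩
  · intro s hs t _ hst
    have hs : (1 / 2 : ℝ) < s := hs
    obtain ⟨⟨j, hj⟩, hjs⟩ := exists_eq_ciSup_of_finite
      (f := fun j : Fin k => (((j : ℕ) : ℝ) + 1) * s ^ (j : ℕ))
    have hjs : ((j : ℝ) + 1) * s ^ j = Lk k s := hjs
    have hj0 : j ≠ 0 := by
      rintro rfl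
      have := h2 s
      norm_num at hjs
      linarith
    rw [← hjs]
    refine lt_of_lt_of_le ?_ (Lk_le_aux k t j hj)
    exact mul_lt_mul_of_pos_left (pow_lt_pow_left₀ hst (by linarith) hj0) (by positivity)
end

section
/- Let k ≥ 2 be an integer, ζ > 0 a positive irrational real number, and T > 1 a fixed real number. Then there exists ẑ = ẑ(T, ζ) such that: if an integer z ≥ ẑ satisfies max_{1≤j≤k} ‖ζ^j·z‖ ≤ z^{−T}, then, writing y₁ for the nearest integer to ζ·z and y₁/z = y₀/z₀ in lowest terms (gcd(y₀,z₀)=1, z₀>0), one has |ζ·z₀ − y₀| ≤ z₀^{−kT−k+1}. -/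
open Filter Set

/-- For `k ≥ 2`, `ζ > 0` irrational and fixed `T > 1`: there is `zhat` such that for every
integer `z ≥ zhat` with `max_{1≤j≤k} ‖ζ^j·z‖ ≤ z^{-T}`, writing `y₁/z = y₀/z₀` in lowest
terms (`y₁` the nearest integer to `ζ·z`), we have `|ζ·z₀ - y₀| ≤ z₀^{-kT-k+1}`. -/
theorem good_approx_descends (k : ℕ) (hk : 2 ≤ k) (ζ : ℝ) (hζ0 : 0 < ζ)
    (hirr : Irrational ζ) (T : ℝ) (hT : 1 < T) :
    ∃ zhat : ℕ, ∀ z : ℕ, zhat ≤ z →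
      (∀ j : ℕ, 1 ≤ j → j ≤ k →
        distNearestInt (ζ ^ j * (z : ℝ)) ≤ (z : ℝ) ^ (-T)) →
      ∀ (z₀ : ℕ) (y₀ : ℤ), 0 < z₀ → Int.gcd y₀ (z₀ : ℤ) = 1 →
        (y₀ : ℝ) / (z₀ : ℝ) = ((round (ζ * (z : ℝ)) : ℤ) : ℝ) / (z : ℝ) →
        |ζ * (z₀ : ℝ) - (y₀ : ℝ)| ≤ (z₀ : ℝ) ^ (-(k : ℝ) * T - (k : ℝ) + 1) := by
  obtain ⟨C, hC⟩ : ∃ C : ℝ, C = (k : ℝ) * (ζ + 1) ^ k := ⟨_, rfl⟩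
  have hev : ∀ᶠ z : ℕ in atTop, C + 1 < (z : ℝ) ^ (T - 1) :=
    ((tendsto_rpow_atTop (by linarith : 0 < T - 1)).comp
      tendsto_natCast_atTop_atTop).eventually_gt_atTop (C + 1)
  obtain ⟨N, hN⟩ := eventually_atTop.1 hev
  refine ⟨max N 1, ?_⟩
  intro z hz hj z₀ y₀ hz₀ hgcd heq
  have hzN := hN z (le_trans (le_max_left _ _) hz)
  have hz1 : 1 ≤ z := le_trans (le_max_right _ _) hz
  have hzR : (1 : ℝ) ≤ z := by exact_mod_cast hz1
  have hzpos : (0 : ℝ) < z := by linarith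
  have hz₀R : (1 : ℝ) ≤ z₀ := by exact_mod_cast hz₀
  have hz₀pos : (0 : ℝ) < z₀ := by linarith
  obtain ⟨r, hr⟩ : ∃ r : ℝ, r = (y₀ : ℝ) / z₀ := ⟨_, rfl⟩
  have hry : (y₀ : ℝ) = r * z₀ := by rw [hr]; field_simp
  rw [← hr] at heq
  have hrz : r * z = (round (ζ * (z : ℝ)) : ℤ) := by rw [heq]; field_simp
  have h1 : |ζ - r| * z ≤ (z : ℝ) ^ (-T) := by
    have := hj 1 le_rfl (by omega)
    unfold distNearestInt at this
    rw [pow_one, ← hrz, ← sub_mul, abs_mul, abs_of_pos hzpos] at this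
    exact this
  have hzT : (z : ℝ) ^ (-T) ≤ 1 := Real.rpow_le_one_of_one_le_of_nonpos hzR (by linarith)
  have hclose : |ζ - r| ≤ 1 := by nlinarith [abs_nonneg (ζ - r)]
  have hrabs : |r| ≤ ζ + 1 := by
    rw [abs_le] at hclose ⊢
    constructor <;> linarith [hclose.1, hclose.2]
  have hsmall : (C + 1) * (z : ℝ) ^ (-T) * z < 1 := by
    have e : (z : ℝ) ^ (T - 1) * ((z : ℝ) ^ (-T) * z) = 1 := by
      nth_rewrite 3 [← Real.rpow_one (z : ℝ)]
      rw [← Real.rpow_add hzpos, ← Real.rpow_add hzpos]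
      ring_nf
      simp
    have hp : 0 < (z : ℝ) ^ (-T) * z := by positivity
    nlinarith
  have hpow : ∀ j : ℕ, 1 ≤ j → j ≤ k → |ζ ^ j - r ^ j| ≤ C * |ζ - r| := by
    intro j hj1 hjk
    have h := abs_pow_sub_pow_le ζ r j
    have hm : max |ζ| |r| ≤ ζ + 1 := max_le (by rw [abs_of_pos hζ0]; linarith) hrabs
    have hm2 : max |ζ| |r| ^ (j - 1) ≤ (ζ + 1) ^ k :=
      (pow_le_pow_left₀ (le_max_of_le_left (abs_nonneg _)) hm _).trans
        (pow_le_pow_right₀ (by linarith) (by omega))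
    have hjR : (j : ℝ) ≤ k := by exact_mod_cast hjk
    calc _ ≤ _ := h
      _ ≤ |ζ - r| * k * (ζ + 1) ^ k := by gcongr
      _ = _ := by rw [hC]; ring
  have hcop : IsCoprime (z₀ : ℤ) y₀ := (Int.isCoprime_iff_gcd_eq_one.2 hgcd).symm
  have hdvd : ∀ j : ℕ, j ≤ k → (z₀ : ℤ) ^ j ∣ (z : ℤ) := by
    intro j
    induction j with
    | zero => intro _; simp
    | succ j ih =>
      intro hjk
      obtain ⟨m, hm⟩ := ih (by omega)
      have hmR : (z : ℝ) = (z₀ : ℝ) ^ j * m := by exact_mod_cast hm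
      obtain ⟨y, hy⟩ : ∃ y : ℤ, y = round (ζ ^ (j + 1) * (z : ℝ)) := ⟨_, rfl⟩
      have hd := hj (j + 1) (by omega) hjk
      unfold distNearestInt at hd
      rw [← hy] at hd
      have hp := hpow (j + 1) (by omega) hjk
      have hb : |r ^ (j + 1) * z - y| ≤ (C + 1) * (z : ℝ) ^ (-T) := by
        have e : r ^ (j + 1) * z - y
            = (ζ ^ (j + 1) * z - y) - (ζ ^ (j + 1) - r ^ (j + 1)) * z := by ring
        have hC0 : 0 ≤ C := by rw [hC]; positivity
        have h2 : |(ζ ^ (j + 1) - r ^ (j + 1)) * z| ≤ C * (z : ℝ) ^ (-T) := by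
          rw [abs_mul, abs_of_pos hzpos]
          calc _ ≤ C * |ζ - r| * z := by gcongr
            _ = C * (|ζ - r| * z) := by ring
            _ ≤ _ := by gcongr
        rw [e]
        refine (abs_sub _ _).trans ?_
        linarith
      have hz₀z : (z₀ : ℝ) ≤ z := by
        have h3 : (z₀ : ℤ) ∣ z := by
          have h4 : (z₀ : ℤ) ∣ y₀ * z := by
            refine ⟨round (ζ * (z : ℝ)), ?_⟩
            have : (y₀ : ℝ) * z = z₀ * (round (ζ * (z : ℝ)) : ℤ) := by
              rw [← hrz, hry]; ring
            exact_mod_cast this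
          exact hcop.dvd_of_dvd_mul_left h4
        have := Int.le_of_dvd (by exact_mod_cast hz1) h3
        exact_mod_cast this
      have hint : (((m * y₀ ^ (j + 1) - y * z₀ : ℤ)) : ℝ) = (r ^ (j + 1) * z - y) * z₀ := by
        push_cast
        rw [hry, hmR]; ring
      have habs : |(((m * y₀ ^ (j + 1) - y * z₀ : ℤ)) : ℝ)| < 1 := by
        rw [hint, abs_mul, abs_of_pos hz₀pos]
        refine lt_of_le_of_lt ?_ hsmall
        exact mul_le_mul hb hz₀z hz₀pos.le ((abs_nonneg _).trans hb)
      have hzero : m * y₀ ^ (j + 1) - y * z₀ = 0 := by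
        apply Int.abs_lt_one_iff.1
        exact_mod_cast habs
      have hdm : (z₀ : ℤ) ∣ m := by
        have : (z₀ : ℤ) ∣ m * y₀ ^ (j + 1) := ⟨y, by linarith⟩
        exact (hcop.pow_right).dvd_of_dvd_mul_right this
      rw [hm, pow_succ]
      exact mul_dvd_mul_left _ hdm
  have hle : (z₀ : ℝ) ^ k ≤ z := by
    have := Int.le_of_dvd (by exact_mod_cast hz1) (hdvd k le_rfl)
    exact_mod_cast this
  have hfin : |ζ - r| ≤ (z : ℝ) ^ (-T - 1) := by
    rw [Real.rpow_sub_one hzpos.ne', le_div_iff₀ hzpos]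
    exact h1
  have e1 : ζ * z₀ - y₀ = (ζ - r) * z₀ := by rw [hry]; ring
  rw [e1, abs_mul, abs_of_pos hz₀pos]
  calc |ζ - r| * z₀ ≤ (z : ℝ) ^ (-T - 1) * z₀ := by gcongr
    _ ≤ ((z₀ : ℝ) ^ k) ^ (-T - 1) * z₀ := by
      gcongr ?_ * _
      exact Real.rpow_le_rpow_of_nonpos (by positivity) hle (by linarith)
    _ = _ := by
      rw [← Real.rpow_natCast, ← Real.rpow_mul hz₀pos.le, Real.rpow_add_one hz₀pos.ne']
      ring_nf
end

section
/- Let k ≥ 2 be an integer and ζ > 0 a positive irrational real number, and set L_k(ζ) := max_{1≤j≤k} j·ζ^{j−1}. Let Ψ : ℕ → (0,∞) satisfy Ψ(l·x) ≤ l·Ψ(x) for all positive integers l, x, and additionally either (i) ζ ∈ (0,1/2) and Ψ(x) < 1/(2x) for all sufficiently large x, or (ii) Ψ(x) < d/x for all sufficiently large x, where d = (1/2)·L_k(ζ)^{−1} − ε for some ε > 0. Then every solution (z, y₁, …, y_k) ∈ ℕ × ℤ^k of max_{1≤j≤k} |ζ^j·z − y_j| ≤ Ψ(z) with z sufficiently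 large is an integral multiple of a solution of the form (z₀^k, z₀^{k−1}·y₀, …, y₀^k) with gcd(y₀, z₀) = 1. In particular, if max_{1≤j≤k} |ζ^j·z − y_j| ≤ Ψ(z) has arbitrarily large solutions, then it has solutions with z = q^k for a positive integer q satisfying ‖ζ·q‖ ≤ q^{−2k+1}. -/
open Filter Set

lemma sap_factor (ζ p : ℝ) (n : ℕ) :
    |p ^ (n+1) - ζ ^ (n+1)| = |∑ i ∈ Finset.range (n+1), p ^ i * ζ ^ (n - i)| * |p - ζ| := by
  rw [← abs_mul, ← (Commute.all p ζ).geom_sum₂_mul (n+1)]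
  simp

lemma sap_sum_self (ζ : ℝ) (n : ℕ) :
    ∑ i ∈ Finset.range (n+1), ζ ^ i * ζ ^ (n - i) = ((n:ℝ)+1) * ζ ^ n := by
  rw [Finset.sum_congr rfl (g := fun _ => ζ ^ n)]
  · simp
  · intro i hi
    rw [← pow_add]
    congr 1
    have := Finset.mem_range.1 hi
    omega

lemma sap_cont (k : ℕ) (ζ D : ℝ) (hζ0 : 0 < ζ)
    (h : ∀ j : Fin k, (((j : ℕ) : ℝ) + 1) * ζ ^ (j : ℕ) < D) :
    ∀ᶠ p in nhds ζ, ∀ j : Fin k, |p ^ ((j:ℕ)+1) - ζ ^ ((j:ℕ)+1)| ≤ D * |p - ζ| := by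
  rw [Filter.eventually_all]
  intro j
  have hc : Continuous (fun p : ℝ => |∑ i ∈ Finset.range ((j:ℕ)+1), p ^ i * ζ ^ ((j:ℕ) - i)|) := by
    fun_prop
  have hlt : |∑ i ∈ Finset.range ((j:ℕ)+1), ζ ^ i * ζ ^ ((j:ℕ) - i)| < D := by
    rw [sap_sum_self, abs_of_pos (by positivity)]
    exact h j
  filter_upwards [hc.continuousAt.eventually_lt (continuousAt_const (y := D)) hlt] with p hp
  rw [sap_factor]
  exact mul_le_mul_of_nonneg_right hp.le (abs_nonneg _)

lemma sap_half (k : ℕ) (ζ : ℝ) (hζ0 : 0 < ζ) (hζ : ζ < 1/2) :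
    ∀ᶠ p in nhds ζ, ∀ j : Fin k, |p ^ ((j:ℕ)+1) - ζ ^ ((j:ℕ)+1)| ≤ 1 * |p - ζ| := by
  filter_upwards [lt_mem_nhds hζ0, gt_mem_nhds hζ] with p hp0 hp j
  rw [sap_factor]
  refine mul_le_mul_of_nonneg_right ?_ (abs_nonneg _)
  generalize (j:ℕ) = n
  rw [abs_of_nonneg (by positivity)]
  calc ∑ i ∈ Finset.range (n+1), p ^ i * ζ ^ (n - i)
      ≤ ∑ i ∈ Finset.range (n+1), (1/2:ℝ) ^ i * (1/2) ^ (n - i) := by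
        gcongr
    _ = ((n:ℝ)+1) * (1/2)^n := sap_sum_self _ _
    _ ≤ 1 := by
        have : ((n:ℝ)+1) ≤ 2 ^ n := by
          exact_mod_cast Nat.lt_two_pow_self
        rw [one_div, inv_pow, ← div_eq_mul_inv, div_le_one (by positivity)]
        exact this

lemma sap_D (k : ℕ) (hk : 2 ≤ k) (ζ : ℝ) (hζ0 : 0 < ζ) (Ψ : ℕ → ℝ)
    (hA : (ζ < 1 / 2 ∧ ∃ N : ℕ, ∀ x : ℕ, N ≤ x → Ψ x < 1 / (2 * (x : ℝ))) ∨
      (∃ ε : ℝ, 0 < ε ∧ ∃ N : ℕ, ∀ x : ℕ, N ≤ x →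
        Ψ x < (1 / 2 * (Lk k ζ)⁻¹ - ε) / (x : ℝ))) :
    ∃ D : ℝ, 0 < D ∧
      (∀ᶠ p in nhds ζ, ∀ j : Fin k, |p ^ ((j:ℕ)+1) - ζ ^ ((j:ℕ)+1)| ≤ D * |p - ζ|) ∧
      ∃ N : ℕ, ∀ x : ℕ, N ≤ x → 1 ≤ x → (1 + D) * Ψ x * x < 1 := by
  rcases hA with ⟨hζ, N, hN⟩ | ⟨ε, hε, N, hN⟩
  · refine ⟨1, one_pos, sap_half k ζ hζ0 hζ, N, fun x hx hx1 => ?_⟩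
    have hx0 : (0:ℝ) < x := by exact_mod_cast hx1
    have := hN x hx
    rw [lt_div_iff₀ (by positivity)] at this
    linarith
  · have hle : ∀ j : Fin k, (((j : ℕ) : ℝ) + 1) * ζ ^ (j : ℕ) ≤ Lk k ζ := fun j =>
      le_ciSup (f := fun j : Fin k => (((j : ℕ) : ℝ) + 1) * ζ ^ (j : ℕ)) (Set.finite_range _).bddAbove j
    have hL : 1 ≤ Lk k ζ := by simpa using hle ⟨0, by omega⟩
    refine ⟨Lk k ζ + ε, by linarith, sap_cont k ζ _ hζ0 fun j => by linarith [hle j], N,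
      fun x hx hx1 => ?_⟩
    have hx0 : (0:ℝ) < x := by exact_mod_cast hx1
    have := hN x hx
    rw [lt_div_iff₀ hx0] at this
    generalize Lk k ζ = L at *
    have h1 : L * L⁻¹ = 1 := mul_inv_cancel₀ (by linarith)
    have h2 : L⁻¹ ≤ 1 := inv_le_one_of_one_le₀ hL
    have h3 : (1 + (L + ε)) * (Ψ x * x) < (1 + (L + ε)) * (1 / 2 * L⁻¹ - ε) :=
      mul_lt_mul_of_pos_left this (by linarith)
    have h4 : ε * L⁻¹ ≤ ε * 1 := mul_le_mul_of_nonneg_left h2 hε.le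
    have h5 : ε * 1 ≤ ε * L := mul_le_mul_of_nonneg_left hL hε.le
    nlinarith [mul_pos hε hε]

lemma sap_main (k : ℕ) (hk : 2 ≤ k) (ζ : ℝ) (hζ0 : 0 < ζ)
    (Ψ : ℕ → ℝ) (hpos : ∀ q, 0 < Ψ q)
    (hA : (ζ < 1 / 2 ∧ ∃ N : ℕ, ∀ x : ℕ, N ≤ x → Ψ x < 1 / (2 * (x : ℝ))) ∨
      (∃ ε : ℝ, 0 < ε ∧ ∃ N : ℕ, ∀ x : ℕ, N ≤ x →
        Ψ x < (1 / 2 * (Lk k ζ)⁻¹ - ε) / (x : ℝ))) :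
    ∃ Z : ℕ, ∀ (z : ℕ) (y : Fin k → ℤ), Z ≤ z →
      (∀ j : Fin k, |ζ ^ ((j : ℕ) + 1) * (z : ℝ) - (y j : ℝ)| ≤ Ψ z) →
      Ψ z * z < 1 ∧
      ∃ (M z₀ : ℕ) (y₀ : ℤ), 0 < M ∧ 0 < z₀ ∧ Int.gcd y₀ (z₀ : ℤ) = 1 ∧
        z = M * z₀ ^ k ∧
        ∀ j : Fin k, y j = (M : ℤ) * (z₀ : ℤ) ^ (k - ((j : ℕ) + 1)) * y₀ ^ ((j : ℕ) + 1) := by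
  obtain ⟨D, hD, hev, N, hN⟩ := sap_D k hk ζ hζ0 Ψ hA
  obtain ⟨η, hη, hev⟩ := Metric.eventually_nhds_iff.1 hev
  obtain ⟨N2, hN2⟩ := exists_nat_gt (1/η)
  refine ⟨N + N2 + 1, fun z y hz hy => ?_⟩
  have hz1 : 1 ≤ z := by omega
  have hzR : (1:ℝ) ≤ z := by exact_mod_cast hz1
  have hz0 : (0:ℝ) < z := by linarith
  have hbd := hN z (by omega) hz1
  have hΨz : Ψ z * z < 1 := by
    have := mul_pos (mul_pos hD (hpos z)) hz0
    nlinarith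
  refine ⟨hΨz, ?_⟩
  have hηz : 1 < η * z := by
    have h1 : (N2:ℝ) ≤ z := by exact_mod_cast (by omega : N2 ≤ z)
    have h2 : 1/η < z := by linarith
    rw [div_lt_iff₀ hη] at h2
    linarith
  have hΨ1 : Ψ z < 1 := by
    have := hpos z
    nlinarith
  set j0 : Fin k := ⟨0, by omega⟩ with hj0
  have hg : 0 < Int.gcd (y j0) (z:ℤ) := Int.gcd_pos_of_ne_zero_right _ (by omega)
  obtain ⟨y₀, q', hcop, hy0, hq0⟩ : ∃ y₀ q' : ℤ, Int.gcd y₀ q' = 1 ∧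
      y j0 = y₀ * (Int.gcd (y j0) (z:ℤ) : ℤ) ∧ (z:ℤ) = q' * (Int.gcd (y j0) (z:ℤ) : ℤ) :=
    ⟨_, _, Int.gcd_div_gcd_div_gcd hg, (Int.ediv_mul_cancel (Int.gcd_dvd_left ..)).symm,
      (Int.ediv_mul_cancel (Int.gcd_dvd_right ..)).symm⟩
  generalize Int.gcd (y j0) (z:ℤ) = g at *
  have hq'pos : 0 < q' := by
    have h1 : (0:ℤ) < q' * g := by rw [← hq0]; exact_mod_cast hz1
    exact pos_of_mul_pos_left h1 (by positivity)
  obtain ⟨q, rfl⟩ : ∃ q : ℕ, q' = q := ⟨q'.toNat, by omega⟩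
  have hqpos : 0 < q := by exact_mod_cast hq'pos
  have hqR : (0:ℝ) < q := by exact_mod_cast hqpos
  have hqz : q ≤ z := by
    have : z = q * g := by exact_mod_cast hq0
    rw [this]; exact Nat.le_mul_of_pos_right _ hg
  have hqzR : (q:ℝ) ≤ z := by exact_mod_cast hqz
  have hcross : (z:ℝ) * y₀ = (y j0 : ℝ) * q := by
    have : (z:ℤ) * y₀ = y j0 * q := by rw [hq0, hy0]; ring
    exact_mod_cast this
  set p : ℝ := (y₀:ℝ) / q with hp
  have hzp : (z:ℝ) * p = y j0 := by
    rw [hp, mul_div_assoc', hcross, mul_div_cancel_right₀ _ hqR.ne']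
  have hpζ : z * |p - ζ| ≤ Ψ z := by
    have h1 := hy j0
    rw [show ζ ^ ((j0:ℕ)+1) * (z:ℝ) - (y j0 : ℝ) = z * (ζ - p) by
      rw [← hzp]; simp [hj0]; ring, abs_mul, abs_of_pos hz0, abs_sub_comm] at h1
    exact h1
  have hnear : dist p ζ < η := by
    rw [Real.dist_eq]
    by_contra! hc
    have := mul_le_mul_of_nonneg_left hc hz0.le
    nlinarith
  have hdiff : ∀ j : Fin k, |(z:ℝ) * p ^ ((j:ℕ)+1) - y j| * z < 1 := by
    intro j
    have h1 := hev hnear j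
    have h2 : |(z:ℝ) * p ^ ((j:ℕ)+1) - y j| ≤ (1 + D) * Ψ z := by
      calc |(z:ℝ) * p ^ ((j:ℕ)+1) - y j|
          = |z * (p ^ ((j:ℕ)+1) - ζ ^ ((j:ℕ)+1)) + (ζ ^ ((j : ℕ) + 1) * (z : ℝ) - (y j : ℝ))| := by
            congr 1; ring
        _ ≤ z * |p ^ ((j:ℕ)+1) - ζ ^ ((j:ℕ)+1)| + Ψ z := by
            refine (abs_add_le _ _).trans (add_le_add ?_ (hy j))
            rw [abs_mul, abs_of_pos hz0]
        _ ≤ z * (D * |p - ζ|) + Ψ z := by gcongr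
        _ = D * (z * |p - ζ|) + Ψ z := by ring
        _ ≤ D * Ψ z + Ψ z := by gcongr
        _ = _ := by ring
    exact (mul_le_mul_of_nonneg_right h2 hz0.le).trans_lt hbd
  have step : ∀ (j : Fin k) (w : ℤ), (z:ℤ) = w * (q:ℤ) ^ (j:ℕ) → w * y₀ ^ ((j:ℕ)+1) = y j * q := by
    intro j w hw
    have hwR : (z:ℝ) = w * (q:ℝ) ^ (j:ℕ) := by exact_mod_cast hw
    have h1 : (z:ℝ) * p ^ ((j:ℕ)+1) * q = w * (y₀:ℝ) ^ ((j:ℕ)+1) := by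
      rw [hwR, hp, div_pow]
      field_simp
      ring
    have h2 : |((w * y₀ ^ ((j:ℕ)+1) - y j * q : ℤ) : ℝ)| < 1 := by
      push_cast
      rw [← h1, ← sub_mul, abs_mul, abs_of_pos hqR]
      exact (mul_le_mul_of_nonneg_left hqzR (abs_nonneg _)).trans_lt (hdiff j)
    have h3 : |w * y₀ ^ ((j:ℕ)+1) - y j * q| < 1 := by exact_mod_cast h2
    have := Int.abs_lt_one_iff.1 h3
    linarith
  have hdvd : ∀ n : ℕ, n ≤ k → ((q:ℤ)) ^ n ∣ (z:ℤ) := by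
    intro n
    induction n with
    | zero => intro _; simp
    | succ n ih =>
      intro hn
      obtain ⟨w, hw⟩ := ih (by omega)
      have h1 := step ⟨n, by omega⟩ w (by rw [hw]; ring)
      have h2 : (q:ℤ) ∣ w * y₀ ^ (n+1) := ⟨_, h1.trans (mul_comm _ _)⟩
      have hc : IsCoprime (q:ℤ) (y₀ ^ (n+1)) :=
        (Int.isCoprime_iff_gcd_eq_one.2 hcop).symm.pow_right
      obtain ⟨v, rfl⟩ := hc.dvd_of_dvd_mul_right h2
      exact ⟨v, by rw [hw]; ring⟩
  have hdk : q ^ k ∣ z := by exact_mod_cast hdvd k le_rfl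
  obtain ⟨M, hM⟩ := hdk
  refine ⟨M, q, y₀, ?_, hqpos, hcop, by rw [hM]; ring, fun j => ?_⟩
  · rcases Nat.eq_zero_or_pos M with h | h
    · subst h; simp at hM; omega
    · exact h
  · obtain ⟨m, hm⟩ : ∃ m, k = m + ((j:ℕ) + 1) := ⟨k - ((j:ℕ)+1), by have := j.2; omega⟩
    have hkm : k - ((j:ℕ)+1) = m := by omega
    have hMZ : (z:ℤ) = (M * (q:ℤ) ^ (m+1)) * (q:ℤ) ^ (j:ℕ) := by
      have : (z:ℤ) = (q:ℤ)^k * M := by exact_mod_cast hM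
      rw [this]
      conv_lhs => rw [hm]
      ring
    have h1 := step j _ hMZ
    rw [hkm]
    have hqne : (q:ℤ) ≠ 0 := by positivity
    apply mul_right_cancel₀ hqne
    rw [← h1]; ring

/-- For `k ≥ 2`, `ζ > 0` irrational, and `Ψ` positive with `Ψ(l·x) ≤ l·Ψ(x)` and either
(i) `ζ ∈ (0,1/2)` and `Ψ(x) < 1/(2x)` for large `x`, or (ii) `Ψ(x) < d/x` for large `x`
with `d = (1/2)·L_k(ζ)⁻¹ - ε`, `ε > 0`: all large solutions
`(z, y₁, …, y_k)` of `max_{1≤j≤k} |ζ^j·z - y_j| ≤ Ψ(z)` are integral multiples of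
solutions `(z₀^k, z₀^{k-1}y₀, …, y₀^k)` with `gcd(y₀, z₀) = 1`; in particular, if there
are arbitrarily large solutions then there is a solution with `z = q^k` for a positive
integer `q` satisfying `‖ζ·q‖ ≤ q^{-2k+1}`. -/
theorem solutions_are_powers (k : ℕ) (hk : 2 ≤ k) (ζ : ℝ) (hζ0 : 0 < ζ)
    (hirr : Irrational ζ) (Ψ : ℕ → ℝ) (hpos : ∀ q, 0 < Ψ q)
    (hB2 : ∀ l x : ℕ, 1 ≤ l → 1 ≤ x → Ψ (l * x) ≤ (l : ℝ) * Ψ x)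
    (hA : (ζ < 1 / 2 ∧ ∃ N : ℕ, ∀ x : ℕ, N ≤ x → Ψ x < 1 / (2 * (x : ℝ))) ∨
      (∃ ε : ℝ, 0 < ε ∧ ∃ N : ℕ, ∀ x : ℕ, N ≤ x →
        Ψ x < (1 / 2 * (Lk k ζ)⁻¹ - ε) / (x : ℝ))) :
    (∃ Z : ℕ, ∀ (z : ℕ) (y : Fin k → ℤ), Z ≤ z →
      (∀ j : Fin k, |ζ ^ ((j : ℕ) + 1) * (z : ℝ) - (y j : ℝ)| ≤ Ψ z) →
      ∃ (M z₀ : ℕ) (y₀ : ℤ), 0 < M ∧ 0 < z₀ ∧ Int.gcd y₀ (z₀ : ℤ) = 1 ∧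
        z = M * z₀ ^ k ∧
        ∀ j : Fin k, y j = (M : ℤ) * (z₀ : ℤ) ^ (k - ((j : ℕ) + 1)) * y₀ ^ ((j : ℕ) + 1)) ∧
    ((∀ Z : ℕ, ∃ (z : ℕ) (y : Fin k → ℤ), Z ≤ z ∧ 1 ≤ z ∧
        ∀ j : Fin k, |ζ ^ ((j : ℕ) + 1) * (z : ℝ) - (y j : ℝ)| ≤ Ψ z) →
      ∃ (q : ℕ) (y : Fin k → ℤ), 0 < q ∧
        (∀ j : Fin k, |ζ ^ ((j : ℕ) + 1) * ((q ^ k : ℕ) : ℝ) - (y j : ℝ)| ≤ Ψ (q ^ k)) ∧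
        distNearestInt (ζ * (q : ℝ)) ≤ ((q : ℝ) ^ (2 * k - 1))⁻¹) := by
  obtain ⟨Z, hZ⟩ := sap_main k hk ζ hζ0 Ψ hpos hA
  refine ⟨⟨Z, fun z y hz hy => (hZ z y hz hy).2⟩, fun hinf => ?_⟩
  obtain ⟨z, y, hz, hz1, hy⟩ := hinf Z
  obtain ⟨hΨ, M, q, y₀, hM, hq, -, hzM, hyj⟩ := hZ z y hz hy
  have hMR : (1:ℝ) ≤ M := by exact_mod_cast hM
  have hM0 : (0:ℝ) < M := by linarith
  have hqR : (1:ℝ) ≤ q := by exact_mod_cast hq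
  have hq0 : (0:ℝ) < q := by linarith
  have hzR : (z:ℝ) = M * (q:ℝ) ^ k := by exact_mod_cast hzM
  have hqk : (1:ℝ) ≤ (q:ℝ) ^ k := one_le_pow₀ hqR
  refine ⟨q, fun j => (q : ℤ) ^ (k - ((j : ℕ) + 1)) * y₀ ^ ((j : ℕ) + 1), hq, fun j => ?_, ?_⟩
  · have h1 := hy j
    have h2 := hB2 M (q ^ k) hM (Nat.one_le_pow _ _ hq)
    rw [← hzM] at h2
    have h3 : ζ ^ ((j : ℕ) + 1) * (z : ℝ) - (y j : ℝ) =
        M * (ζ ^ ((j : ℕ) + 1) * ((q ^ k : ℕ) : ℝ) -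
          (((q : ℤ) ^ (k - ((j : ℕ) + 1)) * y₀ ^ ((j : ℕ) + 1) : ℤ) : ℝ)) := by
      rw [hyj j, hzR]; push_cast; ring
    rw [h3, abs_mul, abs_of_pos hM0] at h1
    exact le_of_mul_le_mul_left (h1.trans h2) hM0
  · have h1 := hy ⟨0, by omega⟩
    obtain ⟨m, rfl⟩ : ∃ m, k = m + 1 := ⟨k - 1, by omega⟩
    have h3 : ζ ^ (0 + 1) * (z : ℝ) - (y ⟨0, by omega⟩ : ℝ) =
        (M * (q:ℝ) ^ m) * (ζ * q - y₀) := by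
      rw [hyj, hzR]; push_cast; simp; ring
    simp only at h1
    rw [h3, abs_mul, abs_of_pos (by positivity)] at h1
    have hz0 : (0:ℝ) < z := by rw [hzR]; positivity
    have h4 : distNearestInt (ζ * (q : ℝ)) ≤ |ζ * q - y₀| := round_le _ _
    refine h4.trans ?_
    rw [← one_div, le_div_iff₀ (by positivity)]
    have h5 : M * (q:ℝ) ^ m * |ζ * q - y₀| * z ≤ 1 :=
      (mul_le_mul_of_nonneg_right h1 hz0.le).trans hΨ.le
    have h6 : |ζ * q - y₀| * (q:ℝ) ^ (2 * (m+1) - 1) ≤ M * M * (|ζ * q - y₀| * (q:ℝ) ^ (2 * (m+1) - 1)) :=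
      le_mul_of_one_le_left (by positivity) (one_le_mul_of_one_le_of_one_le hMR hMR)
    refine h6.trans (le_trans (le_of_eq ?_) h5)
    rw [hzR, show 2 * (m+1) - 1 = m + (m+1) by omega, pow_add]
    ring
end
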